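/- arXiv:2312.15303 — 5 statements merged into one kernel-verified Lean document; each statement's English description precedes it below -/
import Mathlib

section
/- The first moment of η_log satisfies μ_1 = ∫_ℝ s·η_log(s) ds = 6·ζ(3)/π² − 1/2, where ζ is the Riemann zeta function. -/
open MeasureTheory

/-- The limiting density of the logarithm of smallest denominators. -/
noncomputable def etaLog (s : ℝ) : ℝ :=
  if s ≤ 0 then 6 / Real.pi ^ 2 * Real.exp (2 * s)
  else if s ≤ Real.log 2 then 6 / Real.pi ^ 2 * (-Real.exp (2 * s) + 2 + 4 * s)
  else 6 / Real.pi ^ 2 * (-Real.exp (2 * s) + 2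
    + 2 * Real.exp (2 * s) * Real.sqrt (1 / 4 - Real.exp (-2 * s))
    - 4 * Real.log (1 / 2 + Real.sqrt (1 / 4 - Real.exp (-2 * s))))

open Set Filter
open scoped Nat

/-! Let `T = {(x, y) | x, y < 1 < x + y}` be the Farey triangle. The three branches of `etaLog`
are the three shapes of the part of `T` below a hyperbola:
`etaLog s = (12 / π²) * exp (2 * s) * area {(x, y) ∈ T | x * y < exp (-2 * s)}`. By Fubini the
first moment is `12 / π²` times the integral over `T` of `∫_{-∞}^a s * exp (2 * s) ds`, where
`a = -log (x * y) / 2`, that is, of `(-log x - log y - 1) / (4 * x * y)`. Integrating `y` out,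
`∫_T (-log x)^k / (x * y) = ∫_0^1 (-log x)^k * (-log (1 - x)) / x dx`, and the substitution
`x = exp (-t)` turns this into the Mellin transform at `k + 1` of
`-log (1 - exp (-t)) = ∑ exp (-n * t) / n`, which is `k! * ζ(k + 2)`. The cases `k = 0, 1` and the
symmetry of `T` in `x` and `y` give `(12 / π²) * (2 * ζ(3) - π² / 6) / 4`.
-/

section RegionBetween

theorem indicator_regionBetween {α E : Type*} [Zero E] {f g : α → ℝ} {s : Set α}
    {F : α × ℝ → E} (x : α) :
    (fun y ↦ (regionBetween f g s).indicator F (x, y)) =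
      s.indicator (fun x ↦ (Ioo (f x) (g x)).indicator fun y ↦ F (x, y)) x := by
  classical
  funext y
  by_cases hx : x ∈ s <;> simp [regionBetween, indicator_apply, hx]

variable {α E : Type*} [MeasurableSpace α] [NormedAddCommGroup E] {μ : Measure α} {ν : Measure ℝ}
  {f g : α → ℝ} {s : Set α} {F : α × ℝ → E}

theorem integrableOn_regionBetween_iff [SFinite ν] (hf : Measurable f) (hg : Measurable g)
    (hs : MeasurableSet s)
    (hF : AEStronglyMeasurable F ((μ.prod ν).restrict (regionBetween f g s))) :
    IntegrableOn F (regionBetween f g s) (μ.prod ν) ↔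
      (∀ᵐ x ∂μ.restrict s, IntegrableOn (fun y ↦ F (x, y)) (Ioo (f x) (g x)) ν) ∧
        IntegrableOn (fun x ↦ ∫ y in Ioo (f x) (g x), ‖F (x, y)‖ ∂ν) s μ := by
  have hR := measurableSet_regionBetween hf hg hs
  rw [← integrable_indicator_iff hR,
    integrable_prod_iff ((aestronglyMeasurable_indicator_iff hR).2 hF), ae_restrict_iff' hs,
    ← integrable_indicator_iff hs]
  simp only [norm_indicator_eq_indicator_norm, indicator_regionBetween]
  congr! 4 with x x
  · by_cases hx : x ∈ s <;> simp [hx, integrable_indicator_iff measurableSet_Ioo]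
  · by_cases hx : x ∈ s <;> simp [hx, integral_indicator measurableSet_Ioo]

theorem setIntegral_regionBetween [NormedSpace ℝ E] [SFinite μ] [SFinite ν] (hf : Measurable f)
    (hg : Measurable g) (hs : MeasurableSet s)
    (hF : IntegrableOn F (regionBetween f g s) (μ.prod ν)) :
    ∫ p in regionBetween f g s, F p ∂μ.prod ν =
      ∫ x in s, (∫ y in Ioo (f x) (g x), F (x, y) ∂ν) ∂μ := by
  have hR := measurableSet_regionBetween hf hg hs
  rw [← integral_indicator hR, integral_prod _ ((integrable_indicator_iff hR).2 hF),
    ← integral_indicator hs]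
  congr! 2 with x
  rw [indicator_regionBetween]
  by_cases hx : x ∈ s <;> simp [hx, integral_indicator measurableSet_Ioo]

theorem measureReal_regionBetween [SFinite μ] (hf : Measurable f) (hg : Measurable g)
    (hs : MeasurableSet s) :
    (μ.prod volume).real (regionBetween f g s) = ∫ x in s, max (g x - f x) 0 ∂μ := by
  rw [measureReal_def, volume_regionBetween_eq_lintegral hf.aemeasurable hg.aemeasurable hs,
    integral_eq_lintegral_of_nonneg_ae (f := fun x ↦ max (g x - f x) 0)
      (.of_forall fun _ ↦ le_max_right _ _)
      ((hg.sub hf).max measurable_const).aestronglyMeasurable]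
  simp [ENNReal.ofReal_max]

end RegionBetween

theorem integral_measureReal_lt_smul {α E : Type*} [MeasurableSpace α] [NormedAddCommGroup E]
    [NormedSpace ℝ E] [CompleteSpace E] {μ : Measure α} [SFinite μ] {ν : Measure ℝ} [SFinite ν]
    {a b : α → ℝ} {g : ℝ → E}
    (ha : Measurable a) (hg : StronglyMeasurable g) (hb : Integrable b μ)
    (hg_int : ∀ᵐ p ∂μ, IntegrableOn g (Iio (a p)) ν)
    (hg_le : ∀ᵐ p ∂μ, ∫ s in Iio (a p), ‖g s‖ ∂ν ≤ b p) :
    ∫ s, μ.real {p | s < a p} • g s ∂ν = ∫ p, (∫ s in Iio (a p), g s ∂ν) ∂μ := by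
  have hF : StronglyMeasurable ({q : α × ℝ | q.2 < a q.1}.indicator fun q ↦ g q.2) :=
    (hg.comp_measurable measurable_snd).indicator
      (measurableSet_lt measurable_snd (ha.comp measurable_fst))
  have hF_int : Integrable (Function.uncurry fun p ↦ (Iio (a p)).indicator g) (μ.prod ν) := by
    refine (integrable_prod_iff hF.aestronglyMeasurable).2 ⟨?_, ?_⟩
    · filter_upwards [hg_int] with p hp
      exact (integrable_indicator_iff measurableSet_Iio).2 hp
    · refine hb.mono' hF.norm.integral_prod_right'.aestronglyMeasurable ?_
      filter_upwards [hg_le] with p hp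
      rw [Real.norm_of_nonneg (integral_nonneg fun _ ↦ norm_nonneg _)]
      refine Eq.trans_le ?_ hp
      rw [← integral_indicator measurableSet_Iio]
      exact integral_congr_ae (.of_forall fun s ↦
        norm_indicator_eq_indicator_norm (s := Iio (a p)) g s)
  calc ∫ s, μ.real {p | s < a p} • g s ∂ν
      = ∫ s, (∫ p, (Iio (a p)).indicator g s ∂μ) ∂ν := by
        refine integral_congr_ae (.of_forall fun s ↦ ?_)
        exact (integral_indicator_const (g s) (measurableSet_lt measurable_const ha)).symm
    _ = ∫ p, (∫ s, (Iio (a p)).indicator g s ∂ν) ∂μ := (integral_integral_swap hF_int).symm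
    _ = ∫ p, (∫ s in Iio (a p), g s ∂ν) ∂μ := by simp only [integral_indicator measurableSet_Iio]

section Mellin

theorem hasSum_riemannZeta {s : ℂ} (hs : 1 < s.re) :
    HasSum (fun n : ℕ ↦ 1 / (n + 1 : ℂ) ^ s) (riemannZeta s) := by
  have := (Complex.summable_one_div_nat_cpow.2 hs).comp_injective Nat.succ_injective
  rw [zeta_eq_tsum_one_div_nat_add_one_cpow hs]
  exact Summable.hasSum (by simpa [Function.comp_def] using this)

theorem mellin_neg_log_one_sub_exp_neg {s : ℂ} (hs : 0 < s.re) :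
    mellin (fun t ↦ ((-Real.log (1 - Real.exp (-t)) : ℝ) : ℂ)) s
      = Complex.Gamma s * riemannZeta (s + 1) := by
  have hs' : 1 < (s + 1).re := by simpa using hs
  have hseries (t : ℝ) (ht : t ∈ Ioi 0) :
      HasSum (fun n : ℕ ↦ (1 / (n + 1) : ℂ) * Real.exp (-(n + 1 : ℝ) * t))
        ((-Real.log (1 - Real.exp (-t)) : ℝ) : ℂ) := by
    have hexp : |Real.exp (-t)| < 1 := by
      rw [Real.abs_exp]; exact Real.exp_lt_one_iff.2 (neg_lt_zero.2 ht)
    convert Complex.hasSum_ofReal.2 (Real.hasSum_pow_div_log_of_abs_lt_one hexp) using 2 with n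
    rw [← Real.exp_nat_mul]
    push_cast
    ring_nf
  have hsucc (n : ℕ) : (n + 1 : ℂ) ≠ 0 := n.cast_add_one_ne_zero
  have hcoeff (n : ℕ) : 1 / (n + 1 : ℂ) / (n + 1 : ℂ) ^ s = 1 / (n + 1 : ℂ) ^ (s + 1) := by
    rw [Complex.cpow_add _ _ (hsucc n), Complex.cpow_one, div_div, mul_comm]
  have hzeta := hasSum_riemannZeta hs'
  have hsummable : Summable fun n : ℕ ↦ ‖1 / (n + 1 : ℂ)‖ / (n + 1 : ℝ) ^ s.re := by
    refine hzeta.summable.norm.congr fun n ↦ ?_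
    rw [← hcoeff, norm_div _ (_ ^ s), ← Complex.norm_cpow_eq_rpow_re_of_pos n.cast_add_one_pos]
    push_cast
    rfl
  refine (hasSum_mellin (fun n ↦ .inr n.cast_add_one_pos) hs hseries hsummable).unique ?_
  refine (hzeta.mul_left (Complex.Gamma s)).congr_fun fun n ↦ ?_
  rw [← hcoeff, mul_div_assoc]
  push_cast
  rfl

theorem mellinConvergent_neg_log_one_sub_exp_neg {s : ℂ} (hs : 0 < s.re) :
    MellinConvergent (fun t ↦ ((-Real.log (1 - Real.exp (-t)) : ℝ) : ℂ)) s := by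
  -- A nonzero Bochner integral forces integrability, and `ζ (s + 1)` does not vanish.
  refine Integrable.of_integral_ne_zero ?_
  change mellin _ s ≠ 0
  rw [mellin_neg_log_one_sub_exp_neg hs]
  exact mul_ne_zero (Complex.Gamma_ne_zero_of_re_pos hs)
    (riemannZeta_ne_zero_of_one_le_re (by simpa using hs.le))

end Mellin

section UnitInterval

theorem setIntegral_Ioo_one_div {a b : ℝ} (ha : 0 < a) (hab : a ≤ b) :
    ∫ y in Ioo a b, 1 / y = Real.log (b / a) := by
  rw [← integral_Ioc_eq_integral_Ioo, ← intervalIntegral.integral_of_le hab,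
    integral_one_div_of_pos ha (ha.trans_le hab)]

theorem setIntegral_Ioo_one_sub_div_mul (a : ℝ) {x : ℝ} (hx : x ∈ Ioo (0 : ℝ) 1) :
    ∫ y in Ioo (1 - x) 1, a / (x * y) = a * -Real.log (1 - x) / x := by
  have hinv : ∫ y in Ioo (1 - x) 1, 1 / y = -Real.log (1 - x) := by
    rw [setIntegral_Ioo_one_div (by linarith [hx.2]) (by linarith [hx.1]), one_div, Real.log_inv]
  rw [mul_div_right_comm, ← hinv, ← integral_const_mul]
  simp only [div_mul_div_comm, mul_one]

variable {E : Type*} [NormedAddCommGroup E] [NormedSpace ℝ E]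

theorem image_exp_neg_Ioi_zero : (fun t ↦ Real.exp (-t)) '' Ioi 0 = Ioo 0 1 := by
  rw [← image_image Real.exp Neg.neg, image_neg_Ioi, neg_zero, Real.image_exp_Iio, Real.exp_zero]

theorem hasDerivAt_exp_neg (t : ℝ) :
    HasDerivAt (fun t ↦ Real.exp (-t)) (-Real.exp (-t)) t := by
  simpa using (hasDerivAt_neg t).exp

theorem antitone_exp_neg : Antitone fun t : ℝ ↦ Real.exp (-t) :=
  Real.exp_monotone.comp_antitone fun _ _ ↦ neg_le_neg

theorem integrableOn_Ioo_zero_one_iff_exp_neg (g : ℝ → E) :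
    IntegrableOn g (Ioo 0 1) ↔
      IntegrableOn (fun t ↦ Real.exp (-t) • g (Real.exp (-t))) (Ioi 0) := by
  rw [← image_exp_neg_Ioi_zero, integrableOn_image_iff_integrableOn_deriv_smul_of_antitoneOn
    measurableSet_Ioi (fun t _ ↦ (hasDerivAt_exp_neg t).hasDerivWithinAt)
    (antitone_exp_neg.antitoneOn _)]
  simp only [neg_neg]

theorem setIntegral_Ioo_zero_one_eq_exp_neg (g : ℝ → E) :
    ∫ x in Ioo (0 : ℝ) 1, g x = ∫ t in Ioi (0 : ℝ), Real.exp (-t) • g (Real.exp (-t)) := by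
  rw [← image_exp_neg_Ioi_zero, integral_image_eq_integral_deriv_smul_of_antitoneOn
    measurableSet_Ioi (fun t _ ↦ (hasDerivAt_exp_neg t).hasDerivWithinAt)
    (antitone_exp_neg.antitoneOn _)]
  simp only [neg_neg]

theorem cpow_smul_neg_log_one_sub_exp_neg (k : ℕ) (t : ℝ) :
    (t : ℂ) ^ ((k + 1 : ℂ) - 1) • ((-Real.log (1 - Real.exp (-t)) : ℝ) : ℂ) =
      ((Real.exp (-t) • ((-Real.log (Real.exp (-t))) ^ k * -Real.log (1 - Real.exp (-t)) /
        Real.exp (-t)) : ℝ) : ℂ) := by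
  rw [add_sub_cancel_right, Complex.cpow_natCast, Real.log_exp, neg_neg, smul_eq_mul, smul_eq_mul,
    mul_div_cancel₀ _ (Real.exp_pos _).ne']
  push_cast
  rfl

theorem integrableOn_neg_log_pow_mul_neg_log_one_sub_div (k : ℕ) :
    IntegrableOn (fun x ↦ (-Real.log x) ^ k * -Real.log (1 - x) / x) (Ioo 0 1) := by
  rw [integrableOn_Ioo_zero_one_iff_exp_neg]
  have hk : 0 < (k + 1 : ℂ).re := by simpa using k.cast_add_one_pos
  have h := mellinConvergent_neg_log_one_sub_exp_neg hk
  simp only [MellinConvergent, cpow_smul_neg_log_one_sub_exp_neg] at h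
  exact h.re

theorem setIntegral_neg_log_pow_mul_neg_log_one_sub_div (k : ℕ) :
    ∫ x in Ioo (0 : ℝ) 1, (-Real.log x) ^ k * -Real.log (1 - x) / x
      = k ! * (riemannZeta (k + 2)).re := by
  rw [setIntegral_Ioo_zero_one_eq_exp_neg]
  have hk : 0 < (k + 1 : ℂ).re := by simpa using k.cast_add_one_pos
  have h := congrArg Complex.re (mellin_neg_log_one_sub_exp_neg hk)
  simp only [mellin, cpow_smul_neg_log_one_sub_exp_neg, integral_complex_ofReal,
    Complex.ofReal_re] at h
  rw [h, Complex.Gamma_nat_eq_factorial, ← Complex.ofReal_natCast, Complex.re_ofReal_mul,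
    add_assoc, one_add_one_eq_two]

end UnitInterval

section ExpMoment

theorem norm_mul_exp_two_mul_le {a s : ℝ} (ha : 0 ≤ a) (hs : s ≤ a) :
    ‖s * Real.exp (2 * s)‖ ≤ a * Real.exp (2 * s) + Real.exp s := by
  rw [norm_mul, Real.norm_eq_abs, Real.norm_of_nonneg (Real.exp_pos _).le]
  rcases le_total 0 s with h | h
  · rw [abs_of_nonneg h]
    exact (mul_le_mul_of_nonneg_right hs (Real.exp_pos _).le).trans
      (le_add_of_nonneg_right (Real.exp_pos s).le)
  · have hexp : -s ≤ Real.exp (-s) := (le_add_of_nonneg_right zero_le_one).trans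
      (Real.add_one_le_exp (-s))
    calc |s| * Real.exp (2 * s) ≤ Real.exp (-s) * Real.exp (2 * s) := by
          rw [abs_of_nonpos h]; gcongr
      _ = Real.exp s := by rw [← Real.exp_add]; ring_nf
      _ ≤ a * Real.exp (2 * s) + Real.exp s := le_add_of_nonneg_left (by positivity)

theorem integrableOn_mul_exp_two_mul_Iic (a : ℝ) :
    IntegrableOn (fun s ↦ s * Real.exp (2 * s)) (Iic a) := by
  have hbound : IntegrableOn (fun s ↦ max a 0 * Real.exp (2 * s) + Real.exp s) (Iic a) :=
    ((integrableOn_exp_mul_Iic two_pos a).const_mul _).add (integrableOn_exp_Iic a)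
  refine hbound.mono' (by fun_prop) ?_
  filter_upwards [ae_restrict_mem measurableSet_Iic] with s hs
  exact norm_mul_exp_two_mul_le (le_max_right a 0) (hs.trans (le_max_left a 0))

theorem hasDerivAt_mul_exp_two_mul_antideriv (s : ℝ) :
    HasDerivAt (fun s ↦ (s / 2 - 1 / 4) * Real.exp (2 * s)) (s * Real.exp (2 * s)) s := by
  have hlin := ((hasDerivAt_id' s).div_const 2).sub_const (1 / 4)
  have hexp := ((hasDerivAt_id' s).const_mul 2).exp
  exact (hlin.fun_mul hexp).congr_deriv (by ring)

theorem tendsto_mul_exp_two_mul_antideriv_atBot :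
    Tendsto (fun s : ℝ ↦ (s / 2 - 1 / 4) * Real.exp (2 * s)) atBot (nhds 0) := by
  have hatTop : Tendsto (fun s : ℝ ↦ -2 * s) atBot atTop :=
    tendsto_id.const_mul_atBot_of_neg (by norm_num)
  have h (n : ℕ) := (Real.tendsto_pow_mul_exp_neg_atTop_nhds_zero n).comp hatTop
  convert ((h 1).add (h 0)).const_mul (-1 / 4) using 1
  · ext s
    simp only [Function.comp_apply]
    ring_nf
  · norm_num

theorem setIntegral_mul_exp_two_mul_Iio (a : ℝ) :
    ∫ s in Iio a, s * Real.exp (2 * s) = (a / 2 - 1 / 4) * Real.exp (2 * a) := by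
  rw [← integral_Iic_eq_integral_Iio, integral_Iic_of_hasDerivAt_of_tendsto'
    (fun s _ ↦ hasDerivAt_mul_exp_two_mul_antideriv s) (integrableOn_mul_exp_two_mul_Iic a)
    tendsto_mul_exp_two_mul_antideriv_atBot, sub_zero]

theorem setIntegral_norm_mul_exp_two_mul_Iio_le {a : ℝ} (ha : 0 ≤ a) :
    ∫ s in Iio a, ‖s * Real.exp (2 * s)‖ ≤ (a / 2 + 1) * Real.exp (2 * a) := by
  rw [← integral_Iic_eq_integral_Iio]
  calc ∫ s in Iic a, ‖s * Real.exp (2 * s)‖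
      ≤ ∫ s in Iic a, a * Real.exp (2 * s) + Real.exp s := by
        refine setIntegral_mono_on (integrableOn_mul_exp_two_mul_Iic a).norm
          (((integrableOn_exp_mul_Iic two_pos a).const_mul a).add (integrableOn_exp_Iic a))
          measurableSet_Iic fun s hs ↦ ?_
        exact norm_mul_exp_two_mul_le ha hs
    _ = a / 2 * Real.exp (2 * a) + Real.exp a := by
        rw [integral_add ((integrableOn_exp_mul_Iic two_pos a).const_mul a)
            (integrableOn_exp_Iic a), integral_const_mul, integral_exp_mul_Iic two_pos,
          integral_exp_Iic]
        ring
    _ ≤ (a / 2 + 1) * Real.exp (2 * a) := by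
        linarith [Real.exp_le_exp.2 (show a ≤ 2 * a by linarith)]

theorem exp_two_mul_neg_log_div_two {z : ℝ} (hz : 0 < z) :
    Real.exp (2 * (-Real.log z / 2)) = 1 / z := by
  rw [mul_div_cancel₀ _ two_ne_zero, Real.exp_neg, Real.exp_log hz, one_div]

end ExpMoment

/-- The Farey triangle `{(x, y) | x < 1, y < 1, 1 < x + y}`, in which the pairs of consecutive
denominators of the Farey fractions of order `Q`, divided by `Q`, equidistribute as `Q → ∞`. It is
encoded as a region between two graphs so that integrals over it unfold into iterated ones. -/
def fareyTriangle : Set (ℝ × ℝ) := regionBetween (fun x ↦ 1 - x) (fun _ ↦ 1) (Ioo 0 1)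

theorem mem_fareyTriangle {p : ℝ × ℝ} :
    p ∈ fareyTriangle ↔ p.1 < 1 ∧ p.2 < 1 ∧ 1 < p.1 + p.2 := by
  change p.1 ∈ Ioo 0 1 ∧ p.2 ∈ Ioo (1 - p.1) 1 ↔ _
  grind

theorem mul_pos_of_mem_fareyTriangle {p : ℝ × ℝ} (hp : p ∈ fareyTriangle) : 0 < p.1 * p.2 := by
  obtain ⟨h1, h2, h⟩ := mem_fareyTriangle.1 hp
  exact mul_pos (by linarith) (by linarith)

theorem neg_log_pow_div_mul_nonneg_of_mem_fareyTriangle (k : ℕ) {p : ℝ × ℝ}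
    (hp : p ∈ fareyTriangle) : 0 ≤ (-Real.log p.1) ^ k / (p.1 * p.2) := by
  obtain ⟨h1, h2, h⟩ := mem_fareyTriangle.1 hp
  exact div_nonneg (pow_nonneg (neg_nonneg.2 (Real.log_nonpos (by linarith) h1.le)) k)
    (mul_pos_of_mem_fareyTriangle hp).le

theorem neg_log_mul_nonneg_of_mem_fareyTriangle {p : ℝ × ℝ} (hp : p ∈ fareyTriangle) :
    0 ≤ -Real.log (p.1 * p.2) := by
  obtain ⟨h1, h2, h⟩ := mem_fareyTriangle.1 hp
  exact neg_nonneg.2 (Real.log_nonpos (mul_pos_of_mem_fareyTriangle hp).le (by nlinarith))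

theorem measurableSet_fareyTriangle : MeasurableSet fareyTriangle :=
  measurableSet_regionBetween (by fun_prop) (by fun_prop) measurableSet_Ioo

theorem swap_preimage_fareyTriangle : Prod.swap ⁻¹' fareyTriangle = fareyTriangle := by
  ext p
  simp only [mem_preimage, mem_fareyTriangle, Prod.fst_swap, Prod.snd_swap]
  grind

section Area

/-- For `0 < x < 1`, the length of the vertical section at `x` of the part `x * y < c` of
`fareyTriangle`; the outer `max` accounts for empty sections. -/
noncomputable def sectionLength (c x : ℝ) : ℝ := max (min 1 (c / x) - (1 - x)) 0

variable {c x : ℝ}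

theorem sectionLength_of_le (hx : 0 < x) (hxc : x ≤ c) : sectionLength c x = x := by
  rw [sectionLength, min_eq_left ((one_le_div hx).2 hxc), sub_sub_cancel, max_eq_left hx.le]

theorem sectionLength_of_mul_one_sub_le (hx : 0 < x) (hcx : c ≤ x) (h : x * (1 - x) ≤ c) :
    sectionLength c x = c / x - (1 - x) := by
  have : 1 - x ≤ c / x := (le_div_iff₀' hx).2 h
  rw [sectionLength, min_eq_right ((div_le_one hx).2 hcx), max_eq_left (sub_nonneg.2 this)]

theorem sectionLength_eq_zero (hx : 0 < x) (h : c ≤ x * (1 - x)) : sectionLength c x = 0 :=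
  max_eq_right (sub_nonpos.2 ((min_le_right _ _).trans ((div_le_iff₀' hx).2 h)))

theorem measureReal_fareyTriangle_inter (c : ℝ) :
    volume.real (fareyTriangle ∩ {p | p.1 * p.2 < c}) = ∫ x in 0..1, sectionLength c x := by
  have hregion : fareyTriangle ∩ {p | p.1 * p.2 < c} =
      regionBetween (fun x ↦ 1 - x) (fun x ↦ min 1 (c / x)) (Ioo 0 1) := by
    ext ⟨x, y⟩
    simp only [fareyTriangle, regionBetween, mem_inter_iff, mem_ofPred_eq, mem_Ioo, lt_inf_iff]
    constructor
    · rintro ⟨⟨hx, hy⟩, hxy⟩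
      exact ⟨hx, hy.1, hy.2, (lt_div_iff₀' hx.1).2 hxy⟩
    · rintro ⟨hx, hy, hy1, hxy⟩
      exact ⟨⟨hx, hy, hy1⟩, (lt_div_iff₀' hx.1).1 hxy⟩
  rw [hregion, Measure.volume_eq_prod, measureReal_regionBetween (by fun_prop) (by fun_prop)
    measurableSet_Ioo, intervalIntegral.integral_of_le zero_le_one, integral_Ioc_eq_integral_Ioo]
  rfl

theorem intervalIntegrable_sectionLength (c a b : ℝ) :
    IntervalIntegrable (sectionLength c) volume a b := by
  have hmeas : Measurable (sectionLength c) := by unfold sectionLength; fun_prop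
  refine (continuous_abs.intervalIntegrable a b).mono_fun hmeas.aestronglyMeasurable
    (.of_forall fun x ↦ ?_)
  have : min 1 (c / x) ≤ 1 := min_le_left _ _
  simp only [sectionLength, Real.norm_eq_abs, abs_abs]
  rw [abs_of_nonneg (le_max_right _ _)]
  exact max_le (by linarith [le_abs_self x]) (abs_nonneg x)

theorem integral_sectionLength_of_le (hx : 0 ≤ x) (hxc : x ≤ c) :
    ∫ t in 0..x, sectionLength c t = x ^ 2 / 2 := by
  rw [intervalIntegral.integral_congr_Ioo_of_le hx fun t ht ↦
    sectionLength_of_le ht.1 (ht.2.le.trans hxc)]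
  simp

theorem integral_sectionLength_of_mul_one_sub_le {a b : ℝ} (ha : 0 < a) (hab : a ≤ b) (hca : c ≤ a)
    (h : ∀ x ∈ Ioo a b, x * (1 - x) ≤ c) :
    ∫ x in a..b, sectionLength c x =
      c * (Real.log b - Real.log a) + ((1 - b) ^ 2 - (1 - a) ^ 2) / 2 := by
  rw [intervalIntegral.integral_congr_Ioo_of_le hab fun x hx ↦
    sectionLength_of_mul_one_sub_le (ha.trans hx.1) (hca.trans hx.1.le) (h x hx)]
  have hpos {x : ℝ} (hx : x ∈ uIcc a b) : x ≠ 0 := (ha.trans_le (uIcc_of_le hab ▸ hx).1).ne'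
  have hderiv (x : ℝ) (hx : x ∈ uIcc a b) :
      HasDerivAt (fun x ↦ c * Real.log x + (1 - x) ^ 2 / 2) (c / x - (1 - x)) x := by
    refine (((Real.hasDerivAt_log (hpos hx)).const_mul c).fun_add
      ((((hasDerivAt_id' x).const_sub 1).fun_pow 2).div_const 2)).congr_deriv ?_
    ring
  have hcont : ContinuousOn (fun x ↦ c / x - (1 - x)) (uIcc a b) := by
    fun_prop (disch := exact fun x hx ↦ hpos hx)
  rw [intervalIntegral.integral_eq_sub_of_hasDerivAt hderiv hcont.intervalIntegrable]
  ring

theorem integral_sectionLength_eq_zero {a b : ℝ} (ha : 0 ≤ a) (hab : a ≤ b)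
    (h : ∀ x ∈ Ioo a b, c ≤ x * (1 - x)) : ∫ x in a..b, sectionLength c x = 0 := by
  rw [intervalIntegral.integral_congr_Ioo_of_le hab fun x hx ↦
    sectionLength_eq_zero (ha.trans_lt hx.1) (h x hx), intervalIntegral.integral_zero]

theorem integral_sectionLength_of_one_quarter_le (hc : 1 / 4 ≤ c) (hc1 : c ≤ 1) :
    ∫ x in 0..1, sectionLength c x = c - 1 / 2 - c * Real.log c := by
  rw [← intervalIntegral.integral_add_adjacent_intervals
      (intervalIntegrable_sectionLength c 0 c) (intervalIntegrable_sectionLength c c 1),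
    integral_sectionLength_of_le (by linarith) le_rfl,
    integral_sectionLength_of_mul_one_sub_le (by linarith) hc1 le_rfl
      fun x _ ↦ by nlinarith [sq_nonneg (x - 1 / 2)], Real.log_one]
  ring

theorem integral_sectionLength_of_mul_one_sub_eq {q : ℝ} (hq : 1 / 2 ≤ q) (hq1 : q < 1)
    (hc : q * (1 - q) = c) :
    ∫ x in 0..1, sectionLength c x = c - (1 - q) - 2 * c * Real.log q := by
  have hint := intervalIntegrable_sectionLength c
  have hc0 : 0 < c := hc ▸ mul_pos (by linarith) (by linarith)
  have hcq : c ≤ 1 - q := by nlinarith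
  have hlog : Real.log c = Real.log q + Real.log (1 - q) := by
    rw [← hc, Real.log_mul (by linarith) (by linarith)]
  -- `c ≤ x * (1 - x)` exactly for `1 - q ≤ x ≤ q`.
  rw [← intervalIntegral.integral_add_adjacent_intervals (hint 0 q) (hint q 1),
    ← intervalIntegral.integral_add_adjacent_intervals (hint 0 (1 - q)) (hint (1 - q) q),
    ← intervalIntegral.integral_add_adjacent_intervals (hint 0 c) (hint c (1 - q)),
    integral_sectionLength_of_le hc0.le le_rfl,
    integral_sectionLength_of_mul_one_sub_le hc0 hcq le_rfl fun x hx ↦ by nlinarith [hx.1, hx.2],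
    integral_sectionLength_eq_zero (by linarith) (by linarith)
      fun x hx ↦ by nlinarith [hx.1, hx.2],
    integral_sectionLength_of_mul_one_sub_le (by linarith) hq1.le (by linarith)
      fun x hx ↦ by nlinarith [hx.1, hx.2], hlog, Real.log_one]
  ring

end Area

theorem etaLog_eq_integral_sectionLength (s : ℝ) :
    etaLog s = 12 / Real.pi ^ 2 * Real.exp (2 * s) *
      ∫ x in 0..1, sectionLength (Real.exp (-2 * s)) x := by
  have hexp : Real.exp (2 * s) * Real.exp (-2 * s) = 1 := by
    rw [← Real.exp_add]; simp
  have hexp_quarter : Real.exp (-2 * Real.log 2) = 1 / 4 := by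
    rw [neg_mul, Real.exp_neg, two_mul, Real.exp_add, Real.exp_log two_pos]
    norm_num
  unfold etaLog
  split_ifs with h0 h2
  · rw [integral_sectionLength_of_le zero_le_one (Real.one_le_exp (by linarith))]
    ring
  · rw [integral_sectionLength_of_one_quarter_le
      (hexp_quarter ▸ Real.exp_le_exp.2 (by linarith)) (Real.exp_le_one_iff.2 (by linarith)),
      Real.log_exp]
    linear_combination -(6 / Real.pi ^ 2) * (2 + 4 * s) * hexp
  · have hc : Real.exp (-2 * s) < 1 / 4 := hexp_quarter ▸ Real.exp_lt_exp.2 (by linarith)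
    have hsq := Real.sq_sqrt (sub_nonneg.2 hc.le)
    set r := Real.sqrt (1 / 4 - Real.exp (-2 * s))
    have hr : r < 1 / 2 := by nlinarith [Real.exp_pos (-2 * s)]
    have hr0 : 0 ≤ r := Real.sqrt_nonneg _
    -- `1 / 2 + r` is the larger root of `x * (1 - x) = exp (-2 * s)`.
    rw [integral_sectionLength_of_mul_one_sub_eq (q := 1 / 2 + r) (by linarith) (by linarith)
      (by linear_combination -hsq)]
    linear_combination -(6 / Real.pi ^ 2) * (2 - 4 * Real.log (1 / 2 + r)) * hexp

section TriangleIntegrals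

theorem integrableOn_neg_log_pow_div_mul_fareyTriangle (k : ℕ) :
    IntegrableOn (fun p : ℝ × ℝ ↦ (-Real.log p.1) ^ k / (p.1 * p.2)) fareyTriangle := by
  have hmeas : Measurable fun p : ℝ × ℝ ↦ (-Real.log p.1) ^ k / (p.1 * p.2) := by fun_prop
  refine (integrableOn_regionBetween_iff (by fun_prop) (by fun_prop) measurableSet_Ioo
    hmeas.aestronglyMeasurable).2 ⟨?_, ?_⟩
  · filter_upwards [ae_restrict_mem measurableSet_Ioo] with x hx
    have hcont : ContinuousOn (fun y ↦ (-Real.log x) ^ k / (x * y)) (Icc (1 - x) 1) :=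
      continuousOn_const.div (by fun_prop) fun y hy ↦
        mul_ne_zero hx.1.ne' (by linarith [hx.2, hy.1])
    exact hcont.integrableOn_Icc.mono_set Ioo_subset_Icc_self
  · refine (integrableOn_neg_log_pow_mul_neg_log_one_sub_div k).congr_fun (fun x hx ↦ ?_)
      measurableSet_Ioo
    refine (setIntegral_Ioo_one_sub_div_mul _ hx).symm.trans ?_
    refine setIntegral_congr_fun measurableSet_Ioo fun y hy ↦ ?_
    have hT : (x, y) ∈ fareyTriangle := ⟨hx, hy⟩
    exact (Real.norm_of_nonneg (neg_log_pow_div_mul_nonneg_of_mem_fareyTriangle k hT)).symm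

theorem setIntegral_neg_log_pow_div_mul_fareyTriangle (k : ℕ) :
    ∫ p in fareyTriangle, (-Real.log p.1) ^ k / (p.1 * p.2) = k ! * (riemannZeta (k + 2)).re := by
  rw [← setIntegral_neg_log_pow_mul_neg_log_one_sub_div]
  exact (setIntegral_regionBetween (by fun_prop) (by fun_prop) measurableSet_Ioo
    (integrableOn_neg_log_pow_div_mul_fareyTriangle k)).trans
    (setIntegral_congr_fun measurableSet_Ioo fun x hx ↦
      setIntegral_Ioo_one_sub_div_mul ((-Real.log x) ^ k) hx)

variable {E : Type*} [NormedAddCommGroup E]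

theorem integrableOn_fareyTriangle_comp_swap {f : ℝ × ℝ → E} :
    IntegrableOn (fun p ↦ f p.swap) fareyTriangle ↔ IntegrableOn f fareyTriangle := by
  conv_lhs => rw [← swap_preimage_fareyTriangle]
  exact Measure.measurePreserving_swap.integrableOn_comp_preimage
    MeasurableEquiv.prodComm.measurableEmbedding

theorem setIntegral_fareyTriangle_comp_swap [NormedSpace ℝ E] (f : ℝ × ℝ → E) :
    ∫ p in fareyTriangle, f p.swap = ∫ p in fareyTriangle, f p := by
  conv_lhs => rw [← swap_preimage_fareyTriangle]
  exact Measure.measurePreserving_swap.setIntegral_preimage_emb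
    MeasurableEquiv.prodComm.measurableEmbedding f _

theorem integrableOn_one_div_mul_fareyTriangle :
    IntegrableOn (fun p : ℝ × ℝ ↦ 1 / (p.1 * p.2)) fareyTriangle := by
  simpa only [pow_zero] using integrableOn_neg_log_pow_div_mul_fareyTriangle 0

theorem setIntegral_one_div_mul_fareyTriangle :
    ∫ p in fareyTriangle, 1 / (p.1 * p.2) = Real.pi ^ 2 / 6 := by
  have h := setIntegral_neg_log_pow_div_mul_fareyTriangle 0
  simp only [pow_zero, Nat.factorial_zero, Nat.cast_one, Nat.cast_zero, zero_add, one_mul,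
    riemannZeta_two] at h
  exact_mod_cast h

theorem neg_log_mul_div_mul_eq_add_swap {p : ℝ × ℝ} (hp : p ∈ fareyTriangle) :
    -Real.log (p.1 * p.2) / (p.1 * p.2) =
      -Real.log p.1 / (p.1 * p.2) + -Real.log p.swap.1 / (p.swap.1 * p.swap.2) := by
  have hpos := mul_pos_of_mem_fareyTriangle hp
  rw [Real.log_mul (left_ne_zero_of_mul hpos.ne') (right_ne_zero_of_mul hpos.ne'), neg_add,
    add_div, Prod.fst_swap, Prod.snd_swap, mul_comm p.2]

theorem integrableOn_neg_log_div_mul_fareyTriangle :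
    IntegrableOn (fun p : ℝ × ℝ ↦ -Real.log p.1 / (p.1 * p.2)) fareyTriangle := by
  simpa only [pow_one] using integrableOn_neg_log_pow_div_mul_fareyTriangle 1

theorem integrableOn_neg_log_mul_div_mul_fareyTriangle :
    IntegrableOn (fun p : ℝ × ℝ ↦ -Real.log (p.1 * p.2) / (p.1 * p.2)) fareyTriangle := by
  have h := integrableOn_neg_log_div_mul_fareyTriangle
  exact (h.add (integrableOn_fareyTriangle_comp_swap.2 h)).congr_fun
    (fun p hp ↦ (neg_log_mul_div_mul_eq_add_swap hp).symm) measurableSet_fareyTriangle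

theorem setIntegral_neg_log_mul_div_mul_fareyTriangle :
    ∫ p in fareyTriangle, -Real.log (p.1 * p.2) / (p.1 * p.2) = 2 * (riemannZeta 3).re := by
  have hint := integrableOn_neg_log_div_mul_fareyTriangle
  have hzeta := setIntegral_neg_log_pow_div_mul_fareyTriangle 1
  rw [show ((1 : ℕ) : ℂ) + 2 = 3 by norm_num, Nat.factorial_one, Nat.cast_one, one_mul] at hzeta
  simp only [pow_one] at hzeta
  rw [setIntegral_congr_fun measurableSet_fareyTriangle fun p hp ↦
      neg_log_mul_div_mul_eq_add_swap hp,
    integral_add hint (integrableOn_fareyTriangle_comp_swap.2 hint),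
    setIntegral_fareyTriangle_comp_swap fun p ↦ -Real.log p.1 / (p.1 * p.2), hzeta, two_mul]

end TriangleIntegrals

theorem etaLog_eq_measureReal (s : ℝ) :
    etaLog s = 12 / Real.pi ^ 2 * Real.exp (2 * s) *
      (volume.restrict fareyTriangle).real {p | s < -Real.log (p.1 * p.2) / 2} := by
  rw [etaLog_eq_integral_sectionLength, ← measureReal_fareyTriangle_inter,
    measureReal_restrict_apply' measurableSet_fareyTriangle, inter_comm]
  congr 2
  ext p
  refine and_congr_left fun hp ↦ ?_
  change p.1 * p.2 < Real.exp (-2 * s) ↔ s < -Real.log (p.1 * p.2) / 2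
  rw [← Real.log_lt_iff_lt_exp (mul_pos_of_mem_fareyTriangle hp)]
  constructor <;> intro <;> linarith

theorem integral_measureReal_fareyTriangle_smul_mul_exp :
    ∫ s, (volume.restrict fareyTriangle).real {p | s < -Real.log (p.1 * p.2) / 2} •
        (s * Real.exp (2 * s)) =
      ∫ p in fareyTriangle, (-Real.log (p.1 * p.2) / (p.1 * p.2) - 1 / (p.1 * p.2)) / 4 := by
  have hb : IntegrableOn (fun p : ℝ × ℝ ↦
      (-Real.log (p.1 * p.2) / (p.1 * p.2)) / 4 + 1 / (p.1 * p.2)) fareyTriangle :=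
    (integrableOn_neg_log_mul_div_mul_fareyTriangle.div_const 4).add
      integrableOn_one_div_mul_fareyTriangle
  have hT := ae_restrict_mem (μ := (volume : Measure (ℝ × ℝ))) measurableSet_fareyTriangle
  have hlevel {p : ℝ × ℝ} (hp : p ∈ fareyTriangle) : 0 ≤ -Real.log (p.1 * p.2) / 2 :=
    div_nonneg (neg_log_mul_nonneg_of_mem_fareyTriangle hp) zero_le_two
  rw [integral_measureReal_lt_smul (by fun_prop) (by fun_prop) hb]
  · refine setIntegral_congr_fun measurableSet_fareyTriangle fun p hp ↦ ?_
    simp only [setIntegral_mul_exp_two_mul_Iio,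
      exp_two_mul_neg_log_div_two (mul_pos_of_mem_fareyTriangle hp)]
    ring
  · exact .of_forall fun p ↦
      (integrableOn_mul_exp_two_mul_Iic _).mono_set Iio_subset_Iic_self
  · filter_upwards [hT] with p hp
    refine (setIntegral_norm_mul_exp_two_mul_Iio_le (hlevel hp)).trans_eq ?_
    rw [exp_two_mul_neg_log_div_two (mul_pos_of_mem_fareyTriangle hp)]
    ring

theorem etaLog_first_moment :
    (∫ s : ℝ, s * etaLog s) = 6 * (riemannZeta 3).re / Real.pi ^ 2 - 1 / 2 := by
  calc ∫ s, s * etaLog s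
      = 12 / Real.pi ^ 2 * ∫ s, (volume.restrict fareyTriangle).real
          {p | s < -Real.log (p.1 * p.2) / 2} • (s * Real.exp (2 * s)) := by
        rw [← integral_const_mul]
        refine integral_congr_ae (.of_forall fun s ↦ ?_)
        simp only [etaLog_eq_measureReal, smul_eq_mul]
        ring
    _ = 12 / Real.pi ^ 2 * ((2 * (riemannZeta 3).re - Real.pi ^ 2 / 6) / 4) := by
        rw [integral_measureReal_fareyTriangle_smul_mul_exp, integral_div,
          integral_sub integrableOn_neg_log_mul_div_mul_fareyTriangle
            integrableOn_one_div_mul_fareyTriangle,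
          setIntegral_neg_log_mul_div_mul_fareyTriangle, setIntegral_one_div_mul_fareyTriangle]
    _ = 6 * (riemannZeta 3).re / Real.pi ^ 2 - 1 / 2 := by
        field_simp
        ring
end

section
/- The second moment of η_log satisfies μ_2 = ∫_ℝ s²·η_log(s) ds = 3π²/40 + 1/2 − 6·ζ(3)/π², where ζ is the Riemann zeta function. -/
/-!
The second moment is elementary except for the contribution of `s > log 2`. There, substitute
`p = 1/2 + √(1/4 - exp(-2s))`, that is, `s = -log(p(1-p)) / 2`, which turns the density into
`12/π² * (1 - 1/p - 2 log p)`. Integration by parts reduces the tail to the integrals of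
`log(p(1-p))^k / p` over `(1/2, 1)` with `k ≤ 3`. Up to an explicit boundary term, twice such an
integral is the integral of `(log(p(1-p))^k - log(p)^k) / p` over the whole of `(0, 1)`, by the
symmetry `p ↔ 1 - p`; the binomial theorem writes it as a combination of the Nielsen integrals
`∫ log(p)^a * log(1-p)^(b+1) / p`. Those that occur are multiples of `ζ(2)`, `ζ(3)` and `ζ(4)`; only
`∫ log(p) * log(1-p)² / p` involves a double series, which is evaluated by expanding `ζ(2)²` in two
ways. All powers of `log 2` cancel.
-/

open MeasureTheory

open Set Filter Topology
open scoped Nat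

lemma abs_log_le_two_mul_one_sub {p : ℝ} (hp : 1 / 2 ≤ p) (hp1 : p ≤ 1) :
    |Real.log p| ≤ 2 * (1 - p) := by
  have hp0 : 0 < p := by linarith
  have hinv : p⁻¹ ≤ 2 := (inv_le_comm₀ hp0 two_pos).2 (by linarith)
  calc |Real.log p| = -Real.log p := abs_of_nonpos (Real.log_nonpos hp0.le hp1)
    _ ≤ p⁻¹ - 1 := by linarith [Real.one_sub_inv_le_log_of_pos hp0]
    _ = p⁻¹ * (1 - p) := by field_simp
    _ ≤ 2 * (1 - p) := mul_le_mul_of_nonneg_right hinv (by linarith)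

lemma integral_Iic_pow_mul_exp (k : ℕ) {a : ℝ} (ha : 0 < a) :
    ∫ x in Iic (0 : ℝ), x ^ k * Real.exp (a * x) = (-1) ^ k * k ! / a ^ (k + 1) := by
  have hGamma := Real.integral_rpow_mul_exp_neg_mul_Ioi (a := k + 1) (by positivity) ha
  simp only [add_sub_cancel_right, Real.rpow_natCast] at hGamma
  have hrefl : ∀ x : ℝ, x ^ k * Real.exp (a * x) =
      (-1) ^ k * ((-x) ^ k * Real.exp (-(a * -x))) := fun x ↦ by
    rw [mul_neg, neg_neg, ← mul_assoc, ← mul_pow, neg_one_mul, neg_neg]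
  simp only [hrefl]
  rw [integral_const_mul,
    integral_comp_neg_Iic (f := fun x ↦ x ^ k * Real.exp (-(a * x))), neg_zero, hGamma,
    Real.Gamma_nat_eq_factorial, ← Nat.cast_add_one, Real.rpow_natCast, one_div, inv_pow]
  ring

lemma integral_pow_mul_log_pow (n k : ℕ) :
    ∫ p in (0 : ℝ)..1, p ^ n * Real.log p ^ k = (-1) ^ k * k ! / (n + 1) ^ (k + 1) := by
  rw [intervalIntegral.integral_of_le zero_le_one, integral_Ioc_eq_integral_Ioo,
    (by simp : Ioo (0 : ℝ) 1 = Real.exp '' Iio 0),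
    integral_image_eq_integral_abs_deriv_smul measurableSet_Iio
      (fun x _ ↦ (Real.hasDerivAt_exp x).hasDerivWithinAt) Real.exp_injective.injOn,
    ← integral_Iic_eq_integral_Iio, ← integral_Iic_pow_mul_exp k (a := n + 1) (by positivity)]
  refine setIntegral_congr_fun measurableSet_Iic fun x _ ↦ ?_
  have hexp : Real.exp ((n + 1) * x) = Real.exp x * Real.exp x ^ n := by
    rw [← Real.exp_nat_mul, ← Real.exp_add]
    ring_nf
  simp only [abs_of_pos (Real.exp_pos x), smul_eq_mul, Real.log_exp, hexp]
  ring

lemma intervalIntegrable_pow_mul_log_pow (n k : ℕ) :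
    IntervalIntegrable (fun p : ℝ ↦ p ^ n * Real.log p ^ k) volume 0 1 := by
  refine intervalIntegral.intervalIntegrable_of_integral_ne_zero ?_
  rw [integral_pow_mul_log_pow]
  have : (k ! : ℝ) ≠ 0 := mod_cast k.factorial_ne_zero
  have : (n : ℝ) + 1 ≠ 0 := by positivity
  positivity

lemma intervalIntegrable_log_pow (k : ℕ) :
    IntervalIntegrable (fun p : ℝ ↦ Real.log p ^ k) volume 0 1 := by
  simpa using intervalIntegrable_pow_mul_log_pow 0 k

lemma integral_tsum_mul_log_pow {ι : Type*} [Countable ι] (k : ℕ) {c : ι → ℝ} {n : ι → ℕ}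
    (hc : Summable fun i ↦ c i / ((n i : ℝ) + 1) ^ (k + 1)) :
    ∫ p in (0 : ℝ)..1, (∑' i, c i * p ^ n i) * Real.log p ^ k =
      (-1) ^ k * k ! * ∑' i, c i / ((n i : ℝ) + 1) ^ (k + 1) := by
  let F : ι → ℝ → ℝ := fun i p ↦ c i * (p ^ n i * Real.log p ^ k)
  have hInt (i : ι) : IntervalIntegrable (F i) volume 0 1 :=
    (intervalIntegrable_pow_mul_log_pow (n i) k).const_mul (c i)
  have hIntegral (i : ι) :
      ∫ p in Ioc (0 : ℝ) 1, F i p = (-1) ^ k * k ! * (c i / ((n i : ℝ) + 1) ^ (k + 1)) := by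
    rw [integral_const_mul, ← intervalIntegral.integral_of_le zero_le_one,
      integral_pow_mul_log_pow]
    ring
  have hNorm (i : ι) :
      ∫ p in Ioc (0 : ℝ) 1, ‖F i p‖ = k ! * |c i / ((n i : ℝ) + 1) ^ (k + 1)| := by
    have hsign : ∀ p ∈ Ioc (0 : ℝ) 1,
        ‖F i p‖ = |c i| * ((-1) ^ k * (p ^ n i * Real.log p ^ k)) := fun p hp ↦ by
      rw [Real.norm_eq_abs, abs_mul, abs_mul, abs_pow, abs_pow, abs_of_pos hp.1,
        abs_of_nonpos (Real.log_nonpos hp.1.le hp.2), neg_pow]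
      ring
    rw [setIntegral_congr_fun measurableSet_Ioc hsign, integral_const_mul, integral_const_mul,
      ← intervalIntegral.integral_of_le zero_le_one, integral_pow_mul_log_pow, abs_div, abs_pow,
      abs_of_pos (by positivity : (0 : ℝ) < n i + 1), mul_div_assoc, ← mul_assoc ((-1 : ℝ) ^ k),
      ← mul_pow]
    ring
  have hSum := hasSum_integral_of_summable_integral_norm (fun i ↦ (hInt i).1)
    (by simpa only [hNorm] using hc.abs.mul_left (k ! : ℝ))
  simp only [hIntegral] at hSum
  simp only [F, ← mul_assoc, tsum_mul_right] at hSum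
  rw [intervalIntegral.integral_of_le zero_le_one, ← hSum.tsum_eq, tsum_mul_left]

lemma tendsto_one_sub_nhdsLT_one : Tendsto (fun p : ℝ ↦ 1 - p) (𝓝[<] 1) (𝓝[>] 0) := by
  refine tendsto_nhdsWithin_iff.2 ⟨?_, ?_⟩
  · simpa using tendsto_nhdsWithin_of_tendsto_nhds ((continuous_sub_left (1 : ℝ)).tendsto 1)
  · filter_upwards [self_mem_nhdsWithin] with p (hp : p < 1) using sub_pos.2 hp

lemma tendsto_mul_log_pow_nhdsGT_zero (k : ℕ) :
    Tendsto (fun x : ℝ ↦ x * Real.log x ^ k) (𝓝[>] 0) (𝓝 0) := by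
  rcases k.eq_zero_or_pos with rfl | hk
  · simpa using tendsto_nhdsWithin_of_tendsto_nhds (continuous_id'.tendsto (0 : ℝ))
  have hroot := (tendsto_log_mul_rpow_nhdsGT_zero (r := (k : ℝ)⁻¹) (by positivity)).pow k
  rw [zero_pow hk.ne'] at hroot
  refine hroot.congr' ?_
  filter_upwards [self_mem_nhdsWithin] with x (hx : 0 < x)
  rw [mul_pow, Real.rpow_inv_natCast_pow hx.le hk.ne', mul_comm]

lemma abs_log_one_sub_pow_succ_le {p : ℝ} (hp : 0 ≤ p) (hp2 : p ≤ 1 / 2) (b : ℕ) :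
    |Real.log (1 - p) ^ (b + 1)| ≤ 2 * p := by
  have hlog := abs_log_le_two_mul_one_sub (p := 1 - p) (by linarith) (by linarith)
  rw [sub_sub_cancel] at hlog
  rw [abs_pow]
  exact (pow_le_of_le_one (abs_nonneg _) (by linarith) b.succ_ne_zero).trans hlog

lemma tendsto_log_pow_mul_log_one_sub_pow_nhdsGT_zero (a b : ℕ) :
    Tendsto (fun p : ℝ ↦ Real.log p ^ a * Real.log (1 - p) ^ (b + 1)) (𝓝[>] 0) (𝓝 0) := by
  refine squeeze_zero_norm' (a := fun p : ℝ ↦ 2 * |p * Real.log p ^ a|) ?_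
    (by simpa using ((tendsto_mul_log_pow_nhdsGT_zero a).abs.const_mul 2))
  filter_upwards [Ioo_mem_nhdsGT (show (0 : ℝ) < 1 / 2 by norm_num)] with p hp
  rw [Real.norm_eq_abs, abs_mul, abs_mul, abs_of_pos hp.1, ← mul_assoc, mul_comm]
  exact mul_le_mul_of_nonneg_right (abs_log_one_sub_pow_succ_le hp.1.le hp.2.le b) (abs_nonneg _)

/-! ### Nielsen integrals -/

/-- The integrand of Nielsen's generalized polylogarithm `S_{a+1,b+1}` at `1`, without its
normalizing constant; the shift `b + 1` makes it integrable for all `a` and `b`. -/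
noncomputable def nielsenIntegrand (a b : ℕ) (p : ℝ) : ℝ :=
  Real.log p ^ a * Real.log (1 - p) ^ (b + 1) / p

/-- Nielsen's generalized polylogarithm `S_{a+1,b+1}(1)` times `(-1)^(a+b+1) * a! * (b+1)!`. -/
noncomputable def nielsenIntegral (a b : ℕ) : ℝ :=
  ∫ p in (0 : ℝ)..1, nielsenIntegrand a b p

lemma abs_nielsenIntegrand_le (a b : ℕ) {p : ℝ} (hp : p ∈ Ioc (0 : ℝ) 1) :
    |nielsenIntegrand a b p| ≤ 2 * |Real.log p ^ a| + 2 * |Real.log (1 - p) ^ (b + 1)| := by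
  rw [nielsenIntegrand, abs_div, abs_mul, abs_of_pos hp.1, div_le_iff₀ hp.1]
  rcases le_total p (1 / 2) with h | h
  · have hM := abs_log_one_sub_pow_succ_le hp.1.le h b
    nlinarith [mul_le_mul_of_nonneg_left hM (abs_nonneg (Real.log p ^ a)),
      mul_nonneg (abs_nonneg (Real.log (1 - p) ^ (b + 1))) hp.1.le]
  · have hL : |Real.log p ^ a| ≤ 1 := by
      rw [abs_pow]
      exact pow_le_one₀ (abs_nonneg _) (by linarith [abs_log_le_two_mul_one_sub h hp.2])
    nlinarith [mul_le_mul_of_nonneg_right hL (abs_nonneg (Real.log (1 - p) ^ (b + 1))),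
      mul_le_mul_of_nonneg_right h (abs_nonneg (Real.log (1 - p) ^ (b + 1))),
      mul_nonneg (abs_nonneg (Real.log p ^ a)) hp.1.le]

lemma intervalIntegrable_nielsenIntegrand (a b : ℕ) :
    IntervalIntegrable (nielsenIntegrand a b) volume 0 1 := by
  have hM : IntervalIntegrable (fun p : ℝ ↦ Real.log (1 - p) ^ (b + 1)) volume 0 1 := by
    simpa using ((intervalIntegrable_log_pow (b + 1)).comp_sub_left 1).symm
  refine (((intervalIntegrable_log_pow a).abs.const_mul 2).add (hM.abs.const_mul 2)).mono_fun'
    (Measurable.aestronglyMeasurable (by unfold nielsenIntegrand; fun_prop)) ?_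
  rw [uIoc_of_le zero_le_one]
  exact ae_restrict_of_forall_mem measurableSet_Ioc fun p hp ↦ abs_nielsenIntegrand_le a b hp

lemma integral_nielsenIntegrand_one_sub (a b : ℕ) :
    ∫ p in (0 : ℝ)..1, nielsenIntegrand a b (1 - p) = nielsenIntegral a b := by
  simp [nielsenIntegral, intervalIntegral.integral_comp_sub_left]

lemma hasDerivAt_log_one_sub {p : ℝ} (hp : p < 1) :
    HasDerivAt (fun p : ℝ ↦ Real.log (1 - p)) (-1 / (1 - p)) p :=
  ((hasDerivAt_id p).const_sub 1).log (sub_pos.2 hp).ne'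

lemma nielsenIntegral_symm (a b : ℕ) :
    (a + 1) * nielsenIntegral a b = (b + 1) * nielsenIntegral b a := by
  let F : ℝ → ℝ := fun p ↦ Real.log p ^ (a + 1) * Real.log (1 - p) ^ (b + 1)
  have hF : ∀ p ∈ Ioo (0 : ℝ) 1, HasDerivAt F
      ((a + 1) * nielsenIntegrand a b p - (b + 1) * nielsenIntegrand b a (1 - p)) p := by
    intro p hp
    refine (((Real.hasDerivAt_log hp.1.ne').fun_pow (a + 1)).fun_mul
      ((hasDerivAt_log_one_sub hp.2).fun_pow (b + 1))).congr_deriv ?_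
    simp only [nielsenIntegrand, sub_sub_cancel, Nat.add_sub_cancel]
    push_cast
    ring
  have hF_zero : Tendsto F (𝓝[>] 0) (𝓝 0) :=
    tendsto_log_pow_mul_log_one_sub_pow_nhdsGT_zero (a + 1) b
  have hF_one : Tendsto F (𝓝[<] 1) (𝓝 0) :=
    ((tendsto_log_pow_mul_log_one_sub_pow_nhdsGT_zero (b + 1) a).comp
      tendsto_one_sub_nhdsLT_one).congr fun p ↦ by simp [F, mul_comm]
  have hInt : IntervalIntegrable (fun p ↦ (a + 1) * nielsenIntegrand a b p) volume 0 1 :=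
    (intervalIntegrable_nielsenIntegrand a b).const_mul _
  have hInt_refl :
      IntervalIntegrable (fun p ↦ (b + 1) * nielsenIntegrand b a (1 - p)) volume 0 1 := by
    simpa using (((intervalIntegrable_nielsenIntegrand b a).comp_sub_left 1).symm.const_mul
      ((b : ℝ) + 1))
  have hFTC := intervalIntegral.integral_eq_sub_of_hasDerivAt_of_tendsto zero_lt_one hF
    (hInt.sub hInt_refl) hF_zero hF_one
  rw [intervalIntegral.integral_sub hInt hInt_refl, intervalIntegral.integral_const_mul,
    intervalIntegral.integral_const_mul, integral_nielsenIntegrand_one_sub] at hFTC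
  exact sub_eq_zero.1 (hFTC.trans (sub_self 0))

lemma summable_one_div_nat_add_one_pow {k : ℕ} (hk : 1 < k) :
    Summable fun n : ℕ ↦ 1 / ((n : ℝ) + 1) ^ k := by
  simpa using (summable_nat_add_iff 1).2 (Real.summable_one_div_nat_pow.2 hk)

lemma riemannZeta_natCast_re_eq_tsum {k : ℕ} (hk : 1 < k) :
    (riemannZeta k).re = ∑' n : ℕ, 1 / ((n : ℝ) + 1) ^ k := by
  rw [zeta_eq_tsum_one_div_nat_add_one_cpow (by simpa using hk), ← Complex.ofReal_re (∑' n : ℕ, _)]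
  push_cast
  simp only [Complex.cpow_natCast]

lemma nielsenIntegral_zero_left (b : ℕ) :
    nielsenIntegral 0 b = (-1) ^ (b + 1) * (b + 1)! * (riemannZeta (b + 2 : ℕ)).re := by
  have hgeom : EqOn (fun p ↦ nielsenIntegrand 0 b (1 - p))
      (fun p ↦ (∑' n : ℕ, 1 * p ^ n) * Real.log p ^ (b + 1)) (Ioo 0 1) := fun p hp ↦ by
    simp only [nielsenIntegrand, sub_sub_cancel, pow_zero, one_mul,
      tsum_geometric_of_lt_one hp.1.le hp.2]
    ring
  rw [← integral_nielsenIntegrand_one_sub,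
    intervalIntegral.integral_congr_Ioo_of_le zero_le_one hgeom,
    integral_tsum_mul_log_pow _ (summable_one_div_nat_add_one_pow (by lia)),
    riemannZeta_natCast_re_eq_tsum (by lia)]

lemma tsum_prod_nat_eq_diag_add_offDiag {E : Type*} [NormedAddCommGroup E] [CompleteSpace E]
    {g : ℕ × ℕ → E} (hg : Summable g) :
    ∑' x, g x = ∑' n, g (n, n) +
      (∑' x : ℕ × ℕ, g (x.1, x.1 + x.2 + 1) + ∑' x : ℕ × ℕ, g (x.1 + x.2 + 1, x.1)) := by
  let e : ℕ ⊕ (ℕ × ℕ) ⊕ (ℕ × ℕ) → ℕ × ℕ :=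
    Sum.elim (fun n ↦ (n, n))
      (Sum.elim (fun x ↦ (x.1, x.1 + x.2 + 1)) fun x ↦ (x.1 + x.2 + 1, x.1))
  have he : e.Bijective := by
    constructor
    · rintro (n | ⟨m, d⟩ | ⟨m, d⟩) (n' | ⟨m', d'⟩ | ⟨m', d'⟩) h <;> grind
    · rintro ⟨m, n⟩
      rcases lt_trichotomy m n with h | rfl | h
      · exact ⟨.inr (.inl (m, n - m - 1)), by simp [e]; lia⟩
      · exact ⟨.inl m, rfl⟩
      · exact ⟨.inr (.inr (n, m - n - 1)), by simp [e]; lia⟩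
  have hge : Summable (g ∘ e) := (Equiv.ofBijective e he).summable_iff.2 hg
  have hge_inr : Summable ((g ∘ e) ∘ Sum.inr) := hge.comp_injective Sum.inr_injective
  rw [← (Equiv.ofBijective e he).tsum_eq g]
  exact (Summable.tsum_sum (hge.comp_injective Sum.inl_injective) hge_inr).trans <|
    congrArg _ <| Summable.tsum_sum (hge_inr.comp_injective Sum.inl_injective)
      (hge_inr.comp_injective Sum.inr_injective)

lemma tsum_mul_self_eq_tsum_sq_add {R : Type*} [NormedCommRing R] [CompleteSpace R] {f : ℕ → R}
    (hf : Summable fun x : ℕ × ℕ ↦ f x.1 * f x.2) :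
    ∑' x : ℕ × ℕ, f x.1 * f x.2 =
      ∑' n, f n ^ 2 + 2 * ∑' x : ℕ × ℕ, f x.1 * f (x.1 + x.2 + 1) := by
  simp only [tsum_prod_nat_eq_diag_add_offDiag hf, mul_comm (f (_ + _ + 1)), ← two_mul, ← sq]

lemma hasSum_one_div_nat_add_one_sq :
    HasSum (fun n : ℕ ↦ 1 / ((n : ℝ) + 1) ^ 2) (Real.pi ^ 2 / 6) := by
  simpa using (hasSum_nat_add_iff' 1).2 hasSum_zeta_two

lemma hasSum_one_div_nat_add_one_pow_four :
    HasSum (fun n : ℕ ↦ 1 / ((n : ℝ) + 1) ^ 4) (Real.pi ^ 4 / 90) := by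
  simpa using (hasSum_nat_add_iff' 1).2 hasSum_zeta_four

lemma one_div_sq_mul_one_div_sq {K : Type*} [Field K] {x y : K} (hx : x ≠ 0) (hy : y ≠ 0)
    (hxy : x + y ≠ 0) :
    1 / x ^ 2 * (1 / y ^ 2) = 1 / (x ^ 2 * (x + y) ^ 2) + 1 / (y ^ 2 * (x + y) ^ 2) +
      2 * (1 / (x * y * (x + y) ^ 2)) := by
  field_simp
  ring

/-- Partial fractions and trichotomy of the indices give two expansions of `ζ(2)²`, both containing
`2 * ∑ 1 / (m² (m + n)²)`. -/
lemma hasSum_tornheim_one_one_two :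
    HasSum (fun x : ℕ × ℕ ↦ 1 / (((x.1 : ℝ) + 1) * (x.2 + 1) * (x.1 + 1 + (x.2 + 1)) ^ 2))
      (Real.pi ^ 4 / 180) := by
  let f : ℕ → ℝ := fun n ↦ 1 / ((n : ℝ) + 1) ^ 2
  let g : ℕ × ℕ → ℝ := fun x ↦ f x.1 * f x.2
  let A : ℕ × ℕ → ℝ := fun x ↦ 1 / (((x.1 : ℝ) + 1) * (x.2 + 1) * (x.1 + 1 + (x.2 + 1)) ^ 2)
  let B : ℕ × ℕ → ℝ := fun x ↦ 1 / (((x.1 : ℝ) + 1) ^ 2 * (x.1 + 1 + (x.2 + 1)) ^ 2)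
  have hA_nonneg (x) : 0 ≤ A x := by positivity
  have hB_nonneg (x) : 0 ≤ B x := by positivity
  have hf : Summable f := hasSum_one_div_nat_add_one_sq.summable
  have hf_nonneg : 0 ≤ f := fun n ↦ by positivity
  have hg : Summable g := hf.mul_of_nonneg hf hf_nonneg hf_nonneg
  have hg_eq (x) : g x = B x + B x.swap + 2 * A x := by
    have := one_div_sq_mul_one_div_sq (x := (x.1 : ℝ) + 1) (y := x.2 + 1) (by positivity)
      (by positivity) (by positivity)
    simpa only [B, Prod.fst_swap, Prod.snd_swap, add_comm ((x.2 : ℝ) + 1)] using this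
  have hB : Summable B := hg.of_nonneg_of_le hB_nonneg fun x ↦ by
    linarith [hg_eq x, hA_nonneg x, hB_nonneg x.swap]
  have hA : Summable A := hg.of_nonneg_of_le hA_nonneg fun x ↦ by
    linarith [hg_eq x, hA_nonneg x, hB_nonneg x, hB_nonneg x.swap]
  have hB_swap : Summable fun x : ℕ × ℕ ↦ B x.swap := hB.prod_symm
  have hShuffle : ∑' x, g x = 2 * ∑' x, B x + 2 * ∑' x, A x := by
    rw [tsum_congr hg_eq, (hB.add hB_swap).tsum_add (hA.mul_left 2), hB.tsum_add hB_swap,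
      tsum_mul_left, two_mul (∑' x, B x)]
    exact congrArg (∑' x, B x + · + _) ((Equiv.prodComm ℕ ℕ).tsum_eq B)
  have hStuffle : ∑' x, g x = Real.pi ^ 4 / 90 + 2 * ∑' x, B x := by
    have hdiag (n : ℕ) : f n ^ 2 = 1 / ((n : ℝ) + 1) ^ 4 := by
      simp only [f, div_pow, one_pow, ← pow_mul]
    have habove (x : ℕ × ℕ) : f x.1 * f (x.1 + x.2 + 1) = B x := by
      simp only [f, B, one_div_mul_one_div]
      push_cast
      ring_nf
    simp only [g, tsum_mul_self_eq_tsum_sq_add hg, hdiag, habove,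
      hasSum_one_div_nat_add_one_pow_four.tsum_eq]
  have hA_tsum : ∑' x, A x = Real.pi ^ 4 / 180 := by linarith
  exact hA_tsum ▸ hA.hasSum

lemma nielsenIntegral_one_one : nielsenIntegral 1 1 = -(Real.pi ^ 4 / 180) := by
  have hsum : (fun x : ℕ × ℕ ↦ 1 / (((x.1 : ℝ) + 1) * (x.2 + 1)) /
      (((x.1 + x.2 + 1 : ℕ) : ℝ) + 1) ^ (1 + 1)) = fun x : ℕ × ℕ ↦
      1 / (((x.1 : ℝ) + 1) * (x.2 + 1) * (x.1 + 1 + (x.2 + 1)) ^ 2) := by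
    ext x
    push_cast
    rw [div_div]
    ring_nf
  have hseries : EqOn (nielsenIntegrand 1 1) (fun p ↦ (∑' x : ℕ × ℕ,
      1 / (((x.1 : ℝ) + 1) * (x.2 + 1)) * p ^ (x.1 + x.2 + 1)) * Real.log p ^ 1) (Ioo 0 1) := by
    intro p hp
    let f : ℕ → ℝ := fun n ↦ p ^ (n + 1) / ((n : ℝ) + 1)
    have hlog : HasSum f (-Real.log (1 - p)) :=
      Real.hasSum_pow_div_log_of_abs_lt_one (by simpa [abs_of_pos hp.1] using hp.2)
    have hnonneg : 0 ≤ f := fun n ↦ div_nonneg (pow_nonneg hp.1.le _) (by positivity)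
    have hsq := hlog.summable.tsum_mul_tsum hlog.summable
      (hlog.summable.mul_of_nonneg hlog.summable hnonneg hnonneg)
    have hterm (x : ℕ × ℕ) : 1 / (((x.1 : ℝ) + 1) * (x.2 + 1)) * p ^ (x.1 + x.2 + 1) =
        f x.1 * f x.2 / p := by
      have := hp.1.ne'
      simp only [f]
      field_simp
      ring
    simp only [hterm, tsum_div_const, ← hsq, hlog.tsum_eq, nielsenIntegrand]
    ring
  rw [nielsenIntegral, intervalIntegral.integral_congr_Ioo_of_le zero_le_one hseries,
    integral_tsum_mul_log_pow 1 (hsum ▸ hasSum_tornheim_one_one_two.summable), hsum,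
    hasSum_tornheim_one_one_two.tsum_eq]
  simp

/-! ### Integrals of powers of `log (p * (1 - p))` -/

lemma half_mem_uIcc_zero_one : (1 / 2 : ℝ) ∈ uIcc 0 1 := by
  rw [uIcc_of_le zero_le_one]
  norm_num

lemma intervalIntegrable_add_comp_one_sub {E : Type*} [NormedAddCommGroup E] {g : ℝ → E}
    (hg : IntervalIntegrable g volume 0 1) :
    IntervalIntegrable (fun p ↦ g p + g (1 - p)) volume (1 / 2) 1 := by
  have hrefl : IntervalIntegrable (fun p ↦ g (1 - p)) volume 0 1 := by
    simpa using (hg.comp_sub_left 1).symm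
  exact (hg.add hrefl).mono_set (uIcc_subset_uIcc_right half_mem_uIcc_zero_one)

lemma integral_add_comp_one_sub {E : Type*} [NormedAddCommGroup E] [NormedSpace ℝ E] {g : ℝ → E}
    (hg : IntervalIntegrable g volume 0 1) :
    ∫ p in (1 / 2 : ℝ)..1, (g p + g (1 - p)) = ∫ p in (0 : ℝ)..1, g p := by
  have hleft := hg.mono_set (uIcc_subset_uIcc_left half_mem_uIcc_zero_one)
  have hright := hg.mono_set (uIcc_subset_uIcc_right half_mem_uIcc_zero_one)
  have hrefl : IntervalIntegrable (fun p ↦ g (1 - p)) volume (1 / 2) 1 := by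
    convert (hleft.comp_sub_left 1).symm using 1 <;> norm_num
  rw [intervalIntegral.integral_add hright hrefl, intervalIntegral.integral_comp_sub_left,
    sub_self, sub_half, add_comm, intervalIntegral.integral_add_adjacent_intervals hleft hright]

lemma log_mul_one_sub {p : ℝ} (hp : p ∈ Ioo (0 : ℝ) 1) :
    Real.log (p * (1 - p)) = Real.log p + Real.log (1 - p) :=
  Real.log_mul hp.1.ne' (sub_pos.2 hp.2).ne'

lemma hasDerivAt_log_mul_one_sub {p : ℝ} (hp : p ∈ Ioo (0 : ℝ) 1) :
    HasDerivAt (fun p : ℝ ↦ Real.log (p * (1 - p))) (1 / p - 1 / (1 - p)) p := by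
  have hp0 : p ≠ 0 := hp.1.ne'
  have hq0 : 1 - p ≠ 0 := (sub_pos.2 hp.2).ne'
  refine (((hasDerivAt_id p).fun_mul ((hasDerivAt_id p).const_sub 1)).log
    (mul_ne_zero hp0 hq0)).congr_deriv ?_
  simp only [id]
  field_simp
  ring

lemma log_mul_one_sub_pow_sub_div_eq_sum (k : ℕ) {p : ℝ} (hp : p ∈ Ioo (0 : ℝ) 1) :
    (Real.log (p * (1 - p)) ^ k - Real.log p ^ k) / p =
      ∑ m ∈ Finset.range k, k.choose (m + 1) * nielsenIntegrand (k - (m + 1)) m p := by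
  rw [log_mul_one_sub hp, add_comm, add_pow, Finset.sum_range_succ', pow_zero,
    Nat.choose_zero_right, Nat.sub_zero, one_mul, Nat.cast_one, mul_one,
    add_sub_cancel_right, Finset.sum_div]
  refine Finset.sum_congr rfl fun m _ ↦ ?_
  rw [nielsenIntegrand]
  ring

lemma intervalIntegrable_log_mul_one_sub_pow_sub_div (k : ℕ) :
    IntervalIntegrable (fun p ↦ (Real.log (p * (1 - p)) ^ k - Real.log p ^ k) / p) volume 0 1 := by
  have hsum := IntervalIntegrable.sum (Finset.range k) fun m _ ↦
    (intervalIntegrable_nielsenIntegrand (k - (m + 1)) m).const_mul (k.choose (m + 1) : ℝ)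
  refine hsum.congr_uIoo fun p hp ↦ ?_
  rw [uIoo_of_le zero_le_one] at hp
  simpa using (log_mul_one_sub_pow_sub_div_eq_sum k hp).symm

lemma integral_log_mul_one_sub_pow_sub_div (k : ℕ) :
    ∫ p in (0 : ℝ)..1, (Real.log (p * (1 - p)) ^ k - Real.log p ^ k) / p =
      ∑ m ∈ Finset.range k, k.choose (m + 1) * nielsenIntegral (k - (m + 1)) m := by
  rw [intervalIntegral.integral_congr_Ioo_of_le zero_le_one
      fun p hp ↦ log_mul_one_sub_pow_sub_div_eq_sum k hp,
    intervalIntegral.integral_finsetSum fun m _ ↦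
      (intervalIntegrable_nielsenIntegrand _ m).const_mul _]
  simp only [intervalIntegral.integral_const_mul, nielsenIntegral]

lemma intervalIntegrable_log_mul_one_sub_pow (k : ℕ) :
    IntervalIntegrable (fun p : ℝ ↦ Real.log (p * (1 - p)) ^ k) volume 0 1 := by
  refine (((intervalIntegrable_log_mul_one_sub_pow_sub_div k).continuousOn_mul
    continuousOn_id).add (intervalIntegrable_log_pow k)).congr_uIoo fun p hp ↦ ?_
  rw [uIoo_of_le zero_le_one] at hp
  simp [mul_div_cancel₀ _ hp.1.ne']

lemma intervalIntegrable_mul_log_mul_one_sub_pow {w : ℝ → ℝ} (hw : ContinuousOn w (Ioi 0)) (k : ℕ) :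
    IntervalIntegrable (fun p : ℝ ↦ w p * Real.log (p * (1 - p)) ^ k) volume (1 / 2) 1 := by
  refine ((intervalIntegrable_log_mul_one_sub_pow k).mono_set
    (uIcc_subset_uIcc_right half_mem_uIcc_zero_one)).continuousOn_mul (hw.mono ?_)
  rw [uIcc_of_le (by norm_num)]
  exact fun p hp ↦ lt_of_lt_of_le (by norm_num) hp.1

lemma tendsto_one_sub_mul_log_mul_one_sub_pow (k : ℕ) :
    Tendsto (fun p : ℝ ↦ (1 - p) * Real.log (p * (1 - p)) ^ k) (𝓝[<] 1) (𝓝 0) := by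
  have hid : Tendsto (fun p : ℝ ↦ p) (𝓝[<] 1) (𝓝 1) := nhdsWithin_le_nhds
  have hw : Tendsto (fun p : ℝ ↦ p * (1 - p)) (𝓝[<] 1) (𝓝[>] 0) := by
    refine tendsto_nhdsWithin_iff.2 ⟨?_, ?_⟩
    · simpa using hid.mul (hid.const_sub 1)
    · filter_upwards [Ioo_mem_nhdsLT zero_lt_one] with p hp
        using mul_pos hp.1 (sub_pos.2 hp.2)
  have hdiv := ((tendsto_mul_log_pow_nhdsGT_zero k).comp hw).div hid one_ne_zero
  rw [zero_div] at hdiv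
  refine hdiv.congr' ?_
  filter_upwards [Ioo_mem_nhdsLT zero_lt_one] with p hp
  have := hp.1.ne'
  simp only [Function.comp_apply, Pi.div_apply]
  field_simp

lemma tendsto_mul_log_mul_one_sub_pow {f : ℝ → ℝ} (hf : DifferentiableAt ℝ f 1) (hf1 : f 1 = 0)
    (k : ℕ) :
    Tendsto (fun p ↦ f p * Real.log (p * (1 - p)) ^ k) (𝓝[<] 1) (𝓝 0) := by
  have hO : f =O[𝓝[<] 1] fun p ↦ 1 - p := by
    simpa [hf1] using (hf.isBigO_sub.mono nhdsWithin_le_nhds).neg_right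
  exact (hO.mul (Asymptotics.isBigO_refl _ _)).trans_tendsto
    (tendsto_one_sub_mul_log_mul_one_sub_pow k)

lemma tendsto_log_one_sub_pow_sub_log_mul_one_sub_pow (k : ℕ) :
    Tendsto (fun p : ℝ ↦ Real.log (1 - p) ^ (k + 1) - Real.log (p * (1 - p)) ^ (k + 1))
      (𝓝[<] 1) (𝓝 0) := by
  have hlim : Tendsto
      (fun p : ℝ ↦ (k + 1) * |Real.log p * Real.log (p * (1 - p)) ^ k|) (𝓝[<] 1) (𝓝 0) := by
    simpa using (tendsto_mul_log_mul_one_sub_pow (Real.differentiableAt_log one_ne_zero)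
      Real.log_one k).abs.const_mul ((k : ℝ) + 1)
  refine squeeze_zero_norm' ?_ hlim
  filter_upwards [Ioo_mem_nhdsLT zero_lt_one] with p hp
  have hL := Real.log_neg hp.1 hp.2
  have hM := Real.log_neg (sub_pos.2 hp.2) (sub_lt_self 1 hp.1)
  have hmax : max |Real.log (1 - p)| |Real.log (p * (1 - p))| = |Real.log (p * (1 - p))| := by
    rw [log_mul_one_sub hp]
    refine max_eq_right ?_
    rw [abs_of_neg hM, abs_of_neg (add_neg hL hM)]
    linarith
  have hdiff : Real.log (1 - p) - Real.log (p * (1 - p)) = -Real.log p := by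
    rw [log_mul_one_sub hp]
    ring
  calc _ ≤ _ := abs_pow_sub_pow_le _ _ _
    _ = _ := by
      rw [hmax, hdiff, abs_neg, abs_mul, abs_pow, Nat.add_sub_cancel]
      push_cast
      ring

/-- A primitive of `g p + g (1 - p) - 2 log(p(1-p))^k / p`, where
`g p = (log(p(1-p))^k - log(p)^k) / p`; it compares an integral over `(1/2, 1)` with integrals over
`(0, 1)`. -/
noncomputable def reflectionPrimitive (k : ℕ) (p : ℝ) : ℝ :=
  (Real.log (1 - p) ^ (k + 1) - Real.log (p * (1 - p)) ^ (k + 1) - Real.log p ^ (k + 1)) / (k + 1)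

lemma hasDerivAt_reflectionPrimitive (k : ℕ) {p : ℝ} (hp : p ∈ Ioo (0 : ℝ) 1) :
    HasDerivAt (reflectionPrimitive k)
      ((Real.log (p * (1 - p)) ^ k - Real.log p ^ k) / p +
        (Real.log ((1 - p) * (1 - (1 - p))) ^ k - Real.log (1 - p) ^ k) / (1 - p) -
        2 * (1 / p * Real.log (p * (1 - p)) ^ k)) p := by
  have hp0 : p ≠ 0 := hp.1.ne'
  have hq0 : 1 - p ≠ 0 := (sub_pos.2 hp.2).ne'
  have hk : (k : ℝ) + 1 ≠ 0 := by positivity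
  refine (((((hasDerivAt_log_one_sub hp.2).fun_pow (k + 1)).fun_sub
    ((hasDerivAt_log_mul_one_sub hp).fun_pow (k + 1))).fun_sub
    ((Real.hasDerivAt_log hp0).fun_pow (k + 1))).div_const ((k : ℝ) + 1)).congr_deriv ?_
  simp only [sub_sub_cancel, mul_comm (1 - p) p, Nat.add_sub_cancel]
  push_cast
  field_simp
  ring

lemma reflectionPrimitive_half (k : ℕ) :
    reflectionPrimitive k (1 / 2) = -(Real.log (1 / 4) ^ (k + 1) / (k + 1)) := by
  rw [reflectionPrimitive, sub_half, sub_sub_cancel_left, neg_div]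
  norm_num

lemma tendsto_reflectionPrimitive_one (k : ℕ) :
    Tendsto (reflectionPrimitive k) (𝓝[<] 1) (𝓝 0) := by
  have hlog : Tendsto (fun p ↦ Real.log p ^ (k + 1)) (𝓝[<] 1) (𝓝 0) := by
    simpa using tendsto_nhdsWithin_of_tendsto_nhds
      ((Real.continuousAt_log one_ne_zero).fun_pow (k + 1)).tendsto
  have hlim := ((tendsto_log_one_sub_pow_sub_log_mul_one_sub_pow k).sub hlog).div_const
    ((k : ℝ) + 1)
  rwa [sub_zero, zero_div] at hlim

lemma two_mul_integral_log_mul_one_sub_pow_div (k : ℕ) :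
    2 * ∫ p in (1 / 2 : ℝ)..1, 1 / p * Real.log (p * (1 - p)) ^ k =
      ∑ m ∈ Finset.range k, k.choose (m + 1) * nielsenIntegral (k - (m + 1)) m -
        Real.log (1 / 4) ^ (k + 1) / (k + 1) := by
  have hg := intervalIntegrable_log_mul_one_sub_pow_sub_div k
  have hg_refl := intervalIntegrable_add_comp_one_sub hg
  have hT : IntervalIntegrable (fun p ↦ 1 / p * Real.log (p * (1 - p)) ^ k) volume (1 / 2) 1 :=
    intervalIntegrable_mul_log_mul_one_sub_pow
      (continuousOn_const.div continuousOn_id fun p hp ↦ (mem_Ioi.1 hp).ne') k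
  have hhalf := (hasDerivAt_reflectionPrimitive k (p := 1 / 2) (by norm_num)).continuousAt.tendsto
  have hFTC := intervalIntegral.integral_eq_sub_of_hasDerivAt_of_tendsto (by norm_num)
    (fun p hp ↦ hasDerivAt_reflectionPrimitive k ⟨one_half_pos.trans hp.1, hp.2⟩)
    (hg_refl.sub (hT.const_mul 2)) (tendsto_nhdsWithin_of_tendsto_nhds hhalf)
    (tendsto_reflectionPrimitive_one k)
  rw [intervalIntegral.integral_sub hg_refl (hT.const_mul 2), integral_add_comp_one_sub hg,
    intervalIntegral.integral_const_mul, integral_log_mul_one_sub_pow_sub_div,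
    reflectionPrimitive_half] at hFTC
  linarith

lemma intervalIntegrable_mul_sub_mul_log_mul_one_sub_pow {f : ℝ → ℝ}
    (hf : DifferentiableOn ℝ f (Ioi 0)) (hf1 : f 1 = 0) (k : ℕ) :
    IntervalIntegrable (fun p ↦ f p * (1 / (1 - p) - 1 / p) * Real.log (p * (1 - p)) ^ k)
      volume (1 / 2) 1 := by
  have hw : ContinuousOn (fun p ↦ -dslope f 1 p - f p * (1 / p)) (Ioi 0) := by
    have hnhds : Ioi (0 : ℝ) ∈ 𝓝 1 := Ioi_mem_nhds one_pos
    refine ((continuousOn_dslope hnhds).2 ⟨hf.continuousOn, hf.differentiableAt hnhds⟩).neg.sub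
      (hf.continuousOn.mul (continuousOn_const.div continuousOn_id fun p hp ↦ ?_))
    exact (mem_Ioi.1 hp).ne'
  refine (intervalIntegrable_mul_log_mul_one_sub_pow hw k).congr_uIoo fun p hp ↦ ?_
  rw [uIoo_of_le (by norm_num)] at hp
  have hp1 : p - 1 ≠ 0 := (sub_neg.2 hp.2).ne
  have hq1 : 1 - p ≠ 0 := (sub_pos.2 hp.2).ne'
  have hslope : dslope f 1 p = -(f p * (1 / (1 - p))) := by
    rw [dslope_of_ne f hp.2.ne, slope_def_field, hf1]
    field_simp
    ring
  simp only [hslope]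
  ring

lemma integral_deriv_mul_log_mul_one_sub_pow_succ {f f' : ℝ → ℝ}
    (hf : ∀ p ∈ Ioi 0, HasDerivAt f (f' p) p) (hf' : ContinuousOn f' (Ioi 0)) (hf1 : f 1 = 0)
    (k : ℕ) :
    ∫ p in (1 / 2 : ℝ)..1, f' p * Real.log (p * (1 - p)) ^ (k + 1) =
      (k + 1) * (∫ p in (1 / 2 : ℝ)..1,
        f p * (1 / (1 - p) - 1 / p) * Real.log (p * (1 - p)) ^ k) -
      f (1 / 2) * Real.log (1 / 4) ^ (k + 1) := by
  have hint := intervalIntegrable_mul_log_mul_one_sub_pow hf' (k + 1)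
  have hint' := intervalIntegrable_mul_sub_mul_log_mul_one_sub_pow
    (fun p hp ↦ (hf p hp).differentiableAt.differentiableWithinAt) hf1 k
  have hderiv {p : ℝ} (hp : p ∈ Ioo (0 : ℝ) 1) :
      HasDerivAt (fun p ↦ f p * Real.log (p * (1 - p)) ^ (k + 1))
        (f' p * Real.log (p * (1 - p)) ^ (k + 1) -
          (k + 1) * (f p * (1 / (1 - p) - 1 / p) * Real.log (p * (1 - p)) ^ k)) p := by
    refine ((hf p hp.1).fun_mul ((hasDerivAt_log_mul_one_sub hp).fun_pow (k + 1))).congr_deriv ?_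
    rw [Nat.add_sub_cancel]
    push_cast
    ring
  have hhalf := (hderiv (p := 1 / 2) (by norm_num)).continuousAt.tendsto
  have hFTC := intervalIntegral.integral_eq_sub_of_hasDerivAt_of_tendsto (by norm_num)
    (fun p hp ↦ hderiv ⟨one_half_pos.trans hp.1, hp.2⟩)
    (hint.sub (hint'.const_mul _)) (tendsto_nhdsWithin_of_tendsto_nhds hhalf)
    (tendsto_mul_log_mul_one_sub_pow (hf 1 (mem_Ioi.2 one_pos)).differentiableAt hf1 (k + 1))
  rw [intervalIntegral.integral_sub hint (hint'.const_mul _),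
    intervalIntegral.integral_const_mul] at hFTC
  norm_num at hFTC ⊢
  linarith

lemma continuousOn_one_div_pow_Ioi (n : ℕ) : ContinuousOn (fun p : ℝ ↦ 1 / p ^ n) (Ioi 0) :=
  continuousOn_const.div (continuousOn_id.pow n) fun _ hp ↦ pow_ne_zero n (mem_Ioi.1 hp).ne'

lemma integral_two_div_sub_mul_log_mul_one_sub_pow (k : ℕ) :
    ∫ p in (1 / 2 : ℝ)..1, (2 / p - 1 / p ^ 2) * Real.log (p * (1 - p)) ^ k =
      2 * (∫ p in (1 / 2 : ℝ)..1, 1 / p * Real.log (p * (1 - p)) ^ k) -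
        ∫ p in (1 / 2 : ℝ)..1, 1 / p ^ 2 * Real.log (p * (1 - p)) ^ k := by
  have h₁ := intervalIntegrable_mul_log_mul_one_sub_pow
    (by simpa only [pow_one] using continuousOn_one_div_pow_Ioi 1) k
  have h₂ := intervalIntegrable_mul_log_mul_one_sub_pow (continuousOn_one_div_pow_Ioi 2) k
  rw [← intervalIntegral.integral_const_mul, ← intervalIntegral.integral_sub (h₁.const_mul 2) h₂]
  congr with p
  ring

lemma integral_one_div_sq_mul_log_mul_one_sub_pow_succ (k : ℕ) :
    ∫ p in (1 / 2 : ℝ)..1, 1 / p ^ 2 * Real.log (p * (1 - p)) ^ (k + 1) =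
      Real.log (1 / 4) ^ (k + 1) -
        (k + 1) * ∫ p in (1 / 2 : ℝ)..1, (2 / p - 1 / p ^ 2) * Real.log (p * (1 - p)) ^ k := by
  have hderiv : ∀ p ∈ Ioi (0 : ℝ), HasDerivAt (fun p ↦ 1 - p⁻¹) (1 / p ^ 2) p := fun p hp ↦
    ((hasDerivAt_inv (mem_Ioi.1 hp).ne').const_sub 1).congr_deriv (by ring)
  have hparts := integral_deriv_mul_log_mul_one_sub_pow_succ hderiv
    (continuousOn_one_div_pow_Ioi 2) (by norm_num) k
  have hintegrand : ∫ p in (1 / 2 : ℝ)..1,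
      (1 - p⁻¹) * (1 / (1 - p) - 1 / p) * Real.log (p * (1 - p)) ^ k =
        -∫ p in (1 / 2 : ℝ)..1, (2 / p - 1 / p ^ 2) * Real.log (p * (1 - p)) ^ k := by
    rw [← intervalIntegral.integral_neg]
    refine intervalIntegral.integral_congr_Ioo_of_le (by norm_num) fun p hp ↦ ?_
    have hp0 : p ≠ 0 := (one_half_pos.trans hp.1).ne'
    have hq0 : 1 - p ≠ 0 := (sub_pos.2 hp.2).ne'
    field_simp
    ring
  rw [hparts, hintegrand]
  norm_num
  ring

lemma nielsenIntegral_zero_zero : nielsenIntegral 0 0 = -(Real.pi ^ 2 / 6) := by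
  rw [nielsenIntegral_zero_left]
  norm_num [riemannZeta_two, ← Complex.ofReal_pow]

lemma nielsenIntegral_zero_one : nielsenIntegral 0 1 = 2 * (riemannZeta 3).re := by
  rw [nielsenIntegral_zero_left]
  norm_num

lemma nielsenIntegral_zero_two : nielsenIntegral 0 2 = -(Real.pi ^ 4 / 15) := by
  rw [nielsenIntegral_zero_left]
  norm_num [riemannZeta_four, ← Complex.ofReal_pow, Nat.factorial]
  ring

lemma nielsenIntegral_one_zero : nielsenIntegral 1 0 = (riemannZeta 3).re := by
  have hsymm := nielsenIntegral_symm 0 1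
  rw [nielsenIntegral_zero_one] at hsymm
  norm_num at hsymm
  exact hsymm.symm

lemma nielsenIntegral_two_zero : nielsenIntegral 2 0 = -(Real.pi ^ 4 / 45) := by
  have hsymm := nielsenIntegral_symm 0 2
  rw [nielsenIntegral_zero_two] at hsymm
  norm_num at hsymm
  linarith

lemma log_one_div_four : Real.log (1 / 4) = -(2 * Real.log 2) := by
  rw [one_div, Real.log_inv, show (4 : ℝ) = 2 ^ 2 by norm_num, Real.log_pow, Nat.cast_ofNat]

lemma integral_two_div_sub_mul_log_mul_one_sub_pow_zero :
    ∫ p in (1 / 2 : ℝ)..1, (2 / p - 1 / p ^ 2) * Real.log (p * (1 - p)) ^ 0 =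
      2 * Real.log 2 - 1 := by
  have hinv_sq : ∫ p in (1 / 2 : ℝ)..1, 1 / p ^ 2 * Real.log (p * (1 - p)) ^ 0 = 1 := by
    have h := integral_zpow (a := 1 / 2) (b := 1) (n := -2)
      (Or.inr ⟨by norm_num, notMem_uIcc_of_lt (by norm_num) one_pos⟩)
    norm_num at h
    simpa [zpow_neg, zpow_ofNat] using h
  rw [integral_two_div_sub_mul_log_mul_one_sub_pow, two_mul_integral_log_mul_one_sub_pow_div,
    hinv_sq, log_one_div_four]
  norm_num

lemma integral_two_div_sub_mul_log_mul_one_sub_pow_succ (k : ℕ) :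
    ∫ p in (1 / 2 : ℝ)..1, (2 / p - 1 / p ^ 2) * Real.log (p * (1 - p)) ^ (k + 1) =
      ∑ m ∈ Finset.range (k + 1), (k + 1).choose (m + 1) * nielsenIntegral (k - m) m -
        Real.log (1 / 4) ^ (k + 2) / (k + 2) - Real.log (1 / 4) ^ (k + 1) +
        (k + 1) * ∫ p in (1 / 2 : ℝ)..1, (2 / p - 1 / p ^ 2) * Real.log (p * (1 - p)) ^ k := by
  rw [integral_two_div_sub_mul_log_mul_one_sub_pow, two_mul_integral_log_mul_one_sub_pow_div,
    integral_one_div_sq_mul_log_mul_one_sub_pow_succ]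
  simp only [Nat.add_sub_add_right]
  push_cast
  ring

lemma integral_two_div_sub_mul_log_mul_one_sub_pow_three :
    ∫ p in (1 / 2 : ℝ)..1, (2 / p - 1 / p ^ 2) * Real.log (p * (1 - p)) ^ 3 =
      -(3 * Real.pi ^ 4 / 20) + 12 * (riemannZeta 3).re - Real.pi ^ 2 - 4 * Real.log 2 ^ 4 +
        16 * Real.log 2 ^ 3 - 24 * Real.log 2 ^ 2 + 24 * Real.log 2 - 6 := by
  rw [integral_two_div_sub_mul_log_mul_one_sub_pow_succ,
    integral_two_div_sub_mul_log_mul_one_sub_pow_succ,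
    integral_two_div_sub_mul_log_mul_one_sub_pow_succ,
    integral_two_div_sub_mul_log_mul_one_sub_pow_zero, log_one_div_four]
  norm_num [Finset.sum_range_succ, Nat.choose, nielsenIntegral_zero_zero, nielsenIntegral_zero_one,
    nielsenIntegral_one_zero, nielsenIntegral_zero_two, nielsenIntegral_one_one,
    nielsenIntegral_two_zero]
  ring

/-! ### Moments of the branches of `etaLog` -/

lemma etaLog_of_nonpos {s : ℝ} (hs : s ≤ 0) : etaLog s = 6 / Real.pi ^ 2 * Real.exp (2 * s) :=
  if_pos hs

lemma etaLog_of_mem_Ioc {s : ℝ} (hs : s ∈ Ioc 0 (Real.log 2)) :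
    etaLog s = 6 / Real.pi ^ 2 * (-Real.exp (2 * s) + 2 + 4 * s) := by
  rw [etaLog, if_neg hs.1.not_ge, if_pos hs.2]

lemma etaLog_of_log_two_lt {s : ℝ} (hs : Real.log 2 < s) :
    etaLog s = 6 / Real.pi ^ 2 * (-Real.exp (2 * s) + 2
      + 2 * Real.exp (2 * s) * Real.sqrt (1 / 4 - Real.exp (-2 * s))
      - 4 * Real.log (1 / 2 + Real.sqrt (1 / 4 - Real.exp (-2 * s)))) := by
  rw [etaLog, if_neg ((Real.log_pos one_lt_two).trans hs).not_ge, if_neg hs.not_ge]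

lemma integral_Iic_sq_mul_etaLog :
    ∫ s in Iic (0 : ℝ), s ^ 2 * etaLog s = 6 / Real.pi ^ 2 * (1 / 4) := by
  have hbranch : EqOn (fun s ↦ s ^ 2 * etaLog s)
      (fun s ↦ 6 / Real.pi ^ 2 * (s ^ 2 * Real.exp (2 * s))) (Iic 0) := fun s hs ↦ by
    simp only [etaLog_of_nonpos hs]
    ring
  rw [setIntegral_congr_fun measurableSet_Iic hbranch, integral_const_mul,
    integral_Iic_pow_mul_exp 2 two_pos]
  norm_num

lemma hasDerivAt_sq_mul_middle_primitive (s : ℝ) :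
    HasDerivAt
      (fun s : ℝ ↦ -(Real.exp (2 * s) * (s ^ 2 / 2 - s / 2 + 1 / 4)) + 2 / 3 * s ^ 3 + s ^ 4)
      (s ^ 2 * (-Real.exp (2 * s) + 2 + 4 * s)) s := by
  have hs := hasDerivAt_id' s
  refine (((((hs.const_mul 2).exp.fun_mul ((((hs.fun_pow 2).div_const 2).fun_sub
    (hs.div_const 2)).add_const (1 / 4))).fun_neg.fun_add
    ((hs.fun_pow 3).const_mul (2 / 3))).fun_add (hs.fun_pow 4))).congr_deriv ?_
  push_cast
  ring

lemma exp_neg_two_mul_log_two : Real.exp (-2 * Real.log 2) = 1 / 4 := by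
  rw [neg_mul, ← log_one_div_four, Real.exp_log (by norm_num)]

lemma sq_mul_etaLog_eqOn_Ioc :
    EqOn (fun s ↦ 6 / Real.pi ^ 2 * (s ^ 2 * (-Real.exp (2 * s) + 2 + 4 * s)))
      (fun s ↦ s ^ 2 * etaLog s) (Ioc 0 (Real.log 2)) := fun s hs ↦ by
  simp only [etaLog_of_mem_Ioc hs]
  ring

lemma integrableOn_Ioc_sq_mul_etaLog :
    IntegrableOn (fun s ↦ s ^ 2 * etaLog s) (Ioc 0 (Real.log 2)) := by
  refine IntegrableOn.congr_fun ?_ sq_mul_etaLog_eqOn_Ioc measurableSet_Ioc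
  exact (Continuous.integrableOn_Icc (by fun_prop)).mono_set Ioc_subset_Icc_self

lemma integral_Ioc_sq_mul_etaLog :
    ∫ s in Ioc 0 (Real.log 2), s ^ 2 * etaLog s =
      6 / Real.pi ^ 2 * (Real.log 2 ^ 4 + 2 / 3 * Real.log 2 ^ 3 - 2 * Real.log 2 ^ 2 +
        2 * Real.log 2 - 3 / 4) := by
  have hexp : Real.exp (2 * Real.log 2) = 4 := by
    rw [mul_comm, Real.exp_mul, Real.exp_log two_pos]
    norm_num
  rw [← setIntegral_congr_fun measurableSet_Ioc sq_mul_etaLog_eqOn_Ioc, integral_const_mul,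
    ← intervalIntegral.integral_of_le (Real.log_nonneg one_le_two),
    intervalIntegral.integral_eq_sub_of_hasDerivAt
      (fun s _ ↦ hasDerivAt_sq_mul_middle_primitive s)
      (Continuous.intervalIntegrable (by fun_prop) _ _), hexp]
  norm_num
  ring

/-- The change of variables `s = -log(p(1-p)) / 2`, inverse to `p = 1/2 + √(1/4 - exp(-2s))`; it
removes the square root from the branch of `etaLog` on `(log 2, ∞)`. -/
noncomputable def tailParam (p : ℝ) : ℝ := -(1 / 2) * Real.log (p * (1 - p))

lemma exp_neg_two_mul_tailParam {p : ℝ} (hp : p ∈ Ioo (0 : ℝ) 1) :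
    Real.exp (-2 * tailParam p) = p * (1 - p) := by
  rw [tailParam, ← mul_assoc, show (-2 : ℝ) * -(1 / 2) = 1 by norm_num, one_mul,
    Real.exp_log (mul_pos hp.1 (sub_pos.2 hp.2))]

lemma sqrt_quarter_sub_mul_one_sub {p : ℝ} (hp : 1 / 2 ≤ p) :
    Real.sqrt (1 / 4 - p * (1 - p)) = p - 1 / 2 := by
  rw [show 1 / 4 - p * (1 - p) = (p - 1 / 2) ^ 2 by ring, Real.sqrt_sq (sub_nonneg.2 hp)]

lemma Ioo_half_one_subset_Ioo_zero_one : Ioo (1 / 2 : ℝ) 1 ⊆ Ioo 0 1 :=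
  Ioo_subset_Ioo_left (by norm_num)

lemma mapsTo_tailParam : MapsTo tailParam (Ioo (1 / 2) 1) (Ioi (Real.log 2)) := fun p hp ↦ by
  have hexp : Real.exp (-2 * tailParam p) < Real.exp (-2 * Real.log 2) := by
    rw [exp_neg_two_mul_tailParam (Ioo_half_one_subset_Ioo_zero_one hp), exp_neg_two_mul_log_two]
    nlinarith [sq_pos_of_pos (sub_pos.2 hp.1)]
  rw [Real.exp_lt_exp] at hexp
  exact mem_Ioi.2 (by linarith)

lemma mapsTo_half_add_sqrt : MapsTo (fun s ↦ 1 / 2 + Real.sqrt (1 / 4 - Real.exp (-2 * s)))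
    (Ioi (Real.log 2)) (Ioo (1 / 2) 1) := fun s hs ↦ by
  have hlt : Real.exp (-2 * s) < 1 / 4 := by
    rw [← exp_neg_two_mul_log_two, Real.exp_lt_exp]
    linarith [mem_Ioi.1 hs]
  have hsqrt : Real.sqrt (1 / 4 - Real.exp (-2 * s)) < 1 / 2 := by
    rw [Real.sqrt_lt' one_half_pos]
    linarith [Real.exp_pos (-2 * s)]
  have := Real.sqrt_pos.2 (sub_pos.2 hlt)
  constructor <;> linarith

lemma invOn_tailParam : InvOn (fun s ↦ 1 / 2 + Real.sqrt (1 / 4 - Real.exp (-2 * s))) tailParam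
    (Ioo (1 / 2) 1) (Ioi (Real.log 2)) := by
  refine ⟨fun p hp ↦ ?_, fun s hs ↦ ?_⟩
  · simp only [exp_neg_two_mul_tailParam (Ioo_half_one_subset_Ioo_zero_one hp),
      sqrt_quarter_sub_mul_one_sub hp.1.le, add_sub_cancel]
  · have hle : 0 ≤ 1 / 4 - Real.exp (-2 * s) := by
      rw [sub_nonneg, ← exp_neg_two_mul_log_two, Real.exp_le_exp]
      linarith [mem_Ioi.1 hs]
    have hmul : (1 / 2 + Real.sqrt (1 / 4 - Real.exp (-2 * s))) *
        (1 - (1 / 2 + Real.sqrt (1 / 4 - Real.exp (-2 * s)))) = Real.exp (-2 * s) := by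
      linarith [Real.sq_sqrt hle]
    simp only [tailParam, hmul, Real.log_exp]
    ring

lemma bijOn_tailParam : BijOn tailParam (Ioo (1 / 2) 1) (Ioi (Real.log 2)) :=
  invOn_tailParam.bijOn mapsTo_tailParam mapsTo_half_add_sqrt

lemma hasDerivAt_tailParam {p : ℝ} (hp : p ∈ Ioo (0 : ℝ) 1) :
    HasDerivAt tailParam (1 / 2 * (1 / (1 - p) - 1 / p)) p :=
  ((hasDerivAt_log_mul_one_sub hp).const_mul (-(1 / 2))).congr_deriv (by ring)

lemma etaLog_tailParam {p : ℝ} (hp : p ∈ Ioo (1 / 2 : ℝ) 1) :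
    etaLog (tailParam p) = 12 / Real.pi ^ 2 * (1 - p⁻¹ - 2 * Real.log p) := by
  have hp01 := Ioo_half_one_subset_Ioo_zero_one hp
  have hp0 : p ≠ 0 := hp01.1.ne'
  have hq0 : 1 - p ≠ 0 := (sub_pos.2 hp.2).ne'
  have hexp : Real.exp (2 * tailParam p) = (p * (1 - p))⁻¹ := by
    rw [← exp_neg_two_mul_tailParam hp01, ← Real.exp_neg, neg_mul, neg_neg]
  rw [etaLog_of_log_two_lt (mapsTo_tailParam hp), exp_neg_two_mul_tailParam hp01, hexp,
    sqrt_quarter_sub_mul_one_sub hp.1.le, add_sub_cancel]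
  field_simp
  ring

lemma abs_deriv_tailParam_smul_sq_mul_etaLog {p : ℝ} (hp : p ∈ Ioo (1 / 2 : ℝ) 1) :
    |1 / 2 * (1 / (1 - p) - 1 / p)| • (tailParam p ^ 2 * etaLog (tailParam p)) =
      3 / (2 * Real.pi ^ 2) * ((1 - p⁻¹ - 2 * Real.log p) * (1 / (1 - p) - 1 / p) *
        Real.log (p * (1 - p)) ^ 2) := by
  have hmono : 1 / p ≤ 1 / (1 - p) :=
    one_div_le_one_div_of_le (sub_pos.2 hp.2) (by linarith [hp.1])
  rw [abs_of_nonneg (mul_nonneg one_half_pos.le (sub_nonneg.2 hmono)), etaLog_tailParam hp,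
    tailParam, smul_eq_mul]
  ring

lemma hasDerivAt_one_sub_inv_sub_two_mul_log {p : ℝ} (hp : p ≠ 0) :
    HasDerivAt (fun p ↦ 1 - p⁻¹ - 2 * Real.log p) (1 / p ^ 2 - 2 / p) p :=
  (((hasDerivAt_inv hp).const_sub 1).fun_sub ((Real.hasDerivAt_log hp).const_mul 2)).congr_deriv
    (by ring)

lemma integrableOn_Ioi_sq_mul_etaLog :
    IntegrableOn (fun s ↦ s ^ 2 * etaLog s) (Ioi (Real.log 2)) := by
  have hint := intervalIntegrable_mul_sub_mul_log_mul_one_sub_pow (fun p hp ↦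
    (hasDerivAt_one_sub_inv_sub_two_mul_log
      (mem_Ioi.1 hp).ne').differentiableAt.differentiableWithinAt) (by norm_num) 2
  rw [intervalIntegrable_iff_integrableOn_Ioo_of_le (by norm_num)] at hint
  rw [← bijOn_tailParam.image_eq, integrableOn_image_iff_integrableOn_abs_deriv_smul
    measurableSet_Ioo (fun p hp ↦ (hasDerivAt_tailParam
      (Ioo_half_one_subset_Ioo_zero_one hp)).hasDerivWithinAt) bijOn_tailParam.injOn]
  exact IntegrableOn.congr_fun (hint.const_mul _)
    (fun p hp ↦ (abs_deriv_tailParam_smul_sq_mul_etaLog hp).symm) measurableSet_Ioo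

lemma integral_Ioi_sq_mul_etaLog_eq :
    ∫ s in Ioi (Real.log 2), s ^ 2 * etaLog s =
      3 / (2 * Real.pi ^ 2) * ∫ p in (1 / 2 : ℝ)..1,
        (1 - p⁻¹ - 2 * Real.log p) * (1 / (1 - p) - 1 / p) * Real.log (p * (1 - p)) ^ 2 := by
  rw [← bijOn_tailParam.image_eq, integral_image_eq_integral_abs_deriv_smul measurableSet_Ioo
    (fun p hp ↦ (hasDerivAt_tailParam
      (Ioo_half_one_subset_Ioo_zero_one hp)).hasDerivWithinAt) bijOn_tailParam.injOn,
    setIntegral_congr_fun measurableSet_Ioo fun p hp ↦ abs_deriv_tailParam_smul_sq_mul_etaLog hp,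
    integral_const_mul, ← integral_Ioc_eq_integral_Ioo,
    ← intervalIntegral.integral_of_le (by norm_num)]

lemma integral_Ioi_sq_mul_etaLog :
    ∫ s in Ioi (Real.log 2), s ^ 2 * etaLog s =
      6 / Real.pi ^ 2 * (Real.pi ^ 4 / 80 + Real.pi ^ 2 / 12 - (riemannZeta 3).re + 1 / 2 -
        2 * Real.log 2 + 2 * Real.log 2 ^ 2 - 2 / 3 * Real.log 2 ^ 3 - Real.log 2 ^ 4) := by
  have hcont : ContinuousOn (fun p : ℝ ↦ 1 / p ^ 2 - 2 / p) (Ioi 0) :=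
    (continuousOn_one_div_pow_Ioi 2).sub
      (continuousOn_const.div continuousOn_id fun p hp ↦ (mem_Ioi.1 hp).ne')
  have hparts := integral_deriv_mul_log_mul_one_sub_pow_succ
    (fun p hp ↦ hasDerivAt_one_sub_inv_sub_two_mul_log (mem_Ioi.1 hp).ne') hcont (by norm_num) 2
  have hneg : ∫ p in (1 / 2 : ℝ)..1, (1 / p ^ 2 - 2 / p) * Real.log (p * (1 - p)) ^ 3 =
      -∫ p in (1 / 2 : ℝ)..1, (2 / p - 1 / p ^ 2) * Real.log (p * (1 - p)) ^ 3 := by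
    rw [← intervalIntegral.integral_neg]
    congr with p
    ring
  have hlog : Real.log (1 / 2) = -Real.log 2 := by rw [one_div, Real.log_inv]
  rw [hneg, integral_two_div_sub_mul_log_mul_one_sub_pow_three, log_one_div_four, hlog] at hparts
  norm_num at hparts
  rw [integral_Ioi_sq_mul_etaLog_eq]
  linear_combination (norm := skip) -(1 / (2 * Real.pi ^ 2)) * hparts
  norm_num
  field_simp
  ring

lemma integrableOn_Iic_sq_mul_etaLog : IntegrableOn (fun s ↦ s ^ 2 * etaLog s) (Iic 0) :=
  Integrable.of_integral_ne_zero (integral_Iic_sq_mul_etaLog.trans_ne (by positivity))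

theorem etaLog_second_moment :
    (∫ s : ℝ, s ^ 2 * etaLog s) =
      3 * Real.pi ^ 2 / 40 + 1 / 2 - 6 * (riemannZeta 3).re / Real.pi ^ 2 := by
  have hunion : Ioc 0 (Real.log 2) ∪ Ioi (Real.log 2) = Ioi 0 :=
    Ioc_union_Ioi_eq_Ioi (Real.log_nonneg one_le_two)
  have hpos : IntegrableOn (fun s ↦ s ^ 2 * etaLog s) (Ioi 0) :=
    hunion ▸ integrableOn_Ioc_sq_mul_etaLog.union integrableOn_Ioi_sq_mul_etaLog
  rw [← intervalIntegral.integral_Iic_add_Ioi integrableOn_Iic_sq_mul_etaLog hpos, ← hunion,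
    setIntegral_union (Ioc_disjoint_Ioi le_rfl) measurableSet_Ioi integrableOn_Ioc_sq_mul_etaLog
      integrableOn_Ioi_sq_mul_etaLog,
    integral_Iic_sq_mul_etaLog, integral_Ioc_sq_mul_etaLog, integral_Ioi_sq_mul_etaLog]
  have hpi := Real.pi_ne_zero
  field_simp
  ring
end

section
/- The third moment of η_log satisfies μ_3 = ∫_ℝ s³·η_log(s) ds = (9/π² − 3/2)·ζ(3) + (27/π²)·ζ(5) − 3/4 − 9π²/80, where ζ is the Riemann zeta function. -/
open MeasureTheory

/-!
On each of its three pieces the density `etaLog` can be integrated against `exp (t * s)` in closed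
form: on `s > log 2` the substitution `exp (-2 * s) = x * (1 - x)` turns the integral into a Beta
integral. The boundary terms at `log 2` cancel, and the moment generating function `M` satisfies
`t² (2 + t) M(t) = (48 / π²) (1 - (1 - t) B(1 - t / 2, 1 - t / 2))` for `|t| < 2`.
For `t < 1` the Beta term is `exp (2 log Γ(1 - t / 2) - log Γ(1 - t))`, and
`log Γ(1 - x) = γ x + ∑ ζ(k) xᵏ / k` over `k ≥ 2`, so Euler's constant cancels and the fifth-order
expansion of the right-hand side at `0` gives `M` up to order three. The third moment is the third
derivative of `M` at `0`.
-/

section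

open Filter Topology Asymptotics

variable {𝕜 : Type*} [NontriviallyNormedField 𝕜]

lemma isBigO_pow_of_pow_mul {g : 𝕜 → 𝕜} {m n : ℕ}
    (h : (fun t => t ^ m * g t) =O[𝓝[≠] 0] fun t => t ^ (m + n)) :
    g =O[𝓝[≠] 0] fun t => t ^ n := by
  refine ((isBigO_refl (fun t : 𝕜 => (t ^ m)⁻¹) (𝓝[≠] 0)).mul h).congr' ?_ ?_ <;>
    filter_upwards [self_mem_nhdsWithin] with t ht
  · exact inv_mul_cancel_left₀ (pow_ne_zero m ht) _
  · rw [pow_add, inv_mul_cancel_left₀ (pow_ne_zero m ht)]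

lemma natCast_le_analyticOrderAt_of_isBigO {f : 𝕜 → 𝕜} {n : ℕ} (hf : AnalyticAt 𝕜 f 0)
    (h : f =O[𝓝[≠] 0] fun t => t ^ n) : (n : ℕ∞) ≤ analyticOrderAt f 0 := by
  by_contra! hlt
  obtain ⟨m, hm⟩ := ENat.ne_top_iff_exists.1 hlt.ne_top
  obtain ⟨g, hg, hg0, hfg⟩ := (hf.analyticOrderAt_eq_natCast).1 hm.symm
  obtain ⟨k, rfl⟩ := Nat.exists_eq_add_of_lt (by exact_mod_cast hm ▸ hlt : m < n)
  have hg_isBigO : g =O[𝓝[≠] 0] fun t => t ^ (k + 1) := by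
    refine isBigO_pow_of_pow_mul (m := m) (h.congr' ?_ .rfl)
    filter_upwards [hfg.filter_mono nhdsWithin_le_nhds] with t hft
    rw [hft, sub_zero, smul_eq_mul]
  have hpow : Tendsto (fun t : 𝕜 => t ^ (k + 1)) (𝓝[≠] 0) (𝓝 0) := by
    simpa using ((continuous_pow (M := 𝕜) (k + 1)).tendsto 0).mono_left nhdsWithin_le_nhds
  exact hg0 (tendsto_nhds_unique (hg.continuousAt.tendsto.mono_left nhdsWithin_le_nhds)
    (hg_isBigO.trans_tendsto hpow))

lemma iteratedDeriv_sum_mul_pow_zero {n : ℕ} (a : Fin n → 𝕜) (k : Fin n) :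
    iteratedDeriv k (fun t => ∑ i, a i * t ^ (i : ℕ)) 0 = (k : ℕ).factorial * a k := by
  rw [iteratedDeriv_fun_sum fun i _ => by fun_prop]
  simp only [iteratedDeriv_const_mul_field, iteratedDeriv_fun_pow_zero]
  simp [Fin.val_inj, mul_comm]

lemma iteratedDeriv_zero_of_isBigO [CharZero 𝕜] [CompleteSpace 𝕜] {f : 𝕜 → 𝕜} {n : ℕ}
    {a : Fin n → 𝕜} (hf : AnalyticAt 𝕜 f 0)
    (h : (fun t => f t - ∑ i, a i * t ^ (i : ℕ)) =O[𝓝[≠] 0] fun t => t ^ n) (k : Fin n) :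
    iteratedDeriv k f 0 = (k : ℕ).factorial * a k := by
  have hpoly : AnalyticAt 𝕜 (fun t => ∑ i, a i * t ^ (i : ℕ)) 0 := by fun_prop
  have hzero := (natCast_le_analyticOrderAt_iff_iteratedDeriv_eq_zero (hf.fun_sub hpoly)).1
    (natCast_le_analyticOrderAt_of_isBigO (hf.fun_sub hpoly) h) k k.isLt
  rw [iteratedDeriv_fun_sub hf.contDiffAt hpoly.contDiffAt, sub_eq_zero] at hzero
  rw [hzero, iteratedDeriv_sum_mul_pow_zero a k]

lemma pow_mul_isBigO_pow {r : 𝕜 → 𝕜} (hr : ContinuousAt r 0) (n : ℕ) :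
    (fun t => t ^ n * r t) =O[𝓝 0] fun t => t ^ n := by
  simpa only [mul_one] using (isBigO_refl _ _).mul (hr.tendsto.isBigO_one 𝕜)

lemma isBigO_of_sq_mul_two_add_mul {f : ℝ → ℝ} {a b c d : ℝ}
    (h : (fun t => t ^ 2 * (2 + t) * f t - (a * t ^ 2 + b * t ^ 3 + c * t ^ 4 + d * t ^ 5))
      =O[𝓝[≠] 0] fun t => t ^ 6) :
    (fun t => f t - (a / 2 + (b / 2 - a / 4) * t + (c / 2 - b / 4 + a / 8) * t ^ 2
      + (d / 2 - c / 4 + b / 8 - a / 16) * t ^ 3)) =O[𝓝[≠] 0] fun t => t ^ 4 := by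
  have hmul : (fun t => (2 + t) * (f t - (a / 2 + (b / 2 - a / 4) * t
      + (c / 2 - b / 4 + a / 8) * t ^ 2 + (d / 2 - c / 4 + b / 8 - a / 16) * t ^ 3)))
      =O[𝓝[≠] 0] fun t => t ^ 4 := by
    refine isBigO_pow_of_pow_mul (m := 2) ((h.sub ((isBigO_refl _ _).const_mul_left
      (d / 2 - c / 4 + b / 8 - a / 16))).congr_left fun t => ?_)
    ring
  have hinv : (fun t : ℝ => (2 + t)⁻¹) =O[𝓝[≠] 0] fun _ => (1 : ℝ) := by
    have : ContinuousAt (fun t : ℝ => (2 + t)⁻¹) 0 := by fun_prop (disch := norm_num)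
    exact (this.tendsto.mono_left nhdsWithin_le_nhds).isBigO_one ℝ
  refine (hinv.mul hmul).congr' ?_ (.of_forall fun t => one_mul _)
  have hne : ∀ᶠ t in 𝓝[≠] (0 : ℝ), -2 < t := nhdsWithin_le_nhds (Ioi_mem_nhds (by norm_num))
  filter_upwards [hne] with t ht
  exact inv_mul_cancel_left₀ (by linarith) _

lemma iteratedDeriv_three_zero_of_isBigO {f : ℝ → ℝ} {a b c d : ℝ} (hf : AnalyticAt ℝ f 0)
    (h : (fun t => f t - (a + b * t + c * t ^ 2 + d * t ^ 3)) =O[𝓝[≠] 0] fun t => t ^ 4) :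
    iteratedDeriv 3 f 0 = 6 * d := by
  have hsum : (fun t => f t - ∑ i, ![a, b, c, d] i * t ^ (i : ℕ)) =O[𝓝[≠] 0] fun t => t ^ 4 := by
    simpa [Fin.sum_univ_four] using h
  simpa [Nat.factorial] using iteratedDeriv_zero_of_isBigO hf hsum 3

end

section

open Filter Topology Asymptotics Finset ProbabilityTheory

lemma hasSum_one_div_nat_add_one_pow {k : ℕ} (hk : 1 < k) :
    HasSum (fun n : ℕ => 1 / ((n : ℝ) + 1) ^ k) (riemannZeta k).re := by
  have hsummable : Summable fun n : ℕ => 1 / (n : ℝ) ^ k := Real.summable_one_div_nat_pow.2 hk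
  have hzeta : riemannZeta k = ((∑' n : ℕ, 1 / (n : ℝ) ^ k : ℝ) : ℂ) := by
    rw [zeta_nat_eq_tsum_of_gt_one hk]
    push_cast
    rfl
  have h := (hasSum_nat_add_iff' 1).2 hsummable.hasSum
  rw [sum_range_one, Nat.cast_zero, zero_pow (by lia), div_zero, sub_zero] at h
  rw [hzeta, Complex.ofReal_re]
  exact_mod_cast h

lemma sum_neg_log_one_sub_div_sub {x : ℝ} (hx : x < 1) (n : ℕ) :
    ∑ m ∈ range (n + 1), (-Real.log (1 - x / (m + 1)) - x / (m + 1))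
      = Real.BohrMollerup.logGammaSeq (1 - x) n - x * (harmonic (n + 1) - Real.log (n + 1 : ℕ))
        + (1 - x) * (Real.log (n + 1) - Real.log n) := by
  have hlog (m : ℕ) : Real.log (1 - x / (m + 1)) = Real.log (1 - x + m) - Real.log (m + 1) := by
    have hpos : 0 < 1 - x + m := add_pos_of_pos_of_nonneg (sub_pos.2 hx) m.cast_nonneg
    rw [← Real.log_div hpos.ne' (by positivity)]
    congr 1
    field
  have hfact : ∑ m ∈ range (n + 1), Real.log (m + 1) = Real.log (n + 1) + Real.log n.factorial := by
    rw [← Real.log_prod fun m _ => by positivity, ← Real.log_mul (by positivity) (by positivity)]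
    exact_mod_cast congrArg (fun m : ℕ => Real.log m) (prod_range_add_one_eq_factorial (n + 1))
  have hharmonic : ∑ m ∈ range (n + 1), x / ((m : ℝ) + 1) = x * harmonic (n + 1) := by
    simp only [harmonic, Rat.cast_sum, mul_sum, div_eq_mul_inv]
    push_cast
    rfl
  simp only [sum_sub_distrib, sum_neg_distrib, hlog, hfact, hharmonic,
    Real.BohrMollerup.logGammaSeq]
  push_cast
  ring

lemma hasSum_log_Gamma_one_sub {x : ℝ} (hx : x < 1) :
    HasSum (fun n : ℕ => -Real.log (1 - x / (n + 1)) - x / (n + 1))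
      (Real.log (Real.Gamma (1 - x)) - Real.eulerMascheroniConstant * x) := by
  have hnonneg (n : ℕ) : 0 ≤ -Real.log (1 - x / (n + 1)) - x / (n + 1) := by
    have hlt : x / ((n : ℝ) + 1) < 1 := by
      rw [div_lt_one (by positivity)]
      exact hx.trans_le (le_add_of_nonneg_left n.cast_nonneg)
    linarith [Real.log_le_sub_one_of_pos (sub_pos.2 hlt)]
  rw [hasSum_iff_tendsto_nat_of_nonneg hnonneg, ← tendsto_add_atTop_iff_nat 1]
  simp only [sum_neg_log_one_sub_div_sub hx]
  have hgamma : Tendsto (fun n : ℕ => (harmonic (n + 1) : ℝ) - Real.log (n + 1 : ℕ)) atTop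
      (𝓝 Real.eulerMascheroniConstant) :=
    Real.tendsto_harmonic_sub_log.comp (tendsto_add_atTop_nat 1)
  have h := ((Real.BohrMollerup.tendsto_log_gamma (sub_pos.2 hx)).sub (hgamma.const_mul x)).add
    (Real.tendsto_log_nat_add_one_sub_log.const_mul (1 - x))
  rwa [mul_zero, add_zero, mul_comm x] at h

lemma abs_neg_log_one_sub_sub_sum_le {y : ℝ} (hy : |y| ≤ 1 / 2) (n : ℕ) :
    |-Real.log (1 - y) - y - ∑ i ∈ range n, y ^ (i + 2) / (i + 2 : ℕ)| ≤ 2 * |y| ^ (n + 2) := by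
  have h := Real.abs_log_sub_add_sum_range_le (hy.trans_lt one_half_lt_one) (n + 1)
  rw [sum_range_succ'] at h
  calc _ = |∑ i ∈ range n, y ^ (i + 1 + 1) / ((i + 1 : ℕ) + 1) + y ^ (0 + 1) / ((0 : ℕ) + 1)
        + Real.log (1 - y)| := by
        rw [← abs_neg]
        push_cast
        ring_nf
    _ ≤ |y| ^ (n + 2) / (1 - |y|) := h
    _ ≤ |y| ^ (n + 2) / (1 / 2) := by gcongr; linarith
    _ = 2 * |y| ^ (n + 2) := by ring

lemma log_Gamma_one_sub_isBigO (n : ℕ) :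
    (fun x => Real.log (Real.Gamma (1 - x)) - (Real.eulerMascheroniConstant * x
      + ∑ i ∈ range n, (riemannZeta (i + 2 : ℕ)).re / (i + 2 : ℕ) * x ^ (i + 2)))
      =O[𝓝 0] fun x => x ^ (n + 2) := by
  refine IsBigO.of_bound (2 * (riemannZeta (n + 2 : ℕ)).re) ?_
  filter_upwards [Metric.ball_mem_nhds (0 : ℝ) one_half_pos] with x hx
  rw [mem_ball_zero_iff, Real.norm_eq_abs] at hx
  have hzeta (i : ℕ) := hasSum_one_div_nat_add_one_pow (k := i + 2) (by lia)
  have hseries := (hasSum_log_Gamma_one_sub (x := x) (by linarith [le_abs_self x])).sub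
    (hasSum_sum (s := range n) fun i _ => (hzeta i).mul_right (x ^ (i + 2) / (i + 2 : ℕ)))
  have hbound := hseries.norm_le_of_bounded ((hzeta n).mul_left (2 * |x| ^ (n + 2))) fun m => by
    have hm : |x / ((m : ℝ) + 1)| ≤ 1 / 2 := by
      rw [abs_div, abs_of_pos (by positivity : (0 : ℝ) < m + 1), div_le_iff₀ (by positivity)]
      linarith [(Nat.cast_nonneg m : (0 : ℝ) ≤ m)]
    convert abs_neg_log_one_sub_sub_sum_le hm n using 1
    · rw [Real.norm_eq_abs]
      congr 3 with i
      rw [div_pow]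
      ring
    · rw [abs_div, abs_of_pos (by positivity : (0 : ℝ) < m + 1), div_pow]
      ring
  convert hbound using 1
  · congr 1
    simp only [div_mul_eq_mul_div, mul_div_assoc]
    ring
  · rw [norm_pow, Real.norm_eq_abs]
    ring

lemma one_sub_mul_beta_self_eq_exp {t : ℝ} (ht : t < 1) :
    (1 - t) * beta (1 - t / 2) (1 - t / 2)
      = Real.exp (2 * Real.log (Real.Gamma (1 - t / 2)) - Real.log (Real.Gamma (1 - t))) := by
  have hhalf : 0 < Real.Gamma (1 - t / 2) := Real.Gamma_pos_of_pos (by linarith)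
  have hone : 0 < Real.Gamma (1 - t) := Real.Gamma_pos_of_pos (by linarith)
  have hadd : Real.Gamma (1 - t / 2 + (1 - t / 2)) = (1 - t) * Real.Gamma (1 - t) := by
    rw [← Real.Gamma_add_one (by linarith)]
    ring_nf
  rw [Real.exp_sub, Real.exp_log hone, two_mul, Real.exp_add, Real.exp_log hhalf, beta, hadd,
    ← mul_div_assoc, mul_div_mul_left _ _ (sub_pos.2 ht).ne']

lemma two_mul_log_Gamma_sub_isBigO (n : ℕ) :
    (fun t => 2 * Real.log (Real.Gamma (1 - t / 2)) - Real.log (Real.Gamma (1 - t))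
      - ∑ i ∈ range n, (1 / 2 ^ (i + 1) - 1) * (riemannZeta (i + 2 : ℕ)).re / (i + 2 : ℕ)
        * t ^ (i + 2)) =O[𝓝 0] fun t => t ^ (n + 2) := by
  have hhalf : Tendsto (fun t : ℝ => t / 2) (𝓝 0) (𝓝 0) := by
    simpa using (continuous_id.div_const (2 : ℝ)).tendsto 0
  have hpow : (fun t : ℝ => (t / 2) ^ (n + 2)) =O[𝓝 0] fun t => t ^ (n + 2) :=
    IsBigO.of_bound' (.of_forall fun t => by
      rw [norm_pow, norm_pow, norm_div, Real.norm_two]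
      gcongr
      linarith [norm_nonneg t])
  have h := (((log_Gamma_one_sub_isBigO n).comp_tendsto hhalf).trans hpow).const_mul_left 2
  refine (h.sub (log_Gamma_one_sub_isBigO n)).congr_left fun t => ?_
  have hcoeff (i : ℕ) :
      (1 / 2 ^ (i + 1) - 1) * (riemannZeta (i + 2 : ℕ)).re / (i + 2 : ℕ) * t ^ (i + 2)
      = 2 * ((riemannZeta (i + 2 : ℕ)).re / (i + 2 : ℕ) * (t / 2) ^ (i + 2))
        - (riemannZeta (i + 2 : ℕ)).re / (i + 2 : ℕ) * t ^ (i + 2) := by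
    rw [div_pow]
    ring
  simp only [hcoeff, sum_sub_distrib, ← mul_sum, Function.comp_apply]
  ring

lemma exp_isBigO_pow_six {f : ℝ → ℝ} {a b c d : ℝ}
    (h : (fun t => f t - (a * t ^ 2 + b * t ^ 3 + c * t ^ 4 + d * t ^ 5))
      =O[𝓝 0] fun t => t ^ 6) :
    (fun t => Real.exp (f t) - (1 + a * t ^ 2 + b * t ^ 3 + (c + a ^ 2 / 2) * t ^ 4
      + (d + a * b) * t ^ 5)) =O[𝓝 0] fun t => t ^ 6 := by
  set p : ℝ → ℝ := fun t => a * t ^ 2 + b * t ^ 3 + c * t ^ 4 + d * t ^ 5 with hp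
  have hp_isBigO : p =O[𝓝 0] fun t => t ^ 2 :=
    (pow_mul_isBigO_pow (r := fun t => a + b * t + c * t ^ 2 + d * t ^ 3) (by fun_prop)
      2).congr_left fun t => by ring
  have hf_isBigO : f =O[𝓝 0] fun t => t ^ 2 :=
    ((h.trans (isLittleO_pow_pow (by norm_num)).isBigO).add hp_isBigO).congr_left fun t => by ring
  have hsq : Tendsto (fun t : ℝ => t ^ 2) (𝓝 0) (𝓝 0) := by
    simpa using (continuous_pow (M := ℝ) 2).tendsto 0
  have hexp : (fun t => Real.exp (f t) - (1 + f t + f t ^ 2 / 2)) =O[𝓝 0] fun t => t ^ 6 := by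
    have h3 := ((Real.exp_sub_sum_range_isBigO_pow 3).comp_tendsto
      (hf_isBigO.trans_tendsto hsq)).trans (hf_isBigO.pow 3)
    refine h3.congr (fun t => ?_) fun t => by ring
    simp [sum_range_succ]
  have hquad : (fun t => (f t - p t) * (1 + (f t + p t) / 2)) =O[𝓝 0] fun t => t ^ 6 := by
    have hbounded : (fun t => 1 + (f t + p t) / 2) =O[𝓝 0] fun _ => (1 : ℝ) :=
      ((((hf_isBigO.trans_tendsto hsq).add (hp_isBigO.trans_tendsto hsq)).div_const 2).const_add
        1).isBigO_one ℝ
    simpa only [mul_one] using h.mul hbounded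
  have hpoly : (fun t => t ^ 6 * (a * c + b ^ 2 / 2 + (a * d + b * c) * t
      + (b * d + c ^ 2 / 2) * t ^ 2 + c * d * t ^ 3 + d ^ 2 / 2 * t ^ 4)) =O[𝓝 0] fun t => t ^ 6 :=
    pow_mul_isBigO_pow (by fun_prop) 6
  refine ((hexp.add hquad).add hpoly).congr_left fun t => ?_
  simp only [hp]
  ring

lemma re_riemannZeta_two : (riemannZeta 2).re = Real.pi ^ 2 / 6 := by
  rw [riemannZeta_two, ← Complex.ofReal_pow, ← Complex.ofReal_ofNat, ← Complex.ofReal_div,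
    Complex.ofReal_re]

lemma re_riemannZeta_four : (riemannZeta 4).re = Real.pi ^ 4 / 90 := by
  rw [riemannZeta_four, ← Complex.ofReal_pow, ← Complex.ofReal_ofNat, ← Complex.ofReal_div,
    Complex.ofReal_re]

lemma one_sub_mul_beta_self_isBigO :
    (fun t => (1 - t) * beta (1 - t / 2) (1 - t / 2)
      - (1 - Real.pi ^ 2 / 24 * t ^ 2 - (riemannZeta 3).re / 4 * t ^ 3 - Real.pi ^ 4 / 640 * t ^ 4
        + (Real.pi ^ 2 * (riemannZeta 3).re / 96 - 3 * (riemannZeta 5).re / 16) * t ^ 5))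
      =O[𝓝 0] fun t => t ^ 6 := by
  have hlog : (fun t => 2 * Real.log (Real.Gamma (1 - t / 2)) - Real.log (Real.Gamma (1 - t))
      - (-(Real.pi ^ 2 / 24) * t ^ 2 + -((riemannZeta 3).re / 4) * t ^ 3
        + -(7 * Real.pi ^ 4 / 2880) * t ^ 4 + -(3 * (riemannZeta 5).re / 16) * t ^ 5))
      =O[𝓝 0] fun t => t ^ 6 := by
    refine (two_mul_log_Gamma_sub_isBigO 4).congr_left fun t => ?_
    simp only [sum_range_succ, sum_range_zero, zero_add, Nat.reduceAdd, Nat.cast_ofNat,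
      re_riemannZeta_two, re_riemannZeta_four]
    ring
  refine (exp_isBigO_pow_six hlog).congr' ?_ .rfl
  filter_upwards [Iio_mem_nhds zero_lt_one] with t ht
  rw [one_sub_mul_beta_self_eq_exp ht]
  ring

end

section

open ProbabilityTheory Set

lemma ofReal_rpow_mul_one_sub_rpow {x : ℝ} (hx : x ∈ Ioc 0 1) (a b : ℝ) :
    (x : ℂ) ^ ((a : ℂ) - 1) * (1 - (x : ℂ)) ^ ((b : ℂ) - 1)
      = ((x ^ (a - 1) * (1 - x) ^ (b - 1) : ℝ) : ℂ) := by
  rw [Complex.ofReal_mul, Complex.ofReal_cpow hx.1.le, Complex.ofReal_cpow (sub_nonneg.2 hx.2)]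
  push_cast
  rfl

lemma intervalIntegrable_rpow_mul_one_sub_rpow {a b : ℝ} (ha : 0 < a) (hb : 0 < b) :
    IntervalIntegrable (fun x : ℝ => x ^ (a - 1) * (1 - x) ^ (b - 1)) volume 0 1 := by
  have h := Complex.betaIntegral_convergent (u := a) (v := b) (by simpa) (by simpa)
  rw [intervalIntegrable_iff_integrableOn_Ioc_of_le zero_le_one] at h ⊢
  rw [integrableOn_congr_fun (fun x hx => ofReal_rpow_mul_one_sub_rpow hx a b)
    measurableSet_Ioc] at h
  exact h.re

lemma integral_rpow_mul_one_sub_rpow {a b : ℝ} (ha : 0 < a) (hb : 0 < b) :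
    ∫ x in (0 : ℝ)..1, x ^ (a - 1) * (1 - x) ^ (b - 1) = beta a b := by
  rw [beta_eq_betaIntegralReal a b ha hb, Complex.betaIntegral,
    intervalIntegral.integral_of_le zero_le_one, intervalIntegral.integral_of_le zero_le_one,
    setIntegral_congr_fun measurableSet_Ioc (fun x hx => ofReal_rpow_mul_one_sub_rpow hx a b),
    integral_complex_ofReal, Complex.ofReal_re]

lemma mul_one_sub_rpow {x : ℝ} (hx : x ∈ uIoc 0 1) (w : ℝ) :
    x ^ (w + 1 - 1) * (1 - x) ^ (w + 1 - 1) = (x * (1 - x)) ^ w := by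
  rw [uIoc_of_le zero_le_one] at hx
  rw [add_sub_cancel_right, Real.mul_rpow hx.1.le (sub_nonneg.2 hx.2)]

lemma intervalIntegrable_mul_one_sub_rpow {w : ℝ} (hw : -1 < w) :
    IntervalIntegrable (fun x : ℝ => (x * (1 - x)) ^ w) volume 0 1 :=
  (intervalIntegrable_rpow_mul_one_sub_rpow (neg_lt_iff_pos_add.1 hw)
    (neg_lt_iff_pos_add.1 hw)).congr fun _ hx => mul_one_sub_rpow hx w

lemma integral_mul_one_sub_rpow {w : ℝ} (hw : -1 < w) :
    ∫ x in (0 : ℝ)..1, (x * (1 - x)) ^ w = beta (w + 1) (w + 1) := by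
  rw [← integral_rpow_mul_one_sub_rpow (neg_lt_iff_pos_add.1 hw) (neg_lt_iff_pos_add.1 hw)]
  exact intervalIntegral.integral_congr_ae (.of_forall fun _ hx => (mul_one_sub_rpow hx w).symm)

lemma integral_eq_two_smul_integral_of_comp_add_sub {E : Type*} [NormedAddCommGroup E]
    [NormedSpace ℝ E] {f : ℝ → E} {a b : ℝ} (hf : IntervalIntegrable f volume a b)
    (hsymm : ∀ x, f (a + b - x) = f x) :
    ∫ x in a..b, f x = (2 : ℝ) • ∫ x in (a + b) / 2..b, f x := by
  have hmid : (a + b) / 2 ∈ uIcc a b := by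
    rcases le_total a b with hab | hab
    · exact mem_uIcc_of_le (by linarith) (by linarith)
    · exact mem_uIcc_of_ge (by linarith) (by linarith)
  have hreflect : ∫ x in a..(a + b) / 2, f x = ∫ x in (a + b) / 2..b, f x := by
    have h := intervalIntegral.integral_comp_sub_left f (a + b) (a := a) (b := (a + b) / 2)
    rw [sub_half, add_sub_cancel_left] at h
    simpa only [hsymm] using h
  rw [← intervalIntegral.integral_add_adjacent_intervals
    (hf.mono_set (uIcc_subset_uIcc_left hmid)) (hf.mono_set (uIcc_subset_uIcc_right hmid)),
    hreflect, two_smul]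

lemma integral_one_half_mul_one_sub_rpow {w : ℝ} (hw : -1 < w) :
    ∫ x in (1 / 2 : ℝ)..1, (x * (1 - x)) ^ w = beta (w + 1) (w + 1) / 2 := by
  have h := integral_eq_two_smul_integral_of_comp_add_sub (intervalIntegrable_mul_one_sub_rpow hw)
    fun x => by ring_nf
  rw [integral_mul_one_sub_rpow hw, zero_add, smul_eq_mul] at h
  linarith

end

section

open ProbabilityTheory Filter Topology

variable {Ω : Type*} [MeasurableSpace Ω] {μ : Measure Ω} {X f : Ω → ℝ}

lemma integral_withDensity_ofReal (hf : Measurable f) (hf0 : ∀ ω, 0 ≤ f ω) (g : Ω → ℝ) :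
    ∫ ω, g ω ∂μ.withDensity (fun ω => ENNReal.ofReal (f ω)) = ∫ ω, g ω * f ω ∂μ := by
  rw [integral_withDensity_eq_integral_toReal_smul hf.ennreal_ofReal
    (.of_forall fun _ => ENNReal.ofReal_lt_top)]
  simp only [ENNReal.toReal_ofReal (hf0 _), smul_eq_mul, mul_comm]

lemma integrable_withDensity_ofReal_iff (hf : Measurable f) (hf0 : ∀ ω, 0 ≤ f ω) {g : Ω → ℝ} :
    Integrable g (μ.withDensity fun ω => ENNReal.ofReal (f ω))
      ↔ Integrable (fun ω => g ω * f ω) μ := by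
  rw [integrable_withDensity_iff hf.ennreal_ofReal (.of_forall fun _ => ENNReal.ofReal_lt_top)]
  simp only [ENNReal.toReal_ofReal (hf0 _)]

lemma mgf_withDensity_ofReal (hf : Measurable f) (hf0 : ∀ ω, 0 ≤ f ω) :
    mgf X (μ.withDensity fun ω => ENNReal.ofReal (f ω))
      = fun t => ∫ ω, Real.exp (t * X ω) * f ω ∂μ :=
  funext fun t => integral_withDensity_ofReal hf hf0 fun ω => Real.exp (t * X ω)

lemma zero_mem_interior_integrableExpSet_withDensity_ofReal (hf : Measurable f)
    (hf0 : ∀ ω, 0 ≤ f ω) (hint : ∀ᶠ t in 𝓝 0, Integrable (fun ω => Real.exp (t * X ω) * f ω) μ) :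
    0 ∈ interior (integrableExpSet X (μ.withDensity fun ω => ENNReal.ofReal (f ω))) :=
  mem_interior_iff_mem_nhds.2 <| hint.mono fun _ ht =>
    (integrable_withDensity_ofReal_iff hf hf0).2 ht

lemma analyticAt_integral_exp_mul_zero (hf : Measurable f) (hf0 : ∀ ω, 0 ≤ f ω)
    (hint : ∀ᶠ t in 𝓝 0, Integrable (fun ω => Real.exp (t * X ω) * f ω) μ) :
    AnalyticAt ℝ (fun t => ∫ ω, Real.exp (t * X ω) * f ω ∂μ) 0 := by
  rw [← mgf_withDensity_ofReal hf hf0]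
  exact analyticAt_mgf (zero_mem_interior_integrableExpSet_withDensity_ofReal hf hf0 hint)

lemma iteratedDeriv_integral_exp_mul_zero (hf : Measurable f) (hf0 : ∀ ω, 0 ≤ f ω)
    (hint : ∀ᶠ t in 𝓝 0, Integrable (fun ω => Real.exp (t * X ω) * f ω) μ) (n : ℕ) :
    iteratedDeriv n (fun t => ∫ ω, Real.exp (t * X ω) * f ω ∂μ) 0 = ∫ ω, X ω ^ n * f ω ∂μ := by
  rw [← mgf_withDensity_ofReal hf hf0,
    iteratedDeriv_mgf_zero (zero_mem_interior_integrableExpSet_withDensity_ofReal hf hf0 hint)]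
  exact integral_withDensity_ofReal hf hf0 fun ω => X ω ^ n

end

namespace etaLog

open ProbabilityTheory Filter Topology Asymptotics Set

lemma exp_mul_of_nonpos (t : ℝ) {s : ℝ} (hs : s ≤ 0) :
    Real.exp (t * s) * etaLog s = 6 / Real.pi ^ 2 * Real.exp ((t + 2) * s) := by
  rw [etaLog, if_pos hs, add_mul, Real.exp_add]
  ring

lemma integrableOn_exp_mul_Iic {t : ℝ} (ht : -2 < t) :
    IntegrableOn (fun s => Real.exp (t * s) * etaLog s) (Iic 0) := by
  rw [integrableOn_congr_fun (fun s (hs : s ∈ Iic 0) => exp_mul_of_nonpos t hs)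
    measurableSet_Iic]
  exact (_root_.integrableOn_exp_mul_Iic (by linarith) 0).const_mul _

lemma setIntegral_exp_mul_Iic {t : ℝ} (ht : -2 < t) :
    t ^ 2 * (2 + t) * ∫ s in Iic 0, Real.exp (t * s) * etaLog s = 6 / Real.pi ^ 2 * t ^ 2 := by
  have h2t : t + 2 ≠ 0 := by linarith
  rw [setIntegral_congr_fun measurableSet_Iic fun s hs => exp_mul_of_nonpos t hs,
    integral_const_mul, integral_exp_mul_Iic (by linarith), mul_zero, Real.exp_zero]
  field

lemma etaLog_of_mem_Ioc {s : ℝ} (hs : s ∈ Ioc 0 (Real.log 2)) :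
    etaLog s = 6 / Real.pi ^ 2 * (-Real.exp (2 * s) + 2 + 4 * s) := by
  rw [etaLog, if_neg hs.1.not_ge, if_pos hs.2]

/-- An antiderivative of `t ^ 2 * (2 + t)` times the integrand of the moment generating function on
`0 < s ≤ log 2`, up to the constant `6 / π ^ 2`; the factor `t ^ 2 * (2 + t)` clears the
denominators, so that the formula is also valid at `t = 0`. -/
noncomputable def middlePrimitive (t s : ℝ) : ℝ :=
  Real.exp (t * s) * ((2 + t) * (2 * t * (1 + 2 * s) - 4) - t ^ 2 * Real.exp (2 * s))

lemma hasDerivAt_middlePrimitive (t s : ℝ) :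
    HasDerivAt (middlePrimitive t)
      (t ^ 2 * (2 + t) * (Real.exp (t * s) * (-Real.exp (2 * s) + 2 + 4 * s))) s := by
  have hexp (c : ℝ) : HasDerivAt (fun s => Real.exp (c * s)) (Real.exp (c * s) * c) s := by
    simpa using ((hasDerivAt_id s).const_mul c).exp
  have hlin : HasDerivAt (fun s => (2 + t) * (2 * t * (1 + 2 * s) - 4))
      ((2 + t) * (2 * t * 2)) s := by
    simpa using (((((hasDerivAt_id s).const_mul 2).const_add 1).const_mul (2 * t)).sub_const
      4).const_mul (2 + t)
  exact ((hexp t).fun_mul (hlin.fun_sub ((hexp 2).const_mul (t ^ 2)))).congr_deriv (by ring)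

lemma integrableOn_exp_mul_Ioc (t : ℝ) :
    IntegrableOn (fun s => Real.exp (t * s) * etaLog s) (Ioc 0 (Real.log 2)) := by
  rw [integrableOn_congr_fun (fun s hs => congrArg (Real.exp (t * s) * ·) (etaLog_of_mem_Ioc hs))
    measurableSet_Ioc]
  exact Continuous.integrableOn_Ioc (by fun_prop)

lemma setIntegral_exp_mul_Ioc (t : ℝ) :
    t ^ 2 * (2 + t) * ∫ s in Ioc 0 (Real.log 2), Real.exp (t * s) * etaLog s
      = 6 / Real.pi ^ 2 * (middlePrimitive t (Real.log 2) - middlePrimitive t 0) := by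
  rw [← intervalIntegral.integral_eq_sub_of_hasDerivAt
    (fun s _ => hasDerivAt_middlePrimitive t s) (Continuous.intervalIntegrable (by fun_prop) _ _),
    intervalIntegral.integral_of_le (Real.log_nonneg one_le_two), ← integral_const_mul,
    ← integral_const_mul]
  refine setIntegral_congr_fun measurableSet_Ioc fun s hs => ?_
  simp only [etaLog_of_mem_Ioc hs]
  ring

lemma middlePrimitive_zero (t : ℝ) : middlePrimitive t 0 = t ^ 2 - 8 := by
  simp only [middlePrimitive, mul_zero, Real.exp_zero]
  ring

/-- The substitution `s = -log (x * (1 - x)) / 2`, inverse to `x = 1 / 2 + √(1 / 4 - exp (-2 * s))`.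
It maps `(1 / 2, 1)` onto `(log 2, ∞)` and removes the square roots from `etaLog`. -/
noncomputable def logScale (x : ℝ) : ℝ := -Real.log (x * (1 - x)) / 2

/-- The density `etaLog` on `(log 2, ∞)` in the variable `x` of `logScale`, up to the constant
`6 / π ^ 2`. -/
noncomputable def tailProfile (x : ℝ) : ℝ := 2 - 2 / x - 4 * Real.log x

lemma exp_mul_logScale {x : ℝ} (hx : x ∈ Ioo 0 1) (t : ℝ) :
    Real.exp (t * logScale x) = (x * (1 - x)) ^ (-t / 2) := by
  rw [Real.rpow_def_of_pos (mul_pos hx.1 (sub_pos.2 hx.2)), logScale]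
  ring_nf

lemma hasDerivAt_logScale {x : ℝ} (hx : x ∈ Ioo 0 1) :
    HasDerivAt logScale ((2 * x - 1) / (2 * (x * (1 - x)))) x := by
  have hpos : 0 < x * (1 - x) := mul_pos hx.1 (sub_pos.2 hx.2)
  have hmul := (hasDerivAt_id x).fun_mul ((hasDerivAt_id x).const_sub 1)
  refine ((hmul.log hpos.ne').fun_neg.div_const 2).congr_deriv ?_
  simp only [id]
  field

lemma monotoneOn_logScale : MonotoneOn logScale (Ioo (1 / 2) 1) := by
  intro x hx y hy hxy
  have hy' : 0 < y * (1 - y) := mul_pos (by linarith [hy.1]) (by linarith [hy.2])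
  have hle : y * (1 - y) ≤ x * (1 - x) := by nlinarith [hx.1, hy.1]
  simp only [logScale]
  linarith [Real.log_le_log hy' hle]

lemma log_one_div_four : Real.log (1 / 4) = -(2 * Real.log 2) := by
  rw [one_div, Real.log_inv, show (4 : ℝ) = 2 ^ 2 by norm_num, Real.log_pow, Nat.cast_two]

lemma log_two_lt_logScale {x : ℝ} (hx : x ∈ Ioo (1 / 2) 1) : Real.log 2 < logScale x := by
  have hlt : Real.log (x * (1 - x)) < Real.log (1 / 4) :=
    Real.log_lt_log (mul_pos (by linarith [hx.1]) (by linarith [hx.2])) (by nlinarith [hx.1])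
  rw [log_one_div_four] at hlt
  rw [logScale]
  linarith

lemma image_logScale : logScale '' Ioo (1 / 2) 1 = Ioi (Real.log 2) := by
  refine Subset.antisymm (image_subset_iff.2 fun x hx => log_two_lt_logScale hx) fun s hs => ?_
  have hexp : Real.exp (-2 * s) < 1 / 4 := by
    rw [← Real.lt_log_iff_exp_lt (by norm_num), log_one_div_four]
    linarith [mem_Ioi.1 hs]
  have hsqrt_lt : √(1 / 4 - Real.exp (-2 * s)) < 1 / 2 := by
    rw [Real.sqrt_lt' one_half_pos]
    linarith [Real.exp_pos (-2 * s)]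
  refine ⟨1 / 2 + √(1 / 4 - Real.exp (-2 * s)),
    ⟨lt_add_of_pos_right _ (Real.sqrt_pos.2 (sub_pos.2 hexp)), by linarith⟩, ?_⟩
  have hmul : (1 / 2 + √(1 / 4 - Real.exp (-2 * s)))
      * (1 - (1 / 2 + √(1 / 4 - Real.exp (-2 * s)))) = Real.exp (-2 * s) := by
    linear_combination -Real.sq_sqrt (sub_nonneg.2 hexp.le)
  rw [logScale, hmul, Real.log_exp]
  ring

lemma etaLog_logScale {x : ℝ} (hx : x ∈ Ioo (1 / 2) 1) :
    etaLog (logScale x) = 6 / Real.pi ^ 2 * tailProfile x := by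
  have hx01 : x ∈ Ioo 0 1 := ⟨one_half_pos.trans hx.1, hx.2⟩
  have hlog : Real.log 2 < logScale x := log_two_lt_logScale hx
  have hexp_neg : Real.exp (-2 * logScale x) = x * (1 - x) := by
    rw [exp_mul_logScale hx01, neg_neg, div_self two_ne_zero, Real.rpow_one]
  have hexp : Real.exp (2 * logScale x) = (x * (1 - x))⁻¹ := by
    rw [← hexp_neg, ← Real.exp_neg, neg_mul, neg_neg]
  have hsqrt : √(1 / 4 - x * (1 - x)) = x - 1 / 2 := by
    rw [show 1 / 4 - x * (1 - x) = (x - 1 / 2) ^ 2 by ring, Real.sqrt_sq (by linarith [hx.1])]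
  rw [etaLog, if_neg ((Real.log_pos one_lt_two).trans hlog).not_ge, if_neg hlog.not_ge, hexp_neg,
    hexp, hsqrt, add_sub_cancel, tailProfile]
  have : 1 - x ≠ 0 := (sub_pos.2 hx.2).ne'
  have : x ≠ 0 := hx01.1.ne'
  field

lemma tailProfile_nonneg {x : ℝ} (hx : x ∈ Icc (1 / 2) 1) : 0 ≤ tailProfile x := by
  have hpos : 0 < x := one_half_pos.trans_le hx.1
  have hinv : 1 / x ≤ 2 := (div_le_iff₀ hpos).2 (by linarith [hx.1])
  have hprod : 0 ≤ (1 - x) * (4 - 2 * (1 / x)) :=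
    mul_nonneg (by linarith [hx.2]) (by linarith)
  calc 0 ≤ (1 - x) * (4 - 2 * (1 / x)) := hprod
    _ = 2 - 2 / x - 4 * (x - 1) := by field
    _ ≤ tailProfile x := by
      rw [tailProfile]
      linarith [Real.log_le_sub_one_of_pos hpos]

lemma tailProfile_le {x : ℝ} (hx : 0 < x) : tailProfile x ≤ 2 * (1 - x) / x := by
  calc tailProfile x ≤ 2 - 2 / x - 4 * (1 - x⁻¹) := by
        rw [tailProfile]
        linarith [Real.one_sub_inv_le_log_of_pos hx]
    _ = 2 * (1 - x) / x := by field

/-- The integrand of the moment generating function on `(log 2, ∞)` in the variable `x` of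
`logScale`, including the Jacobian, up to the constant `6 / π ^ 2`. -/
noncomputable def tailIntegrand (t x : ℝ) : ℝ :=
  (2 * x - 1) / (2 * (x * (1 - x))) * ((x * (1 - x)) ^ (-t / 2) * tailProfile x)

/-- The boundary term left when `t ^ 2 * (2 + t) * tailIntegrand t` is integrated by parts until
only a multiple of the Beta integrand `(x * (1 - x)) ^ (-t / 2)` remains; it vanishes at `x = 1`. -/
noncomputable def tailPrimitive (t x : ℝ) : ℝ :=
  (x * (1 - x)) ^ (-t / 2) * (16 * (1 - x) - 4 * t * (1 - x) / x - t * (2 + t) * tailProfile x)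

lemma hasDerivAt_tailPrimitive (t : ℝ) {x : ℝ} (hx : x ∈ Ioo 0 1) :
    HasDerivAt (tailPrimitive t)
      (-(t ^ 2 * (2 + t) * tailIntegrand t x
        + 16 * (1 - t) * (x * (1 - x)) ^ (-t / 2))) x := by
  have hx0 : x ≠ 0 := hx.1.ne'
  have hx1 : 1 - x ≠ 0 := (sub_pos.2 hx.2).ne'
  have hpos : 0 < x * (1 - x) := mul_pos hx.1 (sub_pos.2 hx.2)
  have hone_sub := (hasDerivAt_id' x).const_sub 1
  have hpow := ((hasDerivAt_id' x).fun_mul hone_sub).rpow_const (p := -t / 2) (.inl hpos.ne')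
  have hprofile : HasDerivAt tailProfile (2 / x ^ 2 - 4 / x) x := by
    refine ((((hasDerivAt_inv hx0).const_mul 2).const_sub 2).fun_sub
      ((Real.hasDerivAt_log hx0).const_mul 4)).congr_deriv ?_
    ring
  refine (hpow.fun_mul (((hone_sub.const_mul 16).fun_sub
    ((hone_sub.const_mul (4 * t)).fun_div (hasDerivAt_id' x) hx0)).fun_sub
    (hprofile.const_mul (t * (2 + t))))).congr_deriv ?_
  rw [Real.rpow_sub_one hpos.ne', tailIntegrand]
  field_simp
  ring

lemma tendsto_mul_one_sub_rpow_mul_one_sub {w : ℝ} (hw : -1 < w) :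
    Tendsto (fun x : ℝ => (x * (1 - x)) ^ w * (1 - x)) (𝓝[<] 1) (𝓝 0) := by
  have hcont : ContinuousAt (fun x : ℝ => x ^ w * (1 - x) ^ (w + 1)) 1 := by
    refine (Real.continuousAt_rpow_const 1 w (.inl one_ne_zero)).mul ?_
    exact (by fun_prop : ContinuousAt (fun x : ℝ => 1 - x) 1).rpow_const (.inr (by linarith))
  have hzero : (1 : ℝ) ^ w * (1 - 1) ^ (w + 1) = 0 := by
    rw [sub_self, Real.zero_rpow (by linarith), mul_zero]
  refine Tendsto.congr' ?_ (hzero ▸ hcont.tendsto.mono_left nhdsWithin_le_nhds)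
  filter_upwards [Ioo_mem_nhdsLT zero_lt_one] with x hx
  have hpos : 0 < 1 - x := sub_pos.2 hx.2
  rw [Real.mul_rpow hx.1.le hpos.le, Real.rpow_add_one hpos.ne']
  ring

lemma tendsto_tailPrimitive {t : ℝ} (ht : t < 2) :
    Tendsto (tailPrimitive t) (𝓝[<] 1) (𝓝 0) := by
  have hvanish := tendsto_mul_one_sub_rpow_mul_one_sub (w := -t / 2) (by linarith)
  have hcont (c : ℝ) : Tendsto (fun x : ℝ => c / x) (𝓝[<] 1) (𝓝 (c / 1)) :=
    (tendsto_const_nhds.div tendsto_id one_ne_zero).mono_left nhdsWithin_le_nhds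
  have hprofile : Tendsto (fun x => (x * (1 - x)) ^ (-t / 2) * tailProfile x) (𝓝[<] 1) (𝓝 0) := by
    refine tendsto_of_tendsto_of_tendsto_of_le_of_le' tendsto_const_nhds
      (by simpa using hvanish.mul (hcont 2)) ?_ ?_ <;>
      filter_upwards [Ioo_mem_nhdsLT one_half_lt_one] with x hx
    · exact mul_nonneg (Real.rpow_nonneg (by nlinarith [hx.1, hx.2]) _)
        (tailProfile_nonneg (Ioo_subset_Icc_self hx))
    · rw [mul_assoc]
      refine mul_le_mul_of_nonneg_left ((tailProfile_le (by linarith [hx.1])).trans_eq (by ring))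
        (Real.rpow_nonneg (by nlinarith [hx.1, hx.2]) _)
  have h := (hvanish.mul ((hcont (4 * t)).const_sub 16)).sub (hprofile.const_mul (t * (2 + t)))
  rw [zero_mul, mul_zero, sub_zero] at h
  refine h.congr fun x => ?_
  rw [tailPrimitive]
  ring

lemma integrableOn_tailIntegrand {t : ℝ} (ht : t < 2) :
    IntegrableOn (tailIntegrand t) (Ioo (1 / 2) 1) := by
  have hpow : IntegrableOn (fun x : ℝ => (x * (1 - x)) ^ (-t / 2)) (Ioo (1 / 2) 1) :=
    ((intervalIntegrable_iff_integrableOn_Ioo_of_le zero_le_one).1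
      (intervalIntegrable_mul_one_sub_rpow (by linarith))).mono_set
      (Ioo_subset_Ioo_left one_half_pos.le)
  have hmeas : Measurable (tailIntegrand t) := by
    unfold tailIntegrand tailProfile
    fun_prop
  refine hpow.mono' hmeas.aestronglyMeasurable
    (ae_restrict_of_forall_mem measurableSet_Ioo fun x hx => ?_)
  have hx0 : 0 < x := one_half_pos.trans hx.1
  have hx1 : 0 < 1 - x := sub_pos.2 hx.2
  have hnonneg := tailProfile_nonneg (Ioo_subset_Icc_self hx)
  have hjac : 0 ≤ (2 * x - 1) / (2 * (x * (1 - x))) :=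
    div_nonneg (by linarith [hx.1]) (by positivity)
  have hle : (2 * x - 1) / (2 * (x * (1 - x))) * tailProfile x ≤ 1 :=
    calc _ ≤ (2 * x - 1) / (2 * (x * (1 - x))) * (2 * (1 - x) / x) :=
          mul_le_mul_of_nonneg_left (tailProfile_le hx0) hjac
      _ = (2 * x - 1) / x ^ 2 := by field
      _ ≤ 1 := (div_le_one (by positivity)).2 (by linarith [sq_nonneg (x - 1)])
  rw [tailIntegrand, Real.norm_of_nonneg (by positivity), mul_left_comm]
  exact mul_le_of_le_one_right (by positivity) hle

lemma deriv_logScale_smul (t : ℝ) {x : ℝ} (hx : x ∈ Ioo (1 / 2) 1) :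
    ((2 * x - 1) / (2 * (x * (1 - x)))) •
        (Real.exp (t * logScale x) * etaLog (logScale x))
      = 6 / Real.pi ^ 2 * tailIntegrand t x := by
  rw [exp_mul_logScale ⟨one_half_pos.trans hx.1, hx.2⟩, etaLog_logScale hx, tailIntegrand,
    smul_eq_mul]
  ring

lemma hasDerivWithinAt_logScale {x : ℝ} (hx : x ∈ Ioo (1 / 2) 1) :
    HasDerivWithinAt logScale ((2 * x - 1) / (2 * (x * (1 - x)))) (Ioo (1 / 2) 1) x :=
  (hasDerivAt_logScale ⟨one_half_pos.trans hx.1, hx.2⟩).hasDerivWithinAt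

lemma integrableOn_exp_mul_Ioi {t : ℝ} (ht : t < 2) :
    IntegrableOn (fun s => Real.exp (t * s) * etaLog s) (Ioi (Real.log 2)) := by
  rw [← image_logScale, integrableOn_image_iff_integrableOn_deriv_smul_of_monotoneOn
    measurableSet_Ioo (fun x hx => hasDerivWithinAt_logScale hx) monotoneOn_logScale,
    integrableOn_congr_fun (fun x hx => deriv_logScale_smul t hx) measurableSet_Ioo]
  exact (integrableOn_tailIntegrand ht).const_mul _

lemma setIntegral_exp_mul_Ioi (t : ℝ) :
    ∫ s in Ioi (Real.log 2), Real.exp (t * s) * etaLog s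
      = 6 / Real.pi ^ 2 * ∫ x in (1 / 2 : ℝ)..1, tailIntegrand t x := by
  rw [← image_logScale, integral_image_eq_integral_deriv_smul_of_monotoneOn
    measurableSet_Ioo (fun x hx => hasDerivWithinAt_logScale hx) monotoneOn_logScale,
    setIntegral_congr_fun measurableSet_Ioo fun x hx => deriv_logScale_smul t hx,
    integral_const_mul, intervalIntegral.integral_of_le one_half_lt_one.le,
    integral_Ioc_eq_integral_Ioo]

lemma integral_tailIntegrand {t : ℝ} (ht : t < 2) :
    t ^ 2 * (2 + t) * ∫ x in (1 / 2 : ℝ)..1, tailIntegrand t x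
      = tailPrimitive t (1 / 2) - 8 * ((1 - t) * beta (1 - t / 2) (1 - t / 2)) := by
  have hw : -1 < -t / 2 := by linarith
  have hpow : IntervalIntegrable (fun x : ℝ => (x * (1 - x)) ^ (-t / 2)) volume (1 / 2) 1 :=
    (intervalIntegrable_mul_one_sub_rpow hw).mono_set
      (uIcc_subset_uIcc_right (by norm_num [mem_uIcc]))
  have htail : IntervalIntegrable (tailIntegrand t) volume (1 / 2) 1 :=
    (intervalIntegrable_iff_integrableOn_Ioo_of_le one_half_lt_one.le).2
      (integrableOn_tailIntegrand ht)
  have hbeta := integral_one_half_mul_one_sub_rpow hw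
  rw [show -t / 2 + 1 = 1 - t / 2 by ring] at hbeta
  have hftc := intervalIntegral.integral_eq_sub_of_hasDerivAt_of_tendsto one_half_lt_one
    (fun x hx => hasDerivAt_tailPrimitive t ⟨one_half_pos.trans hx.1, hx.2⟩)
    ((htail.const_mul (t ^ 2 * (2 + t))).add (hpow.const_mul (16 * (1 - t)))).neg
    ((hasDerivAt_tailPrimitive t ⟨one_half_pos, one_half_lt_one⟩).continuousAt.tendsto.mono_left
      nhdsWithin_le_nhds) (tendsto_tailPrimitive ht)
  rw [intervalIntegral.integral_neg,
    intervalIntegral.integral_add (htail.const_mul _) (hpow.const_mul _),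
    intervalIntegral.integral_const_mul,
    intervalIntegral.integral_const_mul, hbeta] at hftc
  linarith

lemma middlePrimitive_log_two_add_tailPrimitive (t : ℝ) :
    middlePrimitive t (Real.log 2) + tailPrimitive t (1 / 2) = 0 := by
  have hexp : Real.exp (t * Real.log 2) = 2 ^ t := by
    rw [Real.rpow_def_of_pos two_pos, mul_comm]
  have hexp_two : Real.exp (2 * Real.log 2) = 4 := by
    rw [two_mul, Real.exp_add, Real.exp_log two_pos]
    norm_num
  have hpow : (1 / 2 * (1 - 1 / 2) : ℝ) ^ (-t / 2) = 2 ^ t := by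
    rw [show (1 / 2 * (1 - 1 / 2) : ℝ) = 2 ^ (-2 : ℝ) by norm_num [Real.rpow_neg],
      ← Real.rpow_mul two_pos.le]
    ring_nf
  rw [middlePrimitive, tailPrimitive, tailProfile, hexp, hexp_two, hpow, one_div, Real.log_inv]
  ring

lemma integrable_exp_mul {t : ℝ} (ht : t ∈ Ioo (-2) 2) :
    Integrable (fun s => Real.exp (t * s) * etaLog s) := by
  rw [← integrableOn_univ, ← Iic_union_Ioi (a := (0 : ℝ)),
    ← Ioc_union_Ioi_eq_Ioi (Real.log_nonneg one_le_two)]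
  exact (integrableOn_exp_mul_Iic ht.1).union
    ((integrableOn_exp_mul_Ioc t).union (integrableOn_exp_mul_Ioi ht.2))

lemma integral_exp_mul {t : ℝ} (ht : t ∈ Ioo (-2) 2) :
    t ^ 2 * (2 + t) * ∫ s, Real.exp (t * s) * etaLog s
      = 48 / Real.pi ^ 2 * (1 - (1 - t) * beta (1 - t / 2) (1 - t / 2)) := by
  have hint := integrable_exp_mul ht
  have hsplit : ∫ s, Real.exp (t * s) * etaLog s
      = (∫ s in Iic 0, Real.exp (t * s) * etaLog s)
        + ((∫ s in Ioc 0 (Real.log 2), Real.exp (t * s) * etaLog s)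
          + ∫ s in Ioi (Real.log 2), Real.exp (t * s) * etaLog s) := by
    rw [← setIntegral_union Ioc_disjoint_Ioi_same measurableSet_Ioi hint.integrableOn
      hint.integrableOn, Ioc_union_Ioi_eq_Ioi (Real.log_nonneg one_le_two),
      intervalIntegral.integral_Iic_add_Ioi hint.integrableOn hint.integrableOn]
  rw [hsplit]
  linear_combination setIntegral_exp_mul_Iic ht.1 + setIntegral_exp_mul_Ioc t
    + t ^ 2 * (2 + t) * setIntegral_exp_mul_Ioi t
    + 6 / Real.pi ^ 2 * (integral_tailIntegrand ht.2 - middlePrimitive_zero t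
      + middlePrimitive_log_two_add_tailPrimitive t)

lemma measurable : Measurable etaLog := by
  unfold etaLog
  refine Measurable.ite measurableSet_Iic (by fun_prop) (Measurable.ite measurableSet_Iic ?_ ?_) <;>
    fun_prop

lemma sq_le_six_sub_four_mul_inv {u : ℝ} (hu : u ∈ Icc 1 2) : u ^ 2 ≤ 6 - 4 * u⁻¹ := by
  have hpos : 0 < u := one_pos.trans_le hu.1
  have hprod : 0 ≤ (2 - u) * (u ^ 2 + 2 * u - 2) * u⁻¹ :=
    mul_nonneg (mul_nonneg (sub_nonneg.2 hu.2) (by nlinarith [hu.1])) (inv_nonneg.2 hpos.le)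
  have hfactor : (2 - u) * (u ^ 2 + 2 * u - 2) * u⁻¹ = 6 - 4 * u⁻¹ - u ^ 2 := by field
  linarith

lemma exp_two_mul_le {s : ℝ} (hs : s ∈ Icc 0 (Real.log 2)) :
    Real.exp (2 * s) ≤ 2 + 4 * s := by
  have hmem : Real.exp s ∈ Icc 1 2 :=
    ⟨Real.one_le_exp hs.1, (Real.le_log_iff_exp_le two_pos).1 hs.2⟩
  have hinv : 1 - (Real.exp s)⁻¹ ≤ s :=
    (Real.one_sub_inv_le_log_of_pos (Real.exp_pos s)).trans_eq (Real.log_exp s)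
  calc Real.exp (2 * s) = Real.exp s ^ 2 := by rw [two_mul, Real.exp_add, sq]
    _ ≤ 6 - 4 * (Real.exp s)⁻¹ := sq_le_six_sub_four_mul_inv hmem
    _ ≤ 2 + 4 * s := by linarith

lemma nonneg (s : ℝ) : 0 ≤ etaLog s := by
  rcases le_or_gt s 0 with hs | hs
  · rw [etaLog, if_pos hs]
    positivity
  rcases le_or_gt s (Real.log 2) with hs' | hs'
  · rw [etaLog_of_mem_Ioc ⟨hs, hs'⟩]
    exact mul_nonneg (by positivity) (by linarith [exp_two_mul_le ⟨hs.le, hs'⟩])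
  · obtain ⟨x, hx, rfl⟩ := image_logScale.superset hs'
    rw [etaLog_logScale hx]
    exact mul_nonneg (by positivity) (tailProfile_nonneg (Ioo_subset_Icc_self hx))

lemma sq_mul_two_add_mul_integral_exp_mul_isBigO :
    (fun t => t ^ 2 * (2 + t) * (∫ s, Real.exp (t * s) * etaLog s)
      - (2 * t ^ 2 + 12 * (riemannZeta 3).re / Real.pi ^ 2 * t ^ 3 + 3 * Real.pi ^ 2 / 40 * t ^ 4
        + (9 * (riemannZeta 5).re / Real.pi ^ 2 - (riemannZeta 3).re / 2) * t ^ 5))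
      =O[𝓝 0] fun t => t ^ 6 := by
  refine (one_sub_mul_beta_self_isBigO.const_mul_left (-48 / Real.pi ^ 2)).congr' ?_ .rfl
  filter_upwards [Ioo_mem_nhds (by norm_num : (-2 : ℝ) < 0) two_pos] with t ht
  rw [integral_exp_mul ht]
  field

lemma eventually_integrable_exp_mul :
    ∀ᶠ t in 𝓝 0, Integrable (fun s => Real.exp (t * s) * etaLog s) := by
  filter_upwards [Ioo_mem_nhds (by norm_num : (-2 : ℝ) < 0) two_pos] with t ht
  exact integrable_exp_mul ht

end etaLog

theorem etaLog_third_moment :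
    (∫ s : ℝ, s ^ 3 * etaLog s) =
      (9 / Real.pi ^ 2 - 3 / 2) * (riemannZeta 3).re + 27 / Real.pi ^ 2 * (riemannZeta 5).re
        - 3 / 4 - 9 * Real.pi ^ 2 / 80 := by
  have hint := etaLog.eventually_integrable_exp_mul
  have hanalytic := analyticAt_integral_exp_mul_zero etaLog.measurable etaLog.nonneg hint
  have htaylor := isBigO_of_sq_mul_two_add_mul
    (etaLog.sq_mul_two_add_mul_integral_exp_mul_isBigO.mono nhdsWithin_le_nhds)
  rw [← iteratedDeriv_integral_exp_mul_zero etaLog.measurable etaLog.nonneg hint 3,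
    iteratedDeriv_three_zero_of_isBigO hanalytic htaylor]
  ring
end

section
/- For every integer n ≥ 0, the Laurent coefficient b_n of the beta function B(z,1/2) at z = 0 is given by the convergent series b_n = (−1)^n·Σ_{j=1}^∞ C(2j−1, j)·2^{−(2j−1)}·j^{−(n+1)}, where C(2j−1, j) is the binomial coefficient. -/
/-- Euler beta function B(z, 1/2). -/
noncomputable def betaHalf (z : ℝ) : ℝ :=
  Real.Gamma z * Real.Gamma (1 / 2) / Real.Gamma (z + 1 / 2)

/-- B(z,1/2) minus its pole 1/z, extended by its limit 2 log 2 at z = 0. -/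
noncomputable def f (z : ℝ) : ℝ :=
  if z = 0 then 2 * Real.log 2 else betaHalf z - 1 / z

/-- The Laurent coefficients of B(z,1/2) at z = 0 (for nonnegative indices). -/
noncomputable def b (n : ℕ) : ℝ := (1 / (n.factorial : ℝ)) * iteratedDeriv n f 0

/-!
Write `c n` for the coefficients of the binomial series of `(1 - t) ^ (s - 1)`. Integrating that
series term by term against `t ^ (x - 1)` over `(0, 1)` gives the partial fraction expansion
`B(x, s) = ∑ c n / (x + n)` for `x > 0`. Both sides satisfy `x g(x) = (x + s) g(x + 1)`, which
carries the expansion across the poles to every real `x` that is not a nonpositive integer. The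
term `n = 0` is the pole `1 / x`, and expanding each remaining `c n / (x + n)` as a geometric series
in `x` gives the Laurent coefficients. For `s = 1 / 2`, `c n` is the central binomial coefficient
divided by `4 ^ n`. The value at `0` is the derivative there of
`x B(x, s) = Γ(x + 1) Γ(s) / Γ(x + s)`.
-/

open Filter MeasureTheory Set Topology
open ProbabilityTheory (beta)
open Ring (multichoose)

theorem succ_mul_multichoose_succ {R : Type*} [CommRing R] [BinomialRing R] (r : R) (n : ℕ) :
    (n + 1) * multichoose r (n + 1) = (r + n) * multichoose r n := by
  have := BinomialRing.toIsAddTorsionFree (R := R)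
  refine nsmul_right_injective n.factorial_ne_zero ?_
  have hfactorial (k : ℕ) : (k.factorial : R) * multichoose r k = (ascPochhammer R k).eval r := by
    rw [← nsmul_eq_mul, Ring.factorial_nsmul_multichoose_eq_ascPochhammer,
      Polynomial.ascPochhammer_smeval_eq_eval]
  have hsucc := hfactorial (n + 1)
  rw [ascPochhammer_succ_eval, ← hfactorial n, Nat.factorial_succ] at hsucc
  push_cast at hsucc
  simp only [nsmul_eq_mul]
  linear_combination hsucc

theorem multichoose_half (n : ℕ) : multichoose (1 / 2 : ℝ) n = n.centralBinom / 4 ^ n := by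
  induction n with
  | zero => simp
  | succ n ih =>
    have hcentral : ((n : ℝ) + 1) * (n + 1).centralBinom = 2 * (2 * n + 1) * n.centralBinom := by
      exact_mod_cast Nat.succ_mul_centralBinom_succ n
    refine mul_left_cancel₀ (Nat.cast_add_one_ne_zero (R := ℝ) n) ?_
    rw [succ_mul_multichoose_succ, ih, ← mul_div_assoc _ _ (4 ^ (n + 1)), hcentral, pow_succ]
    field

theorem centralBinom_succ_eq_two_mul_choose (n : ℕ) :
    (n + 1).centralBinom = 2 * (2 * n + 1).choose (n + 1) := by
  rw [Nat.centralBinom_eq_two_mul_choose, show 2 * (n + 1) = 2 * n + 1 + 1 by ring,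
    Nat.choose_succ_succ, Nat.succ_eq_add_one, Nat.choose_symm_half, ← two_mul]

theorem choose_div_two_pow_eq_multichoose_half (n : ℕ) :
    ((2 * (n + 1) - 1).choose (n + 1) : ℝ) / 2 ^ (2 * (n + 1) - 1) =
      multichoose (1 / 2 : ℝ) (n + 1) := by
  rw [multichoose_half, centralBinom_succ_eq_two_mul_choose, show (4 : ℝ) = 2 ^ 2 by norm_num,
    ← pow_mul, show 2 * (n + 1) - 1 = 2 * n + 1 by lia, show 2 * (n + 1) = 2 * n + 1 + 1 by ring,
    pow_succ (2 : ℝ) (2 * n + 1)]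
  push_cast
  field

theorem hasSum_multichoose_mul_pow (r : ℝ) {x : ℝ} (hx : |x| < 1) :
    HasSum (fun n ↦ multichoose r n * x ^ n) ((1 - x) ^ (-r)) := by
  have hball : x ∈ Metric.eball (0 : ℝ) 1 := by simpa [enorm_eq_nnnorm] using! hx
  have hsum := (Real.one_div_one_sub_rpow_hasFPowerSeriesOnBall_zero r).hasSum hball
  simp only [FormalMultilinearSeries.ofScalars_apply_eq, ← Ring.multichoose_eq, smul_eq_mul,
    zero_add] at hsum
  rwa [Real.rpow_neg (by linarith [lt_of_abs_lt hx]), ← one_div]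

theorem mul_multichoose_one_sub_div (s : ℝ) (n : ℕ) :
    s * (multichoose (1 - s) n / (n + 1)) =
      multichoose (1 - s) n - multichoose (1 - s) (n + 1) := by
  have hsucc := succ_mul_multichoose_succ (1 - s) n
  have hn : (n : ℝ) + 1 ≠ 0 := Nat.cast_add_one_ne_zero n
  field_simp
  linear_combination hsucc

theorem mul_abs_multichoose_one_sub_div {s : ℝ} {n : ℕ} (hn : s ≤ n + 1) :
    s * (|multichoose (1 - s) n| / (n + 1)) =
      |multichoose (1 - s) n| - |multichoose (1 - s) (n + 1)| := by
  have hsucc := congrArg abs (succ_mul_multichoose_succ (1 - s) n)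
  rw [abs_mul, abs_mul, abs_of_nonneg (by positivity : (0 : ℝ) ≤ n + 1),
    abs_of_nonneg (by linarith : 0 ≤ 1 - s + n)] at hsucc
  field_simp
  linear_combination hsucc

theorem summable_abs_multichoose_one_sub_div {s : ℝ} (hs : 0 < s) :
    Summable fun n : ℕ ↦ |multichoose (1 - s) n| / (n + 1) := by
  obtain ⟨N, hN⟩ := exists_nat_ge s
  rw [← summable_nat_add_iff N]
  refine summable_of_sum_range_le (c := |multichoose (1 - s) N| / s)
    (fun n ↦ by positivity) fun m ↦ ?_
  have htelescope : s * ∑ n ∈ Finset.range m,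
        |multichoose (1 - s) (n + N)| / (((n + N : ℕ) : ℝ) + 1) =
      |multichoose (1 - s) N| - |multichoose (1 - s) (m + N)| := by
    have hterm (n : ℕ) := mul_abs_multichoose_one_sub_div (s := s) (n := n + N)
      (by push_cast; linarith [n.cast_nonneg (α := ℝ)])
    simp only [Finset.mul_sum, hterm, add_right_comm _ N 1,
      Finset.sum_range_sub' (fun n ↦ |multichoose (1 - s) (n + N)|), zero_add]
  rw [le_div_iff₀' hs, htelescope]
  linarith [abs_nonneg (multichoose (1 - s) (m + N))]

theorem summable_multichoose_one_sub_div_add {s : ℝ} (hs : 0 < s) (x : ℝ) :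
    Summable fun n : ℕ ↦ multichoose (1 - s) n / (x + n) := by
  refine ((summable_abs_multichoose_one_sub_div hs).mul_left 2).of_norm_bounded_eventually_nat ?_
  filter_upwards [tendsto_natCast_atTop_atTop.eventually_ge_atTop (1 - 2 * x)] with n hn
  have hpole : ((n : ℝ) + 1) / 2 ≤ |x + n| := (by linarith : _ ≤ x + n).trans (le_abs_self _)
  calc ‖multichoose (1 - s) n / (x + n)‖ = |multichoose (1 - s) n| / |x + n| := by
        rw [Real.norm_eq_abs, abs_div]
    _ ≤ |multichoose (1 - s) n| / ((n + 1) / 2) := by gcongr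
    _ = 2 * (|multichoose (1 - s) n| / (n + 1)) := by field

theorem beta_eq_integral {a s : ℝ} (ha : 0 < a) (hs : 0 < s) :
    beta a s = ∫ t in Ioo (0 : ℝ) 1, t ^ (a - 1) * (1 - t) ^ (s - 1) := by
  rw [ProbabilityTheory.beta_eq_betaIntegralReal a s ha hs, Complex.betaIntegral,
    intervalIntegral.integral_of_le zero_le_one, integral_Ioc_eq_integral_Ioo,
    ← Complex.ofReal_re (∫ t in Ioo (0 : ℝ) 1, _), ← integral_complex_ofReal]
  congr 1
  refine setIntegral_congr_fun measurableSet_Ioo fun t ht ↦ ?_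
  have ht' : 0 ≤ 1 - t := by linarith [ht.2]
  push_cast [Complex.ofReal_cpow ht.1.le, Complex.ofReal_cpow ht']
  rfl

theorem integral_Ioo_mul_rpow (c : ℝ) {p : ℝ} (hp : 0 < p) :
    ∫ t in Ioo (0 : ℝ) 1, c * t ^ (p - 1) = c / p := by
  rw [integral_const_mul, ← integral_Ioc_eq_integral_Ioo,
    ← intervalIntegral.integral_of_le zero_le_one, integral_rpow (Or.inl (by linarith)),
    sub_add_cancel, Real.one_rpow, Real.zero_rpow hp.ne', sub_zero, mul_one_div]

theorem hasSum_beta_of_pos {s x : ℝ} (hs : 0 < s) (hx : 0 < x) :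
    HasSum (fun n : ℕ ↦ multichoose (1 - s) n / (x + n)) (beta x s) := by
  let F (n : ℕ) (t : ℝ) : ℝ := multichoose (1 - s) n * t ^ (x + n - 1)
  have hxn (n : ℕ) : 0 < x + n := by positivity
  have hF_int (n : ℕ) : IntegrableOn (F n) (Ioo 0 1) :=
    ((intervalIntegral.integrableOn_Ioo_rpow_iff zero_lt_one).2 (by linarith [hxn n])).const_mul _
  have hF_integral (n : ℕ) : ∫ t in Ioo (0 : ℝ) 1, F n t = multichoose (1 - s) n / (x + n) :=
    integral_Ioo_mul_rpow _ (hxn n)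
  have hF_norm (n : ℕ) : ∫ t in Ioo (0 : ℝ) 1, ‖F n t‖ = ‖multichoose (1 - s) n / (x + n)‖ := by
    rw [norm_div, Real.norm_of_nonneg (hxn n).le, ← integral_Ioo_mul_rpow _ (hxn n)]
    refine setIntegral_congr_fun measurableSet_Ioo fun t ht ↦ ?_
    rw [norm_mul, Real.norm_of_nonneg (Real.rpow_nonneg ht.1.le _)]
  have hF_tsum : ∀ t ∈ Ioo (0 : ℝ) 1, ∑' n, F n t = t ^ (x - 1) * (1 - t) ^ (s - 1) := by
    intro t ht
    have hbinomial := (hasSum_multichoose_mul_pow (1 - s)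
      (abs_lt.2 ⟨by linarith [ht.1], ht.2⟩)).mul_left (t ^ (x - 1))
    rw [neg_sub] at hbinomial
    rw [← hbinomial.tsum_eq]
    refine tsum_congr fun n ↦ ?_
    rw [mul_left_comm, ← Real.rpow_natCast, ← Real.rpow_add ht.1, sub_add_eq_add_sub]
  have hsum := hasSum_integral_of_summable_integral_norm (F := F) hF_int
    (by simpa only [hF_norm] using (summable_multichoose_one_sub_div_add hs x).norm)
  rwa [setIntegral_congr_fun measurableSet_Ioo hF_tsum, ← beta_eq_integral hx hs,
    funext hF_integral] at hsum

theorem beta_one_left {s : ℝ} (hs : 0 < s) : beta 1 s = 1 / s := by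
  rw [beta, Real.Gamma_one, add_comm, Real.Gamma_add_one hs.ne', one_mul, one_div,
    div_mul_cancel_right₀ (Real.Gamma_pos_of_pos hs).ne']

-- The partial sums of `∑ s * c k / (k + 1)` telescope to `1 - c n`; the sum is `s B(1, s) = 1`.
theorem tendsto_multichoose_one_sub {s : ℝ} (hs : 0 < s) :
    Tendsto (multichoose (1 - s)) atTop (𝓝 0) := by
  have hsum := (hasSum_beta_of_pos hs one_pos).mul_left s
  rw [beta_one_left hs, mul_one_div_cancel hs.ne'] at hsum
  simp only [add_comm (1 : ℝ), mul_multichoose_one_sub_div] at hsum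
  have hpartial := hsum.tendsto_sum_nat
  simp only [Finset.sum_range_sub', Ring.multichoose_zero_right] at hpartial
  simpa using hpartial.const_sub 1

theorem mul_tsum_multichoose_one_sub_div_add {s x : ℝ} (hs : 0 < s) (hx : ∀ n : ℕ, x ≠ -n) :
    x * ∑' n : ℕ, multichoose (1 - s) n / (x + n) =
      (x + s) * ∑' n : ℕ, multichoose (1 - s) n / (x + 1 + n) := by
  let u (n : ℕ) : ℝ := multichoose (1 - s) n * (n / (x + n))
  have hpole (n : ℕ) : x + n ≠ 0 := fun h ↦ hx n (eq_neg_of_add_eq_zero_left h)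
  have hstep (n : ℕ) : x * (multichoose (1 - s) n / (x + n)) -
      (x + s) * (multichoose (1 - s) n / (x + 1 + n)) = u (n + 1) - u n := by
    have hsucc := succ_mul_multichoose_succ (1 - s) n
    have h₀ := hpole n
    have hcast : x + (n + 1 : ℕ) = x + 1 + n := by push_cast; ring
    have h₁ := hcast ▸ hpole (n + 1)
    simp only [u, hcast]
    push_cast
    field_simp
    linear_combination -(x + n) * hsucc
  have hsum := ((summable_multichoose_one_sub_div_add hs x).hasSum.mul_left x).sub
    ((summable_multichoose_one_sub_div_add hs (x + 1)).hasSum.mul_left (x + s))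
  have hu : Tendsto u atTop (𝓝 0) := by
    simpa [add_comm] using (tendsto_multichoose_one_sub hs).mul (tendsto_natCast_div_add_atTop x)
  have hpartial := hsum.tendsto_sum_nat
  simp only [hstep, Finset.sum_range_sub] at hpartial
  have hu₀ : u 0 = 0 := by simp [u]
  rw [hu₀] at hpartial
  exact sub_eq_zero.1 (tendsto_nhds_unique hpartial (by simpa using hu))

theorem mul_beta_eq_mul_beta_add_one {x : ℝ} (hx : x ≠ 0) (s : ℝ) :
    x * beta x s = (x + s) * beta (x + 1) s := by
  rcases eq_or_ne (x + s) 0 with hxs | hxs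
  · simp [beta, hxs]
  · rw [beta, beta, add_right_comm, Real.Gamma_add_one hx, Real.Gamma_add_one hxs]
    field

theorem hasSum_beta {s x : ℝ} (hs : 0 < s) (hx : ∀ n : ℕ, x ≠ -n) :
    HasSum (fun n : ℕ ↦ multichoose (1 - s) n / (x + n)) (beta x s) := by
  suffices h : ∀ (N : ℕ) (x : ℝ), 0 < x + N → (∀ n : ℕ, x ≠ -n) →
      ∑' n : ℕ, multichoose (1 - s) n / (x + n) = beta x s by
    obtain ⟨N, hN⟩ := exists_nat_gt (-x)
    rw [← h N x (by linarith) hx]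
    exact (summable_multichoose_one_sub_div_add hs x).hasSum
  intro N
  induction N with
  | zero => exact fun x hx₀ _ ↦ (hasSum_beta_of_pos hs (by simpa using hx₀)).tsum_eq
  | succ N ih =>
    intro x hxN hx
    have hx₀ : x ≠ 0 := by simpa using hx 0
    have hx₁ (n : ℕ) : x + 1 ≠ -n := fun h ↦ hx (n + 1) (by push_cast; linarith)
    refine mul_left_cancel₀ hx₀ ?_
    rw [mul_tsum_multichoose_one_sub_div_add hs hx, mul_beta_eq_mul_beta_add_one hx₀,
      ih (x + 1) (by push_cast at hxN; linarith) hx₁]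

theorem norm_div_pow_succ_mul_pow_le {𝕜 : Type*} [NormedField 𝕜] {a p x : 𝕜} {r : ℝ} (hr : 0 < r)
    (hp : r ≤ ‖p‖) (n : ℕ) :
    ‖a / p ^ (n + 1) * (-x) ^ n‖ ≤ ‖a / p‖ * (‖x‖ / r) ^ n := by
  calc ‖a / p ^ (n + 1) * (-x) ^ n‖ = ‖a / p‖ * (‖x‖ / ‖p‖) ^ n := by
        simp only [norm_mul, norm_div, norm_pow, norm_neg, pow_succ']
        ring
    _ ≤ ‖a / p‖ * (‖x‖ / r) ^ n := by gcongr

theorem hasSum_geometric_div_add {𝕜 : Type*} [NormedField 𝕜] (a : 𝕜) {p x : 𝕜} (hx : ‖x‖ < ‖p‖) :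
    HasSum (fun n : ℕ ↦ a / p ^ (n + 1) * (-x) ^ n) (a / (x + p)) := by
  have hp : p ≠ 0 := norm_pos_iff.1 ((norm_nonneg x).trans_lt hx)
  have hxp : x + p ≠ 0 := fun h ↦ hx.ne (by rw [eq_neg_of_add_eq_zero_left h, norm_neg])
  have hratio : ‖-x / p‖ < 1 := by rwa [norm_div, norm_neg, div_lt_one (norm_pos_iff.2 hp)]
  have hsum := (hasSum_geometric_of_norm_lt_one hratio).mul_left (a / p)
  have hvalue : a / p * (1 - -x / p)⁻¹ = a / (x + p) := by
    rw [show 1 - -x / p = (x + p) / p by field, inv_div]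
    field
  rw [hvalue] at hsum
  refine hsum.congr_fun fun n ↦ ?_
  rw [div_pow, div_mul_div_comm, ← pow_succ', div_mul_eq_mul_div]

section PartialFractions

variable {ι 𝕜 : Type*} [NormedField 𝕜] [CompleteSpace 𝕜] {a p : ι → 𝕜} {r : ℝ}

theorem summable_div_pow_succ_mul_pow (hr : 0 < r) (hp : ∀ i, r ≤ ‖p i‖)
    (ha : Summable fun i ↦ ‖a i / p i‖) {x : 𝕜} (hx : ‖x‖ < r) :
    Summable fun q : ι × ℕ ↦ a q.1 / p q.1 ^ (q.2 + 1) * (-x) ^ q.2 := by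
  have hgeometric : Summable fun n : ℕ ↦ (‖x‖ / r) ^ n :=
    summable_geometric_of_lt_one (by positivity) ((div_lt_one hr).2 hx)
  exact .of_norm_bounded
    (ha.mul_of_nonneg hgeometric (fun _ ↦ norm_nonneg _) fun _ ↦ by dsimp; positivity)
    fun q ↦ norm_div_pow_succ_mul_pow_le hr (hp q.1) q.2

theorem summable_div_pow_succ (hr : 0 < r) (hp : ∀ i, r ≤ ‖p i‖)
    (ha : Summable fun i ↦ ‖a i / p i‖) (n : ℕ) : Summable fun i ↦ a i / p i ^ (n + 1) := by
  refine .of_norm_bounded (ha.mul_right ((r ^ n)⁻¹)) fun i ↦ ?_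
  rw [pow_succ', ← div_div, norm_div, norm_pow, div_eq_mul_inv ‖a i / p i‖]
  gcongr
  exact hp i

theorem hasSum_tsum_div_add (hr : 0 < r) (hp : ∀ i, r ≤ ‖p i‖)
    (ha : Summable fun i ↦ ‖a i / p i‖) {x : 𝕜} (hx : ‖x‖ < r) :
    HasSum (fun n : ℕ ↦ x ^ n * ((-1) ^ n * ∑' i, a i / p i ^ (n + 1)))
      (∑' i, a i / (x + p i)) := by
  have hsummable := summable_div_pow_succ_mul_pow hr hp ha hx
  have hrow (i : ι) := hasSum_geometric_div_add (a i) (hx.trans_le (hp i))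
  have hcolumn (n : ℕ) : HasSum (fun i ↦ a i / p i ^ (n + 1) * (-x) ^ n)
      (x ^ n * ((-1) ^ n * ∑' i, a i / p i ^ (n + 1))) := by
    rw [← mul_assoc, mul_comm (x ^ n), ← neg_pow, mul_comm ((-x) ^ n)]
    exact (summable_div_pow_succ hr hp ha n).hasSum.mul_right ((-x) ^ n)
  rw [(hsummable.hasSum.prod_fiberwise hrow).tsum_eq]
  exact ((Equiv.prodComm ℕ ι).hasSum_iff.2 hsummable.hasSum).prod_fiberwise hcolumn

end PartialFractions

theorem hasFPowerSeriesAt_tsum_div_add {ι 𝕜 : Type*} [NontriviallyNormedField 𝕜] [CompleteSpace 𝕜]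
    {a p : ι → 𝕜} {r : ℝ} (hr : 0 < r) (hp : ∀ i, r ≤ ‖p i‖)
    (ha : Summable fun i ↦ ‖a i / p i‖) :
    HasFPowerSeriesAt (fun x ↦ ∑' i, a i / (x + p i))
      (.ofScalars 𝕜 fun n ↦ (-1) ^ n * ∑' i, a i / p i ^ (n + 1)) 0 := by
  rw [hasFPowerSeriesAt_iff]
  filter_upwards [Metric.ball_mem_nhds 0 hr] with x hx
  simpa only [FormalMultilinearSeries.coeff_ofScalars, smul_eq_mul, zero_add] using
    hasSum_tsum_div_add hr hp ha (mem_ball_zero_iff.1 hx)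

theorem iteratedDeriv_eq_of_hasFPowerSeriesAt_ofScalars {𝕜 : Type*} [NontriviallyNormedField 𝕜]
    [CompleteSpace 𝕜] [CharZero 𝕜] {g : 𝕜 → 𝕜} {c : ℕ → 𝕜} {x : 𝕜}
    (hg : HasFPowerSeriesAt g (.ofScalars 𝕜 c) x) (n : ℕ) :
    iteratedDeriv n g x = n.factorial * c n := by
  have hseries := hg.eq_formalMultilinearSeries hg.analyticAt.hasFPowerSeriesAt
  have hcoeff := congrFun (FormalMultilinearSeries.ofScalars_series_injective 𝕜 𝕜 hseries) n
  rw [hcoeff]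
  field [n.factorial_ne_zero]

/-- The regular part of `x ↦ B(x, s)` at its simple pole `0`, where it is given its limiting value
`-γ - Γ'(s) / Γ(s)`. -/
noncomputable def betaRegularPart (s : ℝ) : ℝ → ℝ :=
  Function.update (fun x ↦ beta x s - 1 / x) 0
    (-Real.eulerMascheroniConstant - logDeriv Real.Gamma s)

theorem one_le_norm_natCast_add_one (j : ℕ) : 1 ≤ ‖(j : ℝ) + 1‖ := by
  rw [Real.norm_of_nonneg (by positivity)]
  linarith [j.cast_nonneg (α := ℝ)]

theorem summable_norm_multichoose_succ_div {s : ℝ} (hs : 0 < s) :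
    Summable fun j : ℕ ↦ ‖multichoose (1 - s) (j + 1) / ((j : ℝ) + 1)‖ := by
  simpa using ((summable_nat_add_iff 1).2 (summable_multichoose_one_sub_div_add hs 0)).norm

theorem hasFPowerSeriesAt_tsum_multichoose {s : ℝ} (hs : 0 < s) :
    HasFPowerSeriesAt (fun x : ℝ ↦ ∑' j : ℕ, multichoose (1 - s) (j + 1) / (x + (j + 1)))
      (.ofScalars ℝ fun n ↦ (-1) ^ n *
        ∑' j : ℕ, multichoose (1 - s) (j + 1) / ((j : ℝ) + 1) ^ (n + 1)) 0 :=
  hasFPowerSeriesAt_tsum_div_add one_pos one_le_norm_natCast_add_one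
    (summable_norm_multichoose_succ_div hs)

theorem beta_eq_one_div_add_tsum {s x : ℝ} (hs : 0 < s) (hx : -1 < x) (hx₀ : x ≠ 0) :
    beta x s = 1 / x + ∑' j : ℕ, multichoose (1 - s) (j + 1) / (x + (j + 1)) := by
  have hpole (n : ℕ) : x ≠ -n := by
    rcases n with _ | n
    · simpa using hx₀
    · push_cast
      linarith [n.cast_nonneg (α := ℝ)]
  have hsum := hasSum_beta hs hpole
  rw [← hsum.tsum_eq, hsum.summable.tsum_eq_zero_add]
  simp

theorem hasDerivAt_Gamma_mul_div_Gamma_zero {s : ℝ} (hs : 0 < s) :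
    HasDerivAt (fun x ↦ Real.Gamma (x + 1) * Real.Gamma s / Real.Gamma (x + s))
      (-Real.eulerMascheroniConstant - logDeriv Real.Gamma s) 0 := by
  have hΓs : Real.Gamma s ≠ 0 := (Real.Gamma_pos_of_pos hs).ne'
  have hΓ : DifferentiableAt ℝ Real.Gamma s :=
    Real.differentiableAt_Gamma fun m ↦ ((neg_nonpos.2 m.cast_nonneg).trans_lt hs).ne'
  have hnum : HasDerivAt (fun x : ℝ ↦ Real.Gamma (x + 1)) (-Real.eulerMascheroniConstant) 0 :=
    HasDerivAt.comp_add_const 0 1 (by simpa using Real.hasDerivAt_Gamma_one)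
  have hden : HasDerivAt (fun x : ℝ ↦ Real.Gamma (x + s)) (deriv Real.Gamma s) 0 :=
    HasDerivAt.comp_add_const 0 s (by simpa using hΓ.hasDerivAt)
  convert! (hnum.mul_const (Real.Gamma s)).div hden (by simpa using hΓs) using 1
  rw [zero_add, zero_add, Real.Gamma_one, logDeriv_apply]
  field

theorem tsum_multichoose_succ_div {s : ℝ} (hs : 0 < s) :
    ∑' j : ℕ, multichoose (1 - s) (j + 1) / ((j : ℝ) + 1) =
      -Real.eulerMascheroniConstant - logDeriv Real.Gamma s := by
  let R (x : ℝ) : ℝ := ∑' j : ℕ, multichoose (1 - s) (j + 1) / (x + (j + 1))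
  have hR : DifferentiableAt ℝ R 0 := (hasFPowerSeriesAt_tsum_multichoose hs).differentiableAt
  have hderiv : HasDerivAt (fun x ↦ 1 + x * R x) (R 0) 0 := by
    simpa using! ((hasDerivAt_id (0 : ℝ)).mul hR.hasDerivAt).const_add 1
  have heq : (fun x ↦ Real.Gamma (x + 1) * Real.Gamma s / Real.Gamma (x + s)) =ᶠ[𝓝 0]
      fun x ↦ 1 + x * R x := by
    filter_upwards [lt_mem_nhds neg_one_lt_zero] with x hx
    rcases eq_or_ne x 0 with rfl | hx₀
    · simp [(Real.Gamma_pos_of_pos hs).ne']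
    · have hbeta := beta_eq_one_div_add_tsum hs hx hx₀
      rw [beta] at hbeta
      rw [Real.Gamma_add_one hx₀, mul_assoc, mul_div_assoc, hbeta, mul_add,
        mul_one_div_cancel hx₀]
  simpa [R] using (hderiv.congr_of_eventuallyEq heq).unique
    (hasDerivAt_Gamma_mul_div_Gamma_zero hs)

theorem betaRegularPart_eq_tsum {s x : ℝ} (hs : 0 < s) (hx : -1 < x) :
    betaRegularPart s x = ∑' j : ℕ, multichoose (1 - s) (j + 1) / (x + (j + 1)) := by
  rcases eq_or_ne x 0 with rfl | hx₀
  · rw [betaRegularPart, Function.update_self, ← tsum_multichoose_succ_div hs]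
    simp only [zero_add]
  · rw [betaRegularPart, Function.update_of_ne hx₀, beta_eq_one_div_add_tsum hs hx hx₀,
      add_sub_cancel_left]

theorem laurent_coeff_beta_series_general {s : ℝ} (hs : 0 < s) (n : ℕ) :
    Summable (fun j : ℕ ↦ multichoose (1 - s) (j + 1) / ((j : ℝ) + 1) ^ (n + 1)) ∧
      1 / (n.factorial : ℝ) * iteratedDeriv n (betaRegularPart s) 0 =
        (-1) ^ n * ∑' j : ℕ, multichoose (1 - s) (j + 1) / ((j : ℝ) + 1) ^ (n + 1) := by
  have heq : betaRegularPart s =ᶠ[𝓝 0]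
      fun x ↦ ∑' j : ℕ, multichoose (1 - s) (j + 1) / (x + (j + 1)) := by
    filter_upwards [lt_mem_nhds neg_one_lt_zero] with x hx using betaRegularPart_eq_tsum hs hx
  have hseries := (hasFPowerSeriesAt_tsum_multichoose hs).congr heq.symm
  refine ⟨summable_div_pow_succ one_pos one_le_norm_natCast_add_one
    (summable_norm_multichoose_succ_div hs) n, ?_⟩
  rw [iteratedDeriv_eq_of_hasFPowerSeriesAt_ofScalars hseries]
  field [n.factorial_ne_zero]

theorem logDeriv_Gamma_one_half :
    logDeriv Real.Gamma (1 / 2) = -(Real.eulerMascheroniConstant + 2 * Real.log 2) := by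
  have hpi : √Real.pi ≠ 0 := by positivity
  rw [logDeriv_apply, Real.hasDerivAt_Gamma_one_half.deriv, Real.Gamma_one_half_eq]
  field

theorem f_eq_betaRegularPart_one_half : f = betaRegularPart (1 / 2) := by
  ext x
  simp only [f, betaRegularPart, Function.update_apply, logDeriv_Gamma_one_half]
  congr 1
  ring

theorem laurent_coeff_beta_series (n : ℕ) :
    Summable (fun j : ℕ =>
      ((2 * (j + 1) - 1).choose (j + 1) : ℝ) / (2 ^ (2 * (j + 1) - 1) * (j + 1) ^ (n + 1))) ∧
    b n = (-1) ^ n * ∑' j : ℕ,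
      ((2 * (j + 1) - 1).choose (j + 1) : ℝ) / (2 ^ (2 * (j + 1) - 1) * (j + 1) ^ (n + 1)) := by
  have hhalf : (1 : ℝ) - 1 / 2 = 1 / 2 := by norm_num
  simpa only [b, f_eq_betaRegularPart_one_half, ← div_div, choose_div_two_pow_eq_multichoose_half,
    hhalf] using laurent_coeff_beta_series_general one_half_pos n
end

section
/- The first Laurent coefficient of B(z,1/2) at z = 0 satisfies b_1 = f′(0) = 2·(log 2)² − π²/6. -/
/-!
Put `L z = log Γ(1 + z)`. Legendre's duplication formula reads
`z B(z, 1/2) = exp (2 L(z) - L(2z) + 2 z log 2)` near `0`. The unknown `L'(0)` cancels in the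
exponent, and `L''(0) = π² / 6` comes from comparing second derivatives in Euler's reflection
formula `exp (-(L(z) + L(-z))) = sinc (π z)`. Finally `f` is the difference quotient at `0` of the
analytic function `z B(z, 1/2)`, so dividing by `z` shifts the Taylor coefficients by one.
-/

open Filter Topology Real

section Calculus

variable {𝕜 : Type*} [NontriviallyNormedField 𝕜]

theorem iteratedDeriv_dslope_self [CompleteSpace 𝕜] [CharZero 𝕜] {g : 𝕜 → 𝕜} {a : 𝕜}
    (hg : AnalyticAt 𝕜 g a) (n : ℕ) :
    iteratedDeriv n (dslope g a) a = iteratedDeriv (n + 1) g a / (n + 1) := by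
  have hslope := hg.hasFPowerSeriesAt.has_fpower_series_dslope_fslope
  have hcoeff := congrArg (FormalMultilinearSeries.coeff · n)
    (hslope.analyticAt.hasFPowerSeriesAt.eq_formalMultilinearSeries hslope)
  simp only [FormalMultilinearSeries.coeff_fslope, FormalMultilinearSeries.coeff_ofScalars,
    Nat.factorial_succ, Nat.cast_mul, Nat.cast_add, Nat.cast_one] at hcoeff
  have hfac : (n.factorial : 𝕜) ≠ 0 := Nat.cast_ne_zero.mpr n.factorial_ne_zero
  have hsucc : (n + 1 : 𝕜) ≠ 0 := Nat.cast_add_one_ne_zero n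
  field_simp at hcoeff ⊢
  exact hcoeff

theorem iteratedDeriv_comp_mul_left {F : Type*} [NormedAddCommGroup F] [NormedSpace 𝕜 F]
    (c : 𝕜) (g : 𝕜 → F) (n : ℕ) (x : 𝕜) :
    iteratedDeriv n (fun z => g (c * z)) x = c ^ n • iteratedDeriv n g (c * x) := by
  induction n generalizing x with
  | zero => simp
  | succ n ih =>
    rw [iteratedDeriv_succ, funext ih, deriv_fun_const_smul_field,
      deriv_comp_mul_left c (iteratedDeriv n g), smul_smul, ← pow_succ, iteratedDeriv_succ]

theorem iteratedDeriv_two_exp {g : ℝ → ℝ} {a : ℝ} (hg : ContDiffAt ℝ 2 g a) :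
    iteratedDeriv 2 (fun z => exp (g z)) a
      = exp (g a) * (deriv g a ^ 2 + iteratedDeriv 2 g a) := by
  have hdiff : ∀ᶠ z in 𝓝 a, DifferentiableAt ℝ g z :=
    (hg.eventually (by simp)).mono fun z hz => hz.differentiableAt two_ne_zero
  have hderiv : deriv (fun z => exp (g z)) =ᶠ[𝓝 a] fun z => exp (g z) * deriv g z :=
    hdiff.mono fun z hz => deriv_exp hz
  have hderiv' : DifferentiableAt ℝ (deriv g) a :=
    ((hg.fderiv_right (m := 1) le_rfl).differentiableAt one_ne_zero).clm_apply
      (differentiableAt_const 1)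
  rw [iteratedDeriv_succ', iteratedDeriv_one, hderiv.deriv_eq,
    deriv_fun_mul hdiff.self_of_nhds.exp hderiv', deriv_exp hdiff.self_of_nhds,
    iteratedDeriv_succ', iteratedDeriv_one]
  ring

theorem iteratedDeriv_two_sinc_zero : iteratedDeriv 2 sinc 0 = -1 / 3 := by
  rw [sinc_eq_dslope, iteratedDeriv_dslope_self analyticAt_sin]
  norm_num [iteratedDeriv_succ, iteratedDeriv_one]

end Calculus

section Gamma

theorem analyticAt_Gamma {x : ℝ} (hx : ∀ m : ℕ, x ≠ -m) : AnalyticAt ℝ Gamma x := by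
  have hGamma : Complex.Gamma x ≠ 0 := Complex.Gamma_ne_zero fun m => mod_cast hx m
  have hinv := (Complex.differentiable_one_div_Gamma.analyticAt x).inv (inv_ne_zero hGamma)
  simp only [Pi.inv_def, inv_inv] at hinv
  exact hinv.re_ofReal

theorem Gamma_add_one_mul_Gamma_one_sub (z : ℝ) :
    Gamma (z + 1) * Gamma (1 - z) = (sinc (π * z))⁻¹ := by
  rcases eq_or_ne z 0 with rfl | hz
  · simp
  · rw [Gamma_add_one hz, mul_assoc, Gamma_mul_Gamma_one_sub,
      sinc_of_ne_zero (mul_ne_zero pi_ne_zero hz)]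
    field_simp

/-- The logarithm of `Γ(1 + z)`, the source of the second-order term of `B(z, 1/2)`. It is only
meant for `z > -1`: elsewhere `Real.log` may see a zero or negative value of `Γ`. -/
noncomputable def logGammaAddOne (z : ℝ) : ℝ := log (Gamma (z + 1))

theorem logGammaAddOne_zero : logGammaAddOne 0 = 0 := by simp [logGammaAddOne]

theorem exp_logGammaAddOne {z : ℝ} (hz : -1 < z) : exp (logGammaAddOne z) = Gamma (z + 1) :=
  exp_log (Gamma_pos_of_pos (by linarith))

theorem analyticAt_logGammaAddOne {z : ℝ} (hz : -1 < z) : AnalyticAt ℝ logGammaAddOne z := by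
  have hpos : 0 < z + 1 := by linarith
  have hGamma : AnalyticAt ℝ Gamma (z + 1) :=
    analyticAt_Gamma fun m => (lt_of_le_of_lt (neg_nonpos.mpr m.cast_nonneg) hpos).ne'
  exact (hGamma.fun_comp_of_eq (f := (· + 1)) (by fun_prop) rfl).log (Gamma_pos_of_pos hpos)

theorem analyticAt_logGammaAddOne_const_mul_zero (c : ℝ) :
    AnalyticAt ℝ (fun z => logGammaAddOne (c * z)) 0 :=
  (analyticAt_logGammaAddOne (by norm_num)).fun_comp_of_eq (by fun_prop) (mul_zero c)

theorem exp_neg_logGammaAddOne_add_neg {z : ℝ} (hz : |z| < 1) :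
    exp (-(logGammaAddOne z + logGammaAddOne (-z))) = sinc (π * z) := by
  obtain ⟨hneg, hpos⟩ := abs_lt.mp hz
  rw [exp_neg, exp_add, exp_logGammaAddOne hneg, exp_logGammaAddOne (neg_lt_neg hpos),
    neg_add_eq_sub, Gamma_add_one_mul_Gamma_one_sub, inv_inv]

theorem iteratedDeriv_two_logGammaAddOne_zero : iteratedDeriv 2 logGammaAddOne 0 = π ^ 2 / 6 := by
  let g (z : ℝ) : ℝ := -(logGammaAddOne z + logGammaAddOne (-z))
  have hL : AnalyticAt ℝ logGammaAddOne 0 := analyticAt_logGammaAddOne (by norm_num)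
  have hLneg : AnalyticAt ℝ (fun z => logGammaAddOne (-z)) 0 := by
    simpa only [neg_one_mul] using analyticAt_logGammaAddOne_const_mul_zero (-1)
  have hg : AnalyticAt ℝ g 0 := (hL.add hLneg).neg
  have hiter (n : ℕ) :
      iteratedDeriv n g 0 = -((1 + (-1) ^ n) * iteratedDeriv n logGammaAddOne 0) := by
    rw [iteratedDeriv_fun_neg, iteratedDeriv_fun_add hL.contDiffAt hLneg.contDiffAt,
      iteratedDeriv_comp_neg, neg_zero, smul_eq_mul, one_add_mul]
  have hreflect : (fun z => exp (g z)) =ᶠ[𝓝 0] fun z => sinc (π * z) := by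
    filter_upwards [Metric.ball_mem_nhds (0 : ℝ) one_pos] with z hz
    exact exp_neg_logGammaAddOne_add_neg (by simpa using hz)
  have hg_zero : g 0 = 0 := by simp [g, logGammaAddOne_zero]
  have hsecond := hreflect.iteratedDeriv_eq 2
  rw [iteratedDeriv_two_exp hg.contDiffAt, ← iteratedDeriv_one, hiter, hiter,
    iteratedDeriv_comp_mul_left, mul_zero, iteratedDeriv_two_sinc_zero, hg_zero, exp_zero,
    smul_eq_mul] at hsecond
  linarith

end Gamma

section Beta

/-- The function `z * B(z, 1/2)`, written as `Γ(z + 1) Γ(1/2) / Γ(z + 1/2)` so that it is also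
correct at the removable singularity `z = 0`. -/
noncomputable def mulBetaHalf (z : ℝ) : ℝ := Gamma (z + 1) * Gamma (1 / 2) / Gamma (z + 1 / 2)

/-- The logarithm of `z * B(z, 1/2)` near `0`, expressed through `log Γ(1 + z)` by Legendre's
duplication formula. -/
noncomputable def logMulBetaHalf (z : ℝ) : ℝ :=
  2 * logGammaAddOne z - logGammaAddOne (2 * z) + z * (2 * log 2)

theorem logMulBetaHalf_zero : logMulBetaHalf 0 = 0 := by
  simp [logMulBetaHalf, logGammaAddOne_zero]

theorem mulBetaHalf_of_ne_zero {z : ℝ} (hz : z ≠ 0) : mulBetaHalf z = z * betaHalf z := by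
  rw [mulBetaHalf, betaHalf, Gamma_add_one hz]
  ring

theorem mulBetaHalf_zero : mulBetaHalf 0 = 1 := by
  have hGamma : Gamma (1 / 2) ≠ 0 := (Gamma_pos_of_pos one_half_pos).ne'
  rw [mulBetaHalf, zero_add, zero_add, Gamma_one, one_mul, div_self hGamma]

theorem mulBetaHalf_eq_exp {z : ℝ} (hz : -(1 / 2) < z) :
    mulBetaHalf z = exp (logMulBetaHalf z) := by
  have hhalf : Gamma (z + 1 / 2) ≠ 0 := (Gamma_pos_of_pos (by linarith)).ne'
  have hdouble : Gamma (2 * z + 1) ≠ 0 := (Gamma_pos_of_pos (by linarith)).ne'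
  have hpow : (2 : ℝ) ^ (-(2 * z)) * exp (z * (2 * log 2)) = 1 := by
    rw [rpow_def_of_pos two_pos, ← exp_add, exp_eq_one_iff]
    ring
  have hlegendre :
      Gamma (z + 1 / 2) * Gamma (z + 1) = Gamma (2 * z + 1) * 2 ^ (-(2 * z)) * √π := by
    convert Gamma_mul_Gamma_add_half (z + 1 / 2) using 3 <;> ring_nf
  rw [mulBetaHalf, logMulBetaHalf, Gamma_one_half_eq, exp_add, exp_sub, two_mul (logGammaAddOne z),
    exp_add, exp_logGammaAddOne (by linarith), exp_logGammaAddOne (by linarith),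
    div_mul_eq_mul_div, div_eq_div_iff hhalf hdouble]
  linear_combination (-(Gamma (z + 1) * exp (z * (2 * log 2)))) * hlegendre
    - Gamma (z + 1) * Gamma (2 * z + 1) * √π * hpow

theorem mulBetaHalf_eventuallyEq_exp : mulBetaHalf =ᶠ[𝓝 0] fun z => exp (logMulBetaHalf z) := by
  filter_upwards [lt_mem_nhds (show (-(1 / 2) : ℝ) < 0 by norm_num)] with z hz
  exact mulBetaHalf_eq_exp hz

theorem analyticAt_logMulBetaHalf_zero : AnalyticAt ℝ logMulBetaHalf 0 := by
  have hL : AnalyticAt ℝ logGammaAddOne 0 := analyticAt_logGammaAddOne (by norm_num)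
  have hLtwo := analyticAt_logGammaAddOne_const_mul_zero 2
  unfold logMulBetaHalf
  fun_prop

theorem analyticAt_mulBetaHalf_zero : AnalyticAt ℝ mulBetaHalf 0 :=
  analyticAt_logMulBetaHalf_zero.rexp'.congr mulBetaHalf_eventuallyEq_exp.symm

theorem iteratedDeriv_logMulBetaHalf_zero (n : ℕ) :
    iteratedDeriv n logMulBetaHalf 0
      = (2 - 2 ^ n) * iteratedDeriv n logGammaAddOne 0 + if n = 1 then 2 * log 2 else 0 := by
  have hL : ContDiffAt ℝ n logGammaAddOne 0 :=
    (analyticAt_logGammaAddOne (by norm_num)).contDiffAt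
  have hLtwo : ContDiffAt ℝ n (fun z => logGammaAddOne (2 * z)) 0 :=
    (analyticAt_logGammaAddOne_const_mul_zero 2).contDiffAt
  unfold logMulBetaHalf
  rw [iteratedDeriv_fun_add ((contDiffAt_const.mul hL).sub hLtwo) (by fun_prop),
    iteratedDeriv_fun_sub (contDiffAt_const.mul hL) hLtwo, iteratedDeriv_const_mul_field,
    iteratedDeriv_comp_mul_left, mul_zero, smul_eq_mul, iteratedDeriv_mul_const_field,
    iteratedDeriv_fun_id_zero, ite_mul, one_mul, zero_mul, sub_mul]

theorem deriv_logMulBetaHalf_zero : deriv logMulBetaHalf 0 = 2 * log 2 := by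
  rw [← iteratedDeriv_one, iteratedDeriv_logMulBetaHalf_zero]
  simp

theorem deriv_mulBetaHalf_zero : deriv mulBetaHalf 0 = 2 * log 2 := by
  rw [mulBetaHalf_eventuallyEq_exp.deriv_eq,
    deriv_exp analyticAt_logMulBetaHalf_zero.differentiableAt, logMulBetaHalf_zero, exp_zero,
    one_mul, deriv_logMulBetaHalf_zero]

theorem iteratedDeriv_two_mulBetaHalf_zero :
    iteratedDeriv 2 mulBetaHalf 0 = 4 * log 2 ^ 2 - π ^ 2 / 3 := by
  rw [mulBetaHalf_eventuallyEq_exp.iteratedDeriv_eq,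
    iteratedDeriv_two_exp analyticAt_logMulBetaHalf_zero.contDiffAt, logMulBetaHalf_zero,
    deriv_logMulBetaHalf_zero, iteratedDeriv_logMulBetaHalf_zero,
    iteratedDeriv_two_logGammaAddOne_zero, exp_zero, if_neg (by norm_num)]
  ring

theorem f_eq_dslope_mulBetaHalf : f = dslope mulBetaHalf 0 := by
  ext z
  rcases eq_or_ne z 0 with rfl | hz
  · rw [dslope_same, deriv_mulBetaHalf_zero, f, if_pos rfl]
  · rw [dslope_of_ne _ hz, slope_def_field, mulBetaHalf_of_ne_zero hz, mulBetaHalf_zero, f,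
      if_neg hz]
    field_simp
    ring

theorem b_eq_iteratedDeriv_mulBetaHalf (n : ℕ) :
    b n = iteratedDeriv (n + 1) mulBetaHalf 0 / (n + 1).factorial := by
  rw [b, f_eq_dslope_mulBetaHalf, iteratedDeriv_dslope_self analyticAt_mulBetaHalf_zero,
    Nat.factorial_succ, Nat.cast_mul, Nat.cast_succ]
  field_simp

end Beta

theorem laurent_coeff_beta_one :
    b 1 = deriv f 0 ∧ b 1 = 2 * Real.log 2 ^ 2 - Real.pi ^ 2 / 6 := by
  constructor
  · simp [b]
  · rw [b_eq_iteratedDeriv_mulBetaHalf, iteratedDeriv_two_mulBetaHalf_zero, Nat.factorial_two]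
    ring
end
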